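/- There is a constant C > 0 such that for every probability space (X, ℬ, μ) with a measurable, measure-preserving transformation T : X → X, every measurable set A ∈ ℬ, and every 0 < λ < 1, one has μ{x ∈ X : sup_{N ≥ 2} 𝒜_N(𝟙_A)(x) > λ} ≤ C λ⁻¹ log²(e/λ) μ(A). -/

import Mathlib

open MeasureTheory Filter
open scoped BigOperators

universe u

/-- The set of primes `p ≤ N`. -/
def primesUpTo (N : ℕ) : Finset ℕ := (Finset.range (N + 1)).filter Nat.Prime

/-- The ergodic average `𝒜_N f(x) = (1/π(N)) Σ_{p ∈ ℙ_N} f(T^p x)`. -/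
noncomputable def ergAvg {X : Type u} (T : X → X) (f : X → ℝ) (N : ℕ) (x : X) : ℝ :=
  ((primesUpTo N).card : ℝ)⁻¹ * ∑ p ∈ primesUpTo N, f (T^[p] x)

/-!
Split the primes into dyadic blocks `(2 ^ (j - 1), 2 ^ j]`. The indicator of a block is majorised
by a product of two sieve weights: an upper bound sieve by the primes up to `2 ^ a`, and Selberg's
sieve by the primes between `2 ^ a` and `2 ^ (j / 16)`. Selberg's weight minus its mean is a
combination of Ramanujan sums with coefficients of size `2 ^ (-a)`, so that, by the large sieve
inequality for the isometry `f ↦ f ∘ T`, this part of the weight contributes an average of `L²`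
norm `O(2 ^ (-a)) ‖f‖₂`, while `‖f‖₂ ^ 2 ≤ ‖f‖₁` for `0 ≤ f ≤ 1`.

Let the threshold be `λ = 2 ^ (-v)`. For `j ≲ v ^ 2` the block is compared with all integers, at
the cost of a factor `j`: the maximal ergodic theorem at height `λ / v ^ 2` gives the bound
`λ⁻¹ v ^ 2 ‖f‖₁`. The same exceptional set controls the exact sieve by the primes up to
`2 ^ (8 v)`, whose weight is `O(v ^ 2)`. For `v ^ 2 ≲ j ≤ 2 ^ (4 v + 8)` one takes `a = 8 v`,
replaces the exact sieve by Brun's to keep the frequencies low, and sums the `L²` bounds over `j`.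
For larger `j` the level `a ≈ log₂ j` makes the `L²` bounds summable and lets the period of the
exact sieve fit into the block; the change from one level to the next is periodic, so that a single
application of the maximal ergodic theorem treats all scales at once.
-/

open scoped ENNReal

namespace PrimeErgodic

section MaximalErgodic

variable {X : Type*} {T : X → X}

/-- The maximal function `max_{n ≤ N} (∑_{m < n} g (T^m x) - n t)` of the maximal ergodic theorem,
computed backwards; truncated subtraction accounts for the empty sum `n = 0`. -/
noncomputable def maxExcess (T : X → X) (g : X → ℝ≥0∞) (t : ℝ≥0∞) : ℕ → X → ℝ≥0∞
  | 0, _ => 0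
  | N + 1, x => g x + maxExcess T g t N (T x) - t

lemma maxExcess_mono (g : X → ℝ≥0∞) (t : ℝ≥0∞) : Monotone (maxExcess T g t) := by
  refine monotone_nat_of_le_succ fun N => ?_
  induction N with
  | zero => exact fun x => zero_le
  | succ N ih => exact fun x => tsub_le_tsub_right (add_le_add_right (ih (T x)) _) _

lemma sum_iterate_le_add_maxExcess (g : X → ℝ≥0∞) (t : ℝ≥0∞) (n : ℕ) (x : X) :
    ∑ m ∈ Finset.range n, g (T^[m] x) ≤ n * t + maxExcess T g t n x := by
  induction n generalizing x with
  | zero => simp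
  | succ n ih =>
    calc ∑ m ∈ Finset.range (n + 1), g (T^[m] x)
        = g x + ∑ m ∈ Finset.range n, g (T^[m] (T x)) := by
          rw [Finset.sum_range_succ', add_comm]; rfl
      _ ≤ g x + (n * t + maxExcess T g t n (T x)) := by gcongr; exact ih (T x)
      _ = n * t + (g x + maxExcess T g t n (T x)) := by ring
      _ ≤ n * t + (maxExcess T g t (n + 1) x + t) := by exact add_le_add_right le_tsub_add _
      _ = (n + 1 : ℕ) * t + maxExcess T g t (n + 1) x := by push_cast; ring

lemma maxExcess_succ_add_indicator_le (g : X → ℝ≥0∞) (t : ℝ≥0∞) (N : ℕ) (x : X) :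
    maxExcess T g t (N + 1) x + {x | maxExcess T g t (N + 1) x ≠ 0}.indicator (fun _ => t) x ≤
      g x + maxExcess T g t N (T x) := by
  by_cases h : maxExcess T g t (N + 1) x = 0
  · simp [h]
  · have hlt : t < g x + maxExcess T g t N (T x) := by
      rw [← tsub_pos_iff_lt]; exact pos_iff_ne_zero.2 h
    simp only [Set.indicator_of_mem (show x ∈ {x | maxExcess T g t (N + 1) x ≠ 0} from h)]
    exact (tsub_add_cancel_of_le hlt.le).le

/-- The set where some ergodic average of `f` over an initial segment of times exceeds `t`. -/
def maximalSet (T : X → X) (f : X → ℝ) (t : ℝ) : Set X :=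
  {x | ∃ n : ℕ, t * n < ∑ m ∈ Finset.range n, f (T^[m] x)}

lemma sum_iterate_le_of_notMem_maximalSet {f : X → ℝ} {t : ℝ} {x : X}
    (hx : x ∉ maximalSet T f t) (n : ℕ) : ∑ m ∈ Finset.range n, f (T^[m] x) ≤ t * n :=
  not_lt.1 fun h => hx ⟨n, h⟩

variable [MeasurableSpace X] {μ : Measure X} {g : X → ℝ≥0∞}

lemma measurable_maxExcess (hT : Measurable T) (hg : Measurable g) (t : ℝ≥0∞) (N : ℕ) :
    Measurable (maxExcess T g t N) := by
  induction N with
  | zero => exact measurable_const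
  | succ N ih => exact (hg.add (ih.comp hT)).sub_const t

lemma lintegral_maxExcess_ne_top (hT : MeasurePreserving T μ μ) (hg : Measurable g)
    (hfin : ∫⁻ x, g x ∂μ ≠ ∞) (t : ℝ≥0∞) (N : ℕ) : ∫⁻ x, maxExcess T g t N x ∂μ ≠ ∞ := by
  induction N with
  | zero => simp [maxExcess]
  | succ N ih =>
    refine ne_top_of_le_ne_top ?_ (lintegral_mono fun x => tsub_le_self)
    rw [lintegral_add_left hg, hT.lintegral_comp (measurable_maxExcess hT.measurable hg t N)]
    exact ENNReal.add_ne_top.2 ⟨hfin, ih⟩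

lemma mul_measure_maxExcess_ne_zero_le (hT : MeasurePreserving T μ μ) (hg : Measurable g)
    (t : ℝ≥0∞) (N : ℕ) : t * μ {x | maxExcess T g t N x ≠ 0} ≤ ∫⁻ x, g x ∂μ := by
  by_cases hfin : ∫⁻ x, g x ∂μ = ∞
  · exact hfin ▸ le_top
  have hmeas := measurable_maxExcess hT.measurable hg t
  rcases N with _ | N
  · simp [maxExcess]
  refine (ENNReal.add_le_add_iff_left
    (lintegral_maxExcess_ne_top hT hg hfin t (N + 1))).1 ?_
  have hset : MeasurableSet {x | maxExcess T g t (N + 1) x ≠ 0} :=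
    (hmeas (N + 1) (measurableSet_singleton 0)).compl
  calc ∫⁻ x, maxExcess T g t (N + 1) x ∂μ + t * μ {x | maxExcess T g t (N + 1) x ≠ 0}
      = ∫⁻ x, maxExcess T g t (N + 1) x +
          {x | maxExcess T g t (N + 1) x ≠ 0}.indicator (fun _ => t) x ∂μ := by
        rw [lintegral_add_left (hmeas (N + 1)), lintegral_indicator_const hset]
    _ ≤ ∫⁻ x, g x + maxExcess T g t N (T x) ∂μ :=
        lintegral_mono (maxExcess_succ_add_indicator_le g t N)
    _ = ∫⁻ x, g x ∂μ + ∫⁻ x, maxExcess T g t N x ∂μ := by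
        rw [lintegral_add_left hg, hT.lintegral_comp (hmeas N)]
    _ ≤ ∫⁻ x, maxExcess T g t (N + 1) x ∂μ + ∫⁻ x, g x ∂μ := by
        rw [add_comm]
        gcongr
        exact maxExcess_mono g t N.le_succ _

lemma mul_measure_maximalSet_le (hT : MeasurePreserving T μ μ) {f : X → ℝ} (hf : Measurable f)
    (hf0 : ∀ x, 0 ≤ f x) {t : ℝ} (ht : 0 ≤ t) :
    ENNReal.ofReal t * μ (maximalSet T f t) ≤ ∫⁻ x, ENNReal.ofReal (f x) ∂μ := by
  set g : X → ℝ≥0∞ := fun x => ENNReal.ofReal (f x)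
  have hsub : maximalSet T f t ⊆ ⋃ N, {x | maxExcess T g (ENNReal.ofReal t) N x ≠ 0} := by
    rintro x ⟨n, hn⟩
    refine Set.mem_iUnion.2 ⟨n, fun h0 => hn.not_ge ?_⟩
    have hsum := sum_iterate_le_add_maxExcess (T := T) g (ENNReal.ofReal t) n x
    rw [h0, add_zero, ← ENNReal.ofReal_sum_of_nonneg fun m _ => hf0 _, ← ENNReal.ofReal_natCast,
      ← ENNReal.ofReal_mul n.cast_nonneg, mul_comm] at hsum
    exact (ENNReal.ofReal_le_ofReal_iff (by positivity)).1 hsum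
  have hmono : Monotone fun N => {x | maxExcess T g (ENNReal.ofReal t) N x ≠ 0} :=
    fun M N h x hx => ((pos_iff_ne_zero.2 hx).trans_le (maxExcess_mono g _ h x)).ne'
  refine (mul_le_mul_right (measure_mono hsub) _).trans ?_
  rw [hmono.measure_iUnion, ENNReal.mul_iSup]
  exact iSup_le fun N => mul_measure_maxExcess_ne_zero_le hT hf.ennreal_ofReal _ N

theorem measure_maximalSet_le (hT : MeasurePreserving T μ μ) {f : X → ℝ} (hf : Measurable f)
    (hf0 : ∀ x, 0 ≤ f x) {t : ℝ} (ht : 0 < t) :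
    μ (maximalSet T f t) ≤ ENNReal.ofReal t⁻¹ * ∫⁻ x, ENNReal.ofReal (f x) ∂μ := by
  rw [ENNReal.ofReal_inv_of_pos ht, mul_comm, ← div_eq_mul_inv]
  rw [ENNReal.le_div_iff_mul_le (Or.inl (by simpa using ht)) (Or.inl ENNReal.ofReal_ne_top),
    mul_comm]
  exact mul_measure_maximalSet_le hT hf hf0 ht.le

end MaximalErgodic

section LargeSieve

lemma norm_geom_sum_le_of_pow_eq_one {z : ℂ} (hz : z ≠ 1) {Q : ℕ} (hQ : 0 < Q) (h : z ^ Q = 1)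
    (L : ℕ) : ‖∑ t ∈ Finset.range L, z ^ t‖ ≤ Q := by
  have hperiod : ∑ t ∈ Finset.range L, z ^ t = ∑ t ∈ Finset.range (L % Q), z ^ t := by
    rw [geom_sum_eq hz, geom_sum_eq hz]
    conv_lhs => rw [← Nat.div_add_mod L Q, pow_add, pow_mul, h, one_pow, one_mul]
  rw [hperiod]
  refine (norm_sum_le _ _).trans ?_
  simp only [norm_pow, Complex.norm_eq_one_of_pow_eq_one h hQ.ne', one_pow, Finset.sum_const,
    Finset.card_range, nsmul_eq_mul, mul_one]
  exact_mod_cast (Nat.mod_lt L hQ).le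

variable {E : Type*} [NormedAddCommGroup E] [InnerProductSpace ℂ E]

/-- Schur's test for a Hermitian form. -/
lemma sum_norm_mul_mul_le {ι : Type*} (s : Finset ι) (D : ι → ι → ℂ) (v : ι → ℝ) {B : ℝ}
    (hsymm : ∀ i j, ‖D i j‖ = ‖D j i‖) (hD : ∀ i ∈ s, ∑ j ∈ s, ‖D i j‖ ≤ B) :
    ∑ i ∈ s, ∑ j ∈ s, ‖D i j‖ * (v i * v j) ≤ B * ∑ i ∈ s, v i ^ 2 := by
  have hrow : ∑ i ∈ s, ∑ j ∈ s, ‖D i j‖ * v i ^ 2 ≤ B * ∑ i ∈ s, v i ^ 2 := by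
    simp only [← Finset.sum_mul, Finset.mul_sum]
    exact Finset.sum_le_sum fun i hi => mul_le_mul_of_nonneg_right (hD i hi) (sq_nonneg _)
  have hcol : ∑ i ∈ s, ∑ j ∈ s, ‖D i j‖ * v j ^ 2 = ∑ i ∈ s, ∑ j ∈ s, ‖D i j‖ * v i ^ 2 := by
    rw [Finset.sum_comm]
    simp only [hsymm]
  have hamgm : ∑ i ∈ s, ∑ j ∈ s, ‖D i j‖ * (v i * v j) ≤
      (∑ i ∈ s, ∑ j ∈ s, ‖D i j‖ * v i ^ 2 + ∑ i ∈ s, ∑ j ∈ s, ‖D i j‖ * v j ^ 2) / 2 := by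
    simp only [← Finset.sum_add_distrib, Finset.sum_div]
    refine Finset.sum_le_sum fun i _ => Finset.sum_le_sum fun j _ => ?_
    nlinarith [norm_nonneg (D i j), mul_nonneg (norm_nonneg (D i j)) (sq_nonneg (v i - v j))]
  linarith

lemma norm_sum_mul_inner_le {ι : Type*} (s : Finset ι) (D : ι → ι → ℂ) (v : ι → E) :
    ‖∑ i ∈ s, ∑ j ∈ s, D i j * inner ℂ (v i) (v j)‖ ≤
      ∑ i ∈ s, ∑ j ∈ s, ‖D i j‖ * (‖v i‖ * ‖v j‖) := by
  refine (norm_sum_le _ _).trans (Finset.sum_le_sum fun i _ => ?_)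
  refine (norm_sum_le _ _).trans (Finset.sum_le_sum fun j _ => ?_)
  rw [norm_mul]
  gcongr
  exact norm_inner_le_norm _ _

lemma norm_sum_inner_le {κ : Type*} (τ : Finset κ) (a u : κ → E) :
    ‖∑ t ∈ τ, inner ℂ (a t) (u t)‖ ≤ √(∑ t ∈ τ, ‖a t‖ ^ 2) * √(∑ t ∈ τ, ‖u t‖ ^ 2) :=
  ((norm_sum_le _ _).trans (Finset.sum_le_sum fun _ _ => norm_inner_le_norm _ _)).trans
    (Real.sum_mul_le_sqrt_mul_sqrt τ _ _)

lemma ofReal_sum_norm_sq {κ : Type*} (τ : Finset κ) (u : κ → E) :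
    ((∑ t ∈ τ, ‖u t‖ ^ 2 : ℝ) : ℂ) = ∑ t ∈ τ, inner ℂ (u t) (u t) := by
  simp only [inner_self_eq_norm_sq_to_K, Complex.ofReal_sum, Complex.ofReal_pow]
  rfl

lemma sum_norm_sq_sum_star_smul_le {ι κ : Type*} (s : Finset ι) (τ : Finset κ) (c : ι → κ → ℂ)
    {B : ℝ} (hB : ∀ i ∈ s, ∑ j ∈ s, ‖∑ t ∈ τ, c i t * star (c j t)‖ ≤ B) (v : ι → E) :
    ∑ t ∈ τ, ‖∑ i ∈ s, star (c i t) • v i‖ ^ 2 ≤ B * ∑ i ∈ s, ‖v i‖ ^ 2 := by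
  set u : κ → E := fun t => ∑ i ∈ s, star (c i t) • v i with hu
  set D : ι → ι → ℂ := fun i j => ∑ t ∈ τ, c i t * star (c j t) with hD
  have hexpand : ((∑ t ∈ τ, ‖u t‖ ^ 2 : ℝ) : ℂ) =
      ∑ i ∈ s, ∑ j ∈ s, D i j * inner ℂ (v i) (v j) := by
    simp only [ofReal_sum_norm_sq, hu, hD, sum_inner, inner_sum, inner_smul_left,
      inner_smul_right, Finset.sum_mul, Finset.mul_sum, starRingEnd_apply, star_star]
    rw [Finset.sum_comm]
    conv_rhs => rw [Finset.sum_comm]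
    refine Finset.sum_congr rfl fun j _ => ?_
    rw [Finset.sum_comm]
    exact Finset.sum_congr rfl fun i _ => Finset.sum_congr rfl fun t _ => by ring
  have hsymm : ∀ i j, ‖D i j‖ = ‖D j i‖ := fun i j => by
    rw [← norm_star (D j i)]
    simp only [hD, star_sum, star_mul, star_star]
  calc ∑ t ∈ τ, ‖u t‖ ^ 2 = ‖((∑ t ∈ τ, ‖u t‖ ^ 2 : ℝ) : ℂ)‖ :=
        (Complex.norm_of_nonneg (by positivity)).symm
    _ ≤ ∑ i ∈ s, ∑ j ∈ s, ‖D i j‖ * (‖v i‖ * ‖v j‖) := hexpand ▸ norm_sum_mul_inner_le s D v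
    _ ≤ B * ∑ i ∈ s, ‖v i‖ ^ 2 := sum_norm_mul_mul_le s D _ hsymm hB

/-- Duality principle: almost orthogonality of the rows of a matrix bounds its operator norm. -/
theorem sum_norm_sq_sum_smul_le {ι κ : Type*} (s : Finset ι) (τ : Finset κ) (c : ι → κ → ℂ)
    {B : ℝ} (hB0 : 0 ≤ B) (hB : ∀ i ∈ s, ∑ j ∈ s, ‖∑ t ∈ τ, c i t * star (c j t)‖ ≤ B)
    (a : κ → E) : ∑ i ∈ s, ‖∑ t ∈ τ, c i t • a t‖ ^ 2 ≤ B * ∑ t ∈ τ, ‖a t‖ ^ 2 := by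
  set v : ι → E := fun i => ∑ t ∈ τ, c i t • a t with hv
  set u : κ → E := fun t => ∑ i ∈ s, star (c i t) • v i with hu
  set A := ∑ t ∈ τ, ‖a t‖ ^ 2
  set S := ∑ i ∈ s, ‖v i‖ ^ 2 with hS
  have hu_le : ∑ t ∈ τ, ‖u t‖ ^ 2 ≤ B * S := sum_norm_sq_sum_star_smul_le s τ c hB v
  have hself : S ≤ √A * √(∑ t ∈ τ, ‖u t‖ ^ 2) := by
    have hexpand : (S : ℂ) = ∑ t ∈ τ, inner ℂ (a t) (u t) := by
      simp only [hS, ofReal_sum_norm_sq, hu, inner_sum, inner_smul_right]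
      rw [Finset.sum_comm]
      refine Finset.sum_congr rfl fun i _ => ?_
      conv_lhs => rw [hv, sum_inner]
      simp only [inner_smul_left, starRingEnd_apply]
      rfl
    rw [← Complex.norm_of_nonneg (by positivity : 0 ≤ S), hexpand]
    exact norm_sum_inner_le τ a u
  have hsq : S * S ≤ S * (B * A) := by
    calc S * S ≤ (√A * √(∑ t ∈ τ, ‖u t‖ ^ 2)) * (√A * √(∑ t ∈ τ, ‖u t‖ ^ 2)) := by gcongr
      _ = A * ∑ t ∈ τ, ‖u t‖ ^ 2 := by
          rw [mul_mul_mul_comm, Real.mul_self_sqrt (by positivity),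
            Real.mul_self_sqrt (by positivity)]
      _ ≤ A * (B * S) := by gcongr
      _ = S * (B * A) := by ring
  rcases (show 0 ≤ S by positivity).eq_or_lt with h0 | hpos
  · exact h0 ▸ by positivity
  · exact le_of_mul_le_mul_left hsq hpos

/-- The complex numbers `e(b / q)` attached to the Farey fractions with denominator `q ≤ Y`. -/
noncomputable def fareyRoots (Y : ℕ) : Finset ℂ :=
  (Finset.Icc 1 Y).biUnion fun q => Polynomial.nthRootsFinset q (1 : ℂ)

lemma mem_fareyRoots {Y : ℕ} {w : ℂ} :
    w ∈ fareyRoots Y ↔ ∃ q, 0 < q ∧ q ≤ Y ∧ w ^ q = 1 := by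
  simp only [fareyRoots, Finset.mem_biUnion, Finset.mem_Icc, Nat.one_le_iff_ne_zero,
    ← Nat.pos_iff_ne_zero, and_assoc]
  refine exists_congr fun q => and_congr_right fun hq => and_congr_right fun _ => ?_
  exact Polynomial.mem_nthRootsFinset hq 1

lemma norm_eq_one_of_mem_fareyRoots {Y : ℕ} {w : ℂ} (hw : w ∈ fareyRoots Y) : ‖w‖ = 1 := by
  obtain ⟨q, hq, -, h⟩ := mem_fareyRoots.1 hw
  exact Complex.norm_eq_one_of_pow_eq_one h hq.ne'

lemma card_fareyRoots_le (Y : ℕ) : (fareyRoots Y).card ≤ Y ^ 2 := by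
  calc (fareyRoots Y).card ≤ ∑ q ∈ Finset.Icc 1 Y, (Polynomial.nthRootsFinset q (1 : ℂ)).card :=
        Finset.card_biUnion_le
    _ ≤ ∑ _q ∈ Finset.Icc 1 Y, Y := by
        refine Finset.sum_le_sum fun q hq => le_trans ?_ (Finset.mem_Icc.1 hq).2
        exact (Multiset.toFinset_card_le _).trans (Polynomial.card_nthRoots q 1)
    _ = Y ^ 2 := by simp [sq]

lemma norm_sum_pow_mul_star_pow_le {Y : ℕ} {w z : ℂ} (hw : w ∈ fareyRoots Y)
    (hz : z ∈ fareyRoots Y) (hne : w ≠ z) (L : ℕ) :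
    ‖∑ t ∈ Finset.range L, w ^ t * star (z ^ t)‖ ≤ (Y : ℝ) ^ 2 := by
  obtain ⟨q, hq, hqY, hwq⟩ := mem_fareyRoots.1 hw
  obtain ⟨r, hr, hrY, hzr⟩ := mem_fareyRoots.1 hz
  have hstar : z * star z = 1 := by
    rw [Complex.star_def, Complex.mul_conj', norm_eq_one_of_mem_fareyRoots hz]; simp
  have hratio : w * star z ≠ 1 := fun h => hne <| by
    rw [← mul_one w, ← hstar, mul_left_comm, h, mul_one]
  have hpow : (w * star z) ^ (q * r) = 1 := by
    rw [mul_pow, pow_mul, hwq, one_pow, one_mul, mul_comm q r, pow_mul, ← star_pow, hzr, star_one,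
      one_pow]
  simp only [star_pow, ← mul_pow]
  refine (norm_geom_sum_le_of_pow_eq_one hratio (Nat.mul_pos hq hr) hpow L).trans ?_
  rw [sq]
  exact_mod_cast Nat.mul_le_mul hqY hrY

/-- The large sieve inequality. The quotient of two distinct `w ∈ fareyRoots Y` has order at most
`Y ^ 2`, which makes the sequences `w ^ t` almost orthogonal over `L ≥ Y ^ 4` times. -/
theorem sum_fareyRoots_norm_sq_le {Y L : ℕ} (hYL : Y ^ 4 ≤ L) (a : ℕ → E) :
    ∑ w ∈ fareyRoots Y, ‖∑ t ∈ Finset.range L, w ^ t • a t‖ ^ 2 ≤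
      2 * L * ∑ t ∈ Finset.range L, ‖a t‖ ^ 2 := by
  classical
  refine sum_norm_sq_sum_smul_le _ _ (fun w t => w ^ t) (by positivity) (fun w hw => ?_) a
  have hdiag : ‖∑ t ∈ Finset.range L, w ^ t * star (w ^ t)‖ ≤ L := by
    refine (norm_sum_le _ _).trans (le_of_eq ?_)
    simp [norm_eq_one_of_mem_fareyRoots hw]
  have hoff : ∑ z ∈ (fareyRoots Y).erase w, ‖∑ t ∈ Finset.range L, w ^ t * star (z ^ t)‖ ≤ L := by
    calc ∑ z ∈ (fareyRoots Y).erase w, ‖∑ t ∈ Finset.range L, w ^ t * star (z ^ t)‖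
        ≤ ∑ _z ∈ (fareyRoots Y).erase w, (Y : ℝ) ^ 2 := Finset.sum_le_sum fun z hz =>
          norm_sum_pow_mul_star_pow_le hw (Finset.mem_of_mem_erase hz)
            (Finset.ne_of_mem_erase hz).symm L
      _ ≤ ((Y ^ 2 : ℕ) : ℝ) * (Y : ℝ) ^ 2 := by
          rw [Finset.sum_const, nsmul_eq_mul]
          gcongr
          exact Finset.card_erase_le.trans (card_fareyRoots_le Y)
      _ = ((Y ^ 4 : ℕ) : ℝ) := by push_cast; ring
      _ ≤ L := by exact_mod_cast hYL
  rw [← Finset.add_sum_erase _ _ hw]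
  linarith

end LargeSieve

section FejerAverages

variable {E : Type*} [NormedAddCommGroup E] [InnerProductSpace ℂ E]

lemma inner_pow_apply_pow_apply (U : E →ₗᵢ[ℂ] E) (g F : E) {s n : ℕ} (h : s ≤ n) :
    inner ℂ ((U ^ s) g) ((U ^ n) F) = inner ℂ g ((U ^ (n - s)) F) := by
  conv_lhs => rw [← Nat.add_sub_cancel' h, pow_add]
  exact (U ^ s).inner_map_map _ _

lemma sum_sum_pow_mul_inner_pow_apply (U : E →ₗᵢ[ℂ] E) {w : ℂ} (hw : ‖w‖ = 1) (L : ℕ) (g F : E) :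
    ∑ s ∈ Finset.range L, ∑ t ∈ Finset.range L,
        w ^ (t + L - s) * inner ℂ g ((U ^ (t + L - s)) F) =
      w ^ L * inner ℂ (∑ s ∈ Finset.range L, w ^ s • (U ^ s) g)
        (∑ t ∈ Finset.range L, w ^ t • (U ^ (t + L)) F) := by
  rw [sum_inner]
  simp only [inner_sum, inner_smul_left, inner_smul_right, Finset.mul_sum]
  refine Finset.sum_congr rfl fun s hs => Finset.sum_congr rfl fun t _ => ?_
  have hsn : s ≤ t + L := (Finset.mem_range.1 hs).le.trans (Nat.le_add_left L t)
  have hunit : (starRingEnd ℂ) (w ^ s) * w ^ s = 1 := by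
    rw [Complex.conj_mul', norm_pow, hw]
    simp
  have hpow : w ^ (t + L - s) = (starRingEnd ℂ) (w ^ s) * (w ^ t * w ^ L) := by
    rw [← pow_add, ← Nat.add_sub_cancel' hsn, pow_add, Nat.add_sub_cancel' hsn, ← mul_assoc, hunit,
      one_mul]
  rw [inner_pow_apply_pow_apply U g F hsn, hpow]
  ring

lemma inner_sum_sum_smul_pow_apply (U : E →ₗᵢ[ℂ] E) {Y : ℕ} {κ : ℂ → ℂ} {k : ℕ → ℂ}
    (hk : ∀ n, k n = ∑ w ∈ fareyRoots Y, κ w * w ^ n) (L : ℕ) (g F : E) :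
    inner ℂ g (∑ s ∈ Finset.range L, ∑ t ∈ Finset.range L,
        k (t + L - s) • (U ^ (t + L - s)) F) =
      ∑ w ∈ fareyRoots Y, κ w * (w ^ L * inner ℂ (∑ s ∈ Finset.range L, w ^ s • (U ^ s) g)
        (∑ t ∈ Finset.range L, w ^ t • (U ^ (t + L)) F)) := by
  have hfactor : ∀ w ∈ fareyRoots Y, κ w * (w ^ L *
        inner ℂ (∑ s ∈ Finset.range L, w ^ s • (U ^ s) g)
          (∑ t ∈ Finset.range L, w ^ t • (U ^ (t + L)) F)) =
      ∑ s ∈ Finset.range L, ∑ t ∈ Finset.range L,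
        κ w * (w ^ (t + L - s) * inner ℂ g ((U ^ (t + L - s)) F)) := fun w hw => by
    rw [← sum_sum_pow_mul_inner_pow_apply U (norm_eq_one_of_mem_fareyRoots hw)]
    simp only [Finset.mul_sum]
  rw [Finset.sum_congr rfl hfactor]
  simp only [inner_sum, inner_smul_right, hk, Finset.sum_mul, mul_assoc]
  conv_rhs => rw [Finset.sum_comm]
  exact Finset.sum_congr rfl fun s _ => Finset.sum_comm

/-- A frequency of the kernel at a Farey fraction factors through two exponential sums, to which
the large sieve applies. -/
theorem norm_sum_sum_smul_pow_apply_le (U : E →ₗᵢ[ℂ] E) {Y L : ℕ} (hYL : Y ^ 4 ≤ L)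
    {κ : ℂ → ℂ} {K : ℝ} (hK : 0 ≤ K) (hκ : ∀ w, ‖κ w‖ ≤ K) {k : ℕ → ℂ}
    (hk : ∀ n, k n = ∑ w ∈ fareyRoots Y, κ w * w ^ n) (F : E) :
    ‖∑ s ∈ Finset.range L, ∑ t ∈ Finset.range L, k (t + L - s) • (U ^ (t + L - s)) F‖ ≤
      2 * K * (L : ℝ) ^ 2 * ‖F‖ := by
  set g := ∑ s ∈ Finset.range L, ∑ t ∈ Finset.range L, k (t + L - s) • (U ^ (t + L - s)) F with hg
  set A : ℂ → E := fun w => ∑ s ∈ Finset.range L, w ^ s • (U ^ s) g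
  set B : ℂ → E := fun w => ∑ t ∈ Finset.range L, w ^ t • (U ^ (t + L)) F
  have hA : √(∑ w ∈ fareyRoots Y, ‖A w‖ ^ 2) ≤ √(2 * L * (L * ‖g‖ ^ 2)) := by
    refine Real.sqrt_le_sqrt ((sum_fareyRoots_norm_sq_le hYL _).trans (le_of_eq ?_))
    simp
  have hB : √(∑ w ∈ fareyRoots Y, ‖B w‖ ^ 2) ≤ √(2 * L * (L * ‖F‖ ^ 2)) := by
    refine Real.sqrt_le_sqrt ((sum_fareyRoots_norm_sq_le hYL _).trans (le_of_eq ?_))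
    simp
  have hinner : inner ℂ g g = ∑ w ∈ fareyRoots Y, κ w * (w ^ L * inner ℂ (A w) (B w)) := by
    conv_lhs => enter [3]; rw [hg]
    exact inner_sum_sum_smul_pow_apply U hk L g F
  have hsq : ‖g‖ * ‖g‖ ≤ ‖g‖ * (2 * K * (L : ℝ) ^ 2 * ‖F‖) := by
    calc ‖g‖ * ‖g‖ = ‖inner ℂ g g‖ := by
          rw [inner_self_eq_norm_sq_to_K, norm_pow, sq]
          simp
      _ ≤ ∑ w ∈ fareyRoots Y, K * (‖A w‖ * ‖B w‖) := by
          rw [hinner]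
          refine (norm_sum_le _ _).trans (Finset.sum_le_sum fun w hw => ?_)
          rw [norm_mul, norm_mul, norm_pow, norm_eq_one_of_mem_fareyRoots hw, one_pow, one_mul]
          exact mul_le_mul (hκ w) (norm_inner_le_norm _ _) (norm_nonneg _) hK
      _ ≤ K * (√(2 * L * (L * ‖g‖ ^ 2)) * √(2 * L * (L * ‖F‖ ^ 2))) := by
          rw [← Finset.mul_sum]
          gcongr
          exact (Real.sum_mul_le_sqrt_mul_sqrt _ _ _).trans (by gcongr)
      _ = ‖g‖ * (2 * K * (L : ℝ) ^ 2 * ‖F‖) := by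
          rw [← Real.sqrt_mul (by positivity), show 2 * (L : ℝ) * (L * ‖g‖ ^ 2) *
            (2 * L * (L * ‖F‖ ^ 2)) = (2 * (L : ℝ) ^ 2 * ‖g‖ * ‖F‖) ^ 2 by ring,
            Real.sqrt_sq (by positivity)]
          ring
  rcases (norm_nonneg g).eq_or_lt with h0 | hpos
  · exact h0 ▸ by positivity
  · exact le_of_mul_le_mul_left hsq hpos

/-- The Fejér average `L⁻² Σ_{|m| < L} (L - |m|) k(L + m) f(T^{L+m} x)` with weight `k`, written as
a double sum over `L + m = t + L - s`. -/
noncomputable def fejerAvg {X : Type*} (T : X → X) (k : ℕ → ℝ) (L : ℕ) (f : X → ℝ) (x : X) : ℝ :=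
  ((L : ℝ) ^ 2)⁻¹ * ∑ s ∈ Finset.range L, ∑ t ∈ Finset.range L,
    k (t + L - s) * f (T^[t + L - s] x)

variable {X : Type*} [MeasurableSpace X] {μ : Measure X} {T : X → X}

lemma measurable_fejerAvg (hT : Measurable T) (k : ℕ → ℝ) (L : ℕ) {f : X → ℝ}
    (hf : Measurable f) : Measurable (fejerAvg T k L f) :=
  (Finset.measurable_fun_sum _ fun _ _ => Finset.measurable_fun_sum _ fun _ _ =>
    (hf.comp (hT.iterate _)).const_mul _).const_mul _

lemma coeFn_pow_compMeasurePreserving_toLp {F : Type*} [NormedAddCommGroup F] [NormedSpace ℂ F]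
    (hT : MeasurePreserving T μ μ) {f : X → F} (hf : MemLp f 2 μ) (n : ℕ) :
    ⇑((Lp.compMeasurePreservingₗᵢ ℂ T hT ^ n) (hf.toLp f)) =ᵐ[μ] fun x => f (T^[n] x) := by
  have htoLp : (Lp.compMeasurePreservingₗᵢ ℂ T hT ^ n) (hf.toLp f) =
      (hf.comp_measurePreserving (hT.iterate n)).toLp _ := by
    rw [← Lp.toLp_compMeasurePreserving hf (hT.iterate n), ← Lp.compMeasurePreserving_iterate hT,
      LinearIsometry.coe_pow]
    rfl
  rw [htoLp]
  exact MemLp.coeFn_toLp _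

lemma coeFn_lp_fejerAvg (hT : MeasurePreserving T μ μ) (k : ℕ → ℝ) (L : ℕ) {f : X → ℝ}
    (hf : MemLp f 2 μ) :
    ⇑(((L : ℝ) ^ 2)⁻¹ • ∑ s ∈ Finset.range L, ∑ t ∈ Finset.range L, (k (t + L - s) : ℂ) •
      (Lp.compMeasurePreservingₗᵢ ℂ T hT ^ (t + L - s)) (hf.ofReal (K := ℂ).toLp _)) =ᵐ[μ]
      fun x => (fejerAvg T k L f x : ℂ) := by
  set G : ℕ → Lp ℂ 2 μ := fun n => (k n : ℂ) •
    (Lp.compMeasurePreservingₗᵢ ℂ T hT ^ n) (hf.ofReal (K := ℂ).toLp _)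
  have hG : ∀ n, ⇑(G n) =ᵐ[μ] fun x => (k n * f (T^[n] x) : ℂ) := fun n => by
    filter_upwards [Lp.coeFn_smul (k n : ℂ)
        ((Lp.compMeasurePreservingₗᵢ ℂ T hT ^ n) (hf.ofReal (K := ℂ).toLp _)),
      coeFn_pow_compMeasurePreserving_toLp (F := ℂ) hT hf.ofReal n] with x hsmul hpow
    rw [hsmul, Pi.smul_apply, hpow, smul_eq_mul]
    rfl
  change ⇑(((L : ℝ) ^ 2)⁻¹ • ∑ s ∈ Finset.range L, ∑ t ∈ Finset.range L, G (t + L - s)) =ᵐ[μ] _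
  filter_upwards [Lp.coeFn_smul ((L : ℝ) ^ 2)⁻¹
      (∑ s ∈ Finset.range L, ∑ t ∈ Finset.range L, G (t + L - s)),
    Lp.coeFn_fun_finsetSum (Finset.range L) fun s => ∑ t ∈ Finset.range L, G (t + L - s),
    ae_all_iff.2 fun s => Lp.coeFn_fun_finsetSum (Finset.range L) fun t => G (t + L - s),
    ae_all_iff.2 hG] with x hsmul hs ht hx
  rw [hsmul, Pi.smul_apply, hs]
  simp only [ht, hx, fejerAvg, Complex.real_smul]
  push_cast
  rfl

theorem eLpNorm_fejerAvg_le (hT : MeasurePreserving T μ μ) {Y L : ℕ} (hYL : Y ^ 4 ≤ L)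
    {κ : ℂ → ℂ} {K : ℝ} (hK : 0 ≤ K) (hκ : ∀ w, ‖κ w‖ ≤ K) {k : ℕ → ℝ}
    (hk : ∀ n, (k n : ℂ) = ∑ w ∈ fareyRoots Y, κ w * w ^ n) {f : X → ℝ} (hf : MemLp f 2 μ) :
    eLpNorm (fejerAvg T k L f) 2 μ ≤ ENNReal.ofReal (2 * K) * eLpNorm f 2 μ := by
  rcases L.eq_zero_or_pos with rfl | hL
  · rw [show fejerAvg T k 0 f = 0 from funext fun x => by simp [fejerAvg], eLpNorm_zero]
    exact zero_le
  set F : Lp ℂ 2 μ := hf.ofReal.toLp _ with hF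
  calc eLpNorm (fejerAvg T k L f) 2 μ
      = eLpNorm (fun x => (fejerAvg T k L f x : ℂ)) 2 μ :=
        eLpNorm_congr_norm_ae (.of_forall fun x => by simp)
    _ = ‖((L : ℝ) ^ 2)⁻¹ • ∑ s ∈ Finset.range L, ∑ t ∈ Finset.range L, (k (t + L - s) : ℂ) •
          (Lp.compMeasurePreservingₗᵢ ℂ T hT ^ (t + L - s)) F‖ₑ := by
        rw [Lp.enorm_def, eLpNorm_congr_ae (coeFn_lp_fejerAvg hT k L hf)]
    _ ≤ ENNReal.ofReal (2 * K * ‖F‖) := by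
        rw [← ofReal_norm, norm_smul, Real.norm_of_nonneg (by positivity)]
        refine ENNReal.ofReal_le_ofReal ((inv_mul_le_iff₀ (by positivity)).2 ?_)
        exact (norm_sum_sum_smul_pow_apply_le _ hYL hK hκ hk F).trans (le_of_eq (by ring))
    _ = ENNReal.ofReal (2 * K) * eLpNorm f 2 μ := by
        rw [ENNReal.ofReal_mul (by positivity), ofReal_norm, Lp.enorm_def, hF,
          eLpNorm_congr_ae (MemLp.coeFn_toLp _)]
        exact congrArg _ (eLpNorm_congr_norm_ae (.of_forall fun x => by simp))

end FejerAverages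

section RamanujanSums

lemma sum_range_pow_pow_of_isPrimitiveRoot {ζ : ℂ} {q : ℕ} (hζ : IsPrimitiveRoot ζ q) (n : ℕ) :
    ∑ i ∈ Finset.range q, (ζ ^ n) ^ i = if q ∣ n then (q : ℂ) else 0 := by
  split_ifs with h
  · simp [(hζ.pow_eq_one_iff_dvd n).2 h]
  · have hne : ζ ^ n ≠ 1 := fun h' => h ((hζ.pow_eq_one_iff_dvd n).1 h')
    rw [geom_sum_eq hne, ← pow_mul, mul_comm, pow_mul, hζ.pow_eq_one, one_pow, sub_self, zero_div]

lemma nthRootsFinset_one_eq_image_pow {ζ : ℂ} {q : ℕ} (hq : 0 < q) (hζ : IsPrimitiveRoot ζ q) :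
    Polynomial.nthRootsFinset q (1 : ℂ) = (Finset.range q).image (ζ ^ ·) := by
  have : NeZero q := ⟨hq.ne'⟩
  ext w
  simp only [Polynomial.mem_nthRootsFinset hq, Finset.mem_image, Finset.mem_range]
  refine ⟨hζ.eq_pow_of_pow_eq_one, ?_⟩
  rintro ⟨i, -, rfl⟩
  rw [pow_right_comm, hζ.pow_eq_one, one_pow]

lemma sum_nthRootsFinset_pow {q : ℕ} (hq : 0 < q) (n : ℕ) :
    ∑ w ∈ Polynomial.nthRootsFinset q (1 : ℂ), w ^ n = if q ∣ n then (q : ℂ) else 0 := by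
  have hζ := Complex.isPrimitiveRoot_exp q hq.ne'
  rw [nthRootsFinset_one_eq_image_pow hq hζ, Finset.sum_image fun i hi j hj h =>
    hζ.pow_inj (Finset.mem_range.1 hi) (Finset.mem_range.1 hj) h,
    ← sum_range_pow_pow_of_isPrimitiveRoot hζ]
  exact Finset.sum_congr rfl fun i _ => pow_right_comm _ _ _

/-- The Ramanujan sum `c_p(n)` for a prime `p`. -/
noncomputable def ramanujanFactor (p n : ℕ) : ℝ := if p ∣ n then (p : ℝ) - 1 else -1

lemma sum_primitiveRoots_pow_of_prime {p : ℕ} (hp : p.Prime) (n : ℕ) :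
    ∑ w ∈ primitiveRoots p ℂ, w ^ n = (ramanujanFactor p n : ℂ) := by
  have hdisj : Disjoint (primitiveRoots p ℂ) {1} := Finset.disjoint_singleton_right.2 fun h =>
    (isPrimitiveRoot_of_mem_primitiveRoots h).ne_one hp.one_lt rfl
  have hsplit := sum_nthRootsFinset_pow hp.pos n
  rw [_root_.nthRootsFinset_eq_of_prime hp, Finset.sum_union hdisj, Finset.sum_singleton,
    one_pow] at hsplit
  rw [eq_sub_of_add_eq hsplit, ramanujanFactor]
  split_ifs <;> simp

lemma isPrimitiveRoot_mul_of_coprime {m n : ℕ} (hmn : m.Coprime n) {a b : ℂ}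
    (ha : IsPrimitiveRoot a m) (hb : IsPrimitiveRoot b n) : IsPrimitiveRoot (a * b) (m * n) := by
  rw [IsPrimitiveRoot.iff_orderOf, (Commute.all a b).orderOf_mul_eq_mul_orderOf_of_coprime,
    ← ha.eq_orderOf, ← hb.eq_orderOf]
  rwa [← ha.eq_orderOf, ← hb.eq_orderOf]

lemma injOn_mul_primitiveRoots {m n : ℕ} (hm : 0 < m) (hn : 0 < n) (hmn : m.Coprime n) :
    Set.InjOn (fun z : ℂ × ℂ => z.1 * z.2)
      (primitiveRoots m ℂ ×ˢ primitiveRoots n ℂ : Finset (ℂ × ℂ)) := by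
  rintro ⟨a, b⟩ hab ⟨c, d⟩ hcd h
  simp only [Finset.coe_product, Set.mem_prod, SetLike.mem_coe, mem_primitiveRoots hm,
    mem_primitiveRoots hn] at hab hcd h
  have hc : c ≠ 0 := hcd.1.ne_zero hm.ne'
  have hpow_n : (a / c) ^ n = 1 := by
    have := congrArg (· ^ n) h
    simp only [mul_pow, hab.2.pow_eq_one, hcd.2.pow_eq_one, mul_one] at this
    rw [div_pow, this, div_self (pow_ne_zero _ hc)]
  have hpow_m : (a / c) ^ m = 1 := by
    rw [div_pow, hab.1.pow_eq_one, hcd.1.pow_eq_one, div_one]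
  have hac : a = c := by
    have hgcd := pow_gcd_eq_one.2 ⟨hpow_m, hpow_n⟩
    rwa [hmn, pow_one, div_eq_one_iff_eq hc] at hgcd
  subst hac
  rw [mul_left_cancel₀ hc h]

lemma sum_primitiveRoots_mul_pow {m n : ℕ} (hm : 0 < m) (hn : 0 < n) (hmn : m.Coprime n) (k : ℕ) :
    ∑ w ∈ primitiveRoots (m * n) ℂ, w ^ k =
      (∑ w ∈ primitiveRoots m ℂ, w ^ k) * ∑ w ∈ primitiveRoots n ℂ, w ^ k := by
  have hinj := injOn_mul_primitiveRoots hm hn hmn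
  have himage : (primitiveRoots m ℂ ×ˢ primitiveRoots n ℂ).image (fun z => z.1 * z.2) =
      primitiveRoots (m * n) ℂ := by
    refine Finset.eq_of_subset_of_card_le (fun w hw => ?_) ?_
    · obtain ⟨⟨a, b⟩, hab, rfl⟩ := Finset.mem_image.1 hw
      rw [Finset.mem_product, mem_primitiveRoots hm, mem_primitiveRoots hn] at hab
      exact (mem_primitiveRoots (Nat.mul_pos hm hn)).2
        (isPrimitiveRoot_mul_of_coprime hmn hab.1 hab.2)
    · simp only [Finset.card_image_of_injOn hinj, Finset.card_product,
        Complex.card_primitiveRoots, Nat.totient_mul hmn, le_refl]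
  rw [← himage, Finset.sum_image hinj, Finset.sum_product, Finset.sum_mul_sum]
  simp only [mul_pow]

lemma sum_primitiveRoots_prod_pow {U : Finset ℕ} (hU : ∀ p ∈ U, p.Prime) (n : ℕ) :
    ∑ w ∈ primitiveRoots (∏ p ∈ U, p) ℂ, w ^ n = ((∏ p ∈ U, ramanujanFactor p n : ℝ) : ℂ) := by
  induction U using Finset.induction_on with
  | empty => simp [IsPrimitiveRoot.primitiveRoots_one]
  | insert p U hpU ih =>
    have hp : p.Prime := hU p (Finset.mem_insert_self p U)
    have hU' : ∀ q ∈ U, q.Prime := fun q hq => hU q (Finset.mem_insert_of_mem hq)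
    have hcop : p.Coprime (∏ q ∈ U, q) := Nat.Coprime.prod_right fun q hq =>
      (Nat.coprime_primes hp (hU' q hq)).2 fun h => hpU (h ▸ hq)
    rw [Finset.prod_insert hpU, Finset.prod_insert hpU,
      sum_primitiveRoots_mul_pow hp.pos (Finset.prod_pos fun q hq => (hU' q hq).pos) hcop,
      ih hU', sum_primitiveRoots_pow_of_prime hp, Complex.ofReal_mul]

lemma union_inter_eq_left {P P' U V : Finset ℕ} (hdisj : Disjoint P P') (hU : U ⊆ P)
    (hV : V ⊆ P') : (U ∪ V) ∩ P = U := by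
  rw [Finset.union_inter_distrib_right, Finset.inter_eq_left.2 hU,
    Finset.disjoint_iff_inter_eq_empty.1 (hdisj.symm.mono_left hV), Finset.union_empty]

lemma prod_eq_prod_inter_mul_prod_inter {P P' W : Finset ℕ} (hdisj : Disjoint P P')
    (hW : W ⊆ P ∪ P') : ∏ p ∈ W, p = (∏ p ∈ W ∩ P, p) * ∏ p ∈ W ∩ P', p := by
  rw [← Finset.prod_union (hdisj.mono Finset.inter_subset_right Finset.inter_subset_right),
    ← Finset.inter_union_distrib_left, Finset.inter_eq_left.2 hW]

/-- The weight `k` is a combination of the Ramanujan sums `c_d`, with `d ≤ Y` a product of distinct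
elements of `P`, with coefficients at most `K`. -/
def RamanujanBounded (P : Finset ℕ) (Y : ℕ) (K : ℝ) (k : ℕ → ℝ) : Prop :=
  ∃ c : Finset ℕ → ℝ, (∀ U ∈ P.powerset, |c U| ≤ K) ∧
    (∀ U ∈ P.powerset, c U ≠ 0 → ∏ p ∈ U, p ≤ Y) ∧
    ∀ n, k n = ∑ U ∈ P.powerset, c U * ∏ p ∈ U, ramanujanFactor p n

namespace RamanujanBounded

variable {P : Finset ℕ} {Y : ℕ} {K : ℝ} {k : ℕ → ℝ}

lemma nonneg (hk : RamanujanBounded P Y K k) : 0 ≤ K :=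
  let ⟨_, hK, _⟩ := hk
  (abs_nonneg _).trans (hK ∅ (Finset.empty_mem_powerset P))

lemma const_mul (hk : RamanujanBounded P Y K k) (a : ℝ) :
    RamanujanBounded P Y (|a| * K) fun n => a * k n := by
  obtain ⟨c, hK, hY, hk⟩ := hk
  refine ⟨fun U => a * c U, fun U hU => ?_, fun U hU h => hY U hU (right_ne_zero_of_mul h),
    fun n => ?_⟩
  · rw [abs_mul]
    exact mul_le_mul_of_nonneg_left (hK U hU) (abs_nonneg a)
  · simp only [hk, Finset.mul_sum, mul_assoc]

lemma mul {P' : Finset ℕ} {Y' : ℕ} {K' : ℝ} {k' : ℕ → ℝ} (hk : RamanujanBounded P Y K k)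
    (hk' : RamanujanBounded P' Y' K' k') (hdisj : Disjoint P P') :
    RamanujanBounded (P ∪ P') (Y * Y') (K * K') fun n => k n * k' n := by
  have hK0 := hk.nonneg
  obtain ⟨c, hK, hY, hk⟩ := hk
  obtain ⟨c', hK', hY', hk'⟩ := hk'
  have hl : ∀ W : Finset ℕ, W ∩ P ∈ P.powerset := fun W =>
    Finset.mem_powerset.2 Finset.inter_subset_right
  have hr : ∀ W : Finset ℕ, W ∩ P' ∈ P'.powerset := fun W =>
    Finset.mem_powerset.2 Finset.inter_subset_right
  refine ⟨fun W => c (W ∩ P) * c' (W ∩ P'), fun W _ => ?_, fun W hW h => ?_, fun n => ?_⟩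
  · rw [abs_mul]
    exact mul_le_mul (hK _ (hl W)) (hK' _ (hr W)) (abs_nonneg _) hK0
  · rw [prod_eq_prod_inter_mul_prod_inter hdisj (Finset.mem_powerset.1 hW)]
    exact Nat.mul_le_mul (hY _ (hl W) (left_ne_zero_of_mul h))
      (hY' _ (hr W) (right_ne_zero_of_mul h))
  · simp only [hk, hk', Finset.sum_mul_sum, ← Finset.sum_product']
    refine Finset.sum_nbij' (fun z => z.1 ∪ z.2) (fun W => (W ∩ P, W ∩ P')) ?_ ?_ ?_ ?_ ?_
    · simp only [Finset.mem_product, Finset.mem_powerset]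
      exact fun z hz => Finset.union_subset_union hz.1 hz.2
    · exact fun W _ => Finset.mem_product.2 ⟨hl W, hr W⟩
    · simp only [Finset.mem_product, Finset.mem_powerset]
      exact fun z hz => Prod.ext (union_inter_eq_left hdisj hz.1 hz.2)
        (Finset.union_comm z.1 z.2 ▸ union_inter_eq_left hdisj.symm hz.2 hz.1)
    · intro W hW
      rw [← Finset.inter_union_distrib_left]
      exact Finset.inter_eq_left.2 (Finset.mem_powerset.1 hW)
    · simp only [Finset.mem_product, Finset.mem_powerset]
      intro z hz
      rw [union_inter_eq_left hdisj hz.1 hz.2, Finset.union_comm z.1 z.2,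
        union_inter_eq_left hdisj.symm hz.2 hz.1,
        Finset.prod_union (hdisj.symm.mono hz.2 hz.1)]
      ring

lemma exists_fareyRoots (hP : ∀ p ∈ P, p.Prime) (hk : RamanujanBounded P Y K k) :
    ∃ κ : ℂ → ℂ, (∀ w, ‖κ w‖ ≤ K) ∧ ∀ n, (k n : ℂ) = ∑ w ∈ fareyRoots Y, κ w * w ^ n := by
  classical
  have hK0 := hk.nonneg
  obtain ⟨c, hK, hY, hk⟩ := hk
  set s := P.powerset.filter fun U => c U ≠ 0
  set roots : Finset ℕ → Finset ℂ := fun U => primitiveRoots (∏ p ∈ U, p) ℂ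
  have hprime : ∀ U ∈ s, ∀ p ∈ U, p.Prime := fun U hU p hp =>
    hP p (Finset.mem_powerset.1 (Finset.mem_filter.1 hU).1 hp)
  have hfactors : ∀ U ∈ s, ∀ w ∈ roots U, (orderOf w).primeFactors = U := fun U hU w hw => by
    rw [← (isPrimitiveRoot_of_mem_primitiveRoots hw).eq_orderOf,
      Nat.primeFactors_prod (hprime U hU)]
  have hdisj : (s : Set (Finset ℕ)).PairwiseDisjoint roots := fun U hU V hV hne =>
    Finset.disjoint_left.2 fun w hwU hwV => hne ((hfactors U hU w hwU).symm.trans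
      (hfactors V hV w hwV))
  have hsub : s.biUnion roots ⊆ fareyRoots Y := fun w hw => by
    obtain ⟨U, hU, hw⟩ := Finset.mem_biUnion.1 hw
    exact mem_fareyRoots.2 ⟨_, Finset.prod_pos fun p hp => (hprime U hU p hp).pos,
      hY U (Finset.mem_filter.1 hU).1 (Finset.mem_filter.1 hU).2,
      (isPrimitiveRoot_of_mem_primitiveRoots hw).pow_eq_one⟩
  refine ⟨fun w => if w ∈ s.biUnion roots then (c (orderOf w).primeFactors : ℂ) else 0,
    fun w => ?_, fun n => ?_⟩
  · beta_reduce
    split_ifs with hw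
    · obtain ⟨U, hU, hw⟩ := Finset.mem_biUnion.1 hw
      rw [hfactors U hU w hw, Complex.norm_real]
      exact hK U (Finset.mem_filter.1 hU).1
    · simpa using hK0
  · simp only [ite_mul, zero_mul]
    rw [Finset.sum_ite_mem, Finset.inter_eq_right.2 hsub, Finset.sum_biUnion hdisj, hk,
      ← Finset.sum_filter_of_ne fun U _ h => left_ne_zero_of_mul h]
    push_cast
    refine Finset.sum_congr rfl fun U hU => ?_
    rw [← Complex.ofReal_prod, ← sum_primitiveRoots_prod_pow (hprime U hU), Finset.mul_sum]
    exact Finset.sum_congr rfl fun w hw => by rw [hfactors U hU w hw]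

variable {X : Type*} [MeasurableSpace X] {μ : Measure X} {T : X → X}

lemma eLpNorm_fejerAvg_le (hP : ∀ p ∈ P, p.Prime) (hk : RamanujanBounded P Y K k) {L : ℕ}
    (hYL : Y ^ 4 ≤ L) (hT : MeasurePreserving T μ μ) {f : X → ℝ} (hf : MemLp f 2 μ) :
    eLpNorm (fejerAvg T k L f) 2 μ ≤ ENNReal.ofReal (2 * K) * eLpNorm f 2 μ := by
  obtain ⟨κ, hκ, hsum⟩ := hk.exists_fareyRoots hP
  exact PrimeErgodic.eLpNorm_fejerAvg_le hT hYL hk.nonneg hκ hsum hf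

end RamanujanBounded

end RamanujanSums

section SieveFactors

/-- The ratio `1 / (p - 1)` of the densities of the multiples and the non-multiples of `p`. -/
noncomputable def primeWeight (p : ℕ) : ℝ := ((p : ℝ) - 1)⁻¹

/-- The normalised Ramanujan sum at `p`: `-1` on the multiples of `p`, and of mean zero. -/
noncomputable def sieveFactor (p n : ℕ) : ℝ := -primeWeight p * ramanujanFactor p n

/-- The reciprocal `∏ p / (p - 1)` of the density of the integers free of prime factors in `S`. -/
noncomputable def invDensity (S : Finset ℕ) : ℝ := ∏ p ∈ S, (1 + primeWeight p)

/-- The indicator of the integers free of prime factors in `S`, normalised to have mean one. -/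
noncomputable def exactSieve (S : Finset ℕ) (n : ℕ) : ℝ := ∏ p ∈ S, (1 + sieveFactor p n)

section Prime

variable {p : ℕ} (hp : p.Prime)

include hp

lemma primeWeight_pos : 0 < primeWeight p :=
  inv_pos.2 (sub_pos.2 (by exact_mod_cast hp.one_lt))

lemma primeWeight_le_one : primeWeight p ≤ 1 := by
  have : (2 : ℝ) ≤ p := by exact_mod_cast hp.two_le
  exact inv_le_one_of_one_le₀ (by linarith)

lemma inv_le_primeWeight : (p : ℝ)⁻¹ ≤ primeWeight p := by
  have : (1 : ℝ) < p := by exact_mod_cast hp.one_lt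
  exact inv_anti₀ (by linarith) (by linarith)

lemma sieveFactor_of_dvd {n : ℕ} (h : p ∣ n) : sieveFactor p n = -1 := by
  have : (p : ℝ) - 1 ≠ 0 := sub_ne_zero.2 (by exact_mod_cast hp.one_lt.ne')
  simp [sieveFactor, ramanujanFactor, h, primeWeight, this]

omit hp in
lemma sieveFactor_of_not_dvd {n : ℕ} (h : ¬p ∣ n) : sieveFactor p n = primeWeight p := by
  simp [sieveFactor, ramanujanFactor, h]

lemma sieveFactor_sq (n : ℕ) : sieveFactor p n ^ 2 =
    primeWeight p * (1 - primeWeight p) * ramanujanFactor p n + primeWeight p := by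
  have : (p : ℝ) - 1 ≠ 0 := sub_ne_zero.2 (by exact_mod_cast hp.one_lt.ne')
  by_cases h : p ∣ n
  · rw [sieveFactor_of_dvd hp h, ramanujanFactor, if_pos h, primeWeight]
    field_simp
    ring
  · rw [sieveFactor_of_not_dvd h, ramanujanFactor, if_neg h]
    ring

end Prime

variable {S : Finset ℕ} (hS : ∀ p ∈ S, p.Prime)

include hS

lemma prod_primeWeight_nonneg : 0 ≤ ∏ p ∈ S, primeWeight p :=
  Finset.prod_nonneg fun p hp => (primeWeight_pos (hS p hp)).le

lemma one_le_invDensity : 1 ≤ invDensity S :=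
  Finset.one_le_prod fun p hp => le_add_of_nonneg_right (primeWeight_pos (hS p hp)).le

lemma exactSieve_eq_ite (n : ℕ) :
    exactSieve S n = if ∀ p ∈ S, ¬p ∣ n then invDensity S else 0 := by
  split_ifs with h
  · exact Finset.prod_congr rfl fun p hp => by rw [sieveFactor_of_not_dvd (h p hp)]
  · push Not at h
    obtain ⟨p, hp, hdvd⟩ := h
    exact Finset.prod_eq_zero hp (by rw [sieveFactor_of_dvd (hS p hp) hdvd]; ring)

lemma exactSieve_nonneg (n : ℕ) : 0 ≤ exactSieve S n := by
  have := one_le_invDensity hS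
  rw [exactSieve_eq_ite hS]
  split_ifs <;> linarith

lemma exactSieve_le (n : ℕ) : exactSieve S n ≤ invDensity S := by
  have := one_le_invDensity hS
  rw [exactSieve_eq_ite hS]
  split_ifs <;> linarith

omit hS in
lemma exactSieve_eq_sum (S : Finset ℕ) (n : ℕ) : exactSieve S n =
    ∑ U ∈ S.powerset, (∏ p ∈ U, -primeWeight p) * ∏ p ∈ U, ramanujanFactor p n := by
  simp only [exactSieve, Finset.prod_one_add, ← Finset.prod_mul_distrib, sieveFactor]

lemma abs_prod_neg_primeWeight : |∏ p ∈ S, -primeWeight p| = ∏ p ∈ S, primeWeight p := by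
  rw [Finset.abs_prod]
  exact Finset.prod_congr rfl fun p hp => by rw [abs_neg, abs_of_pos (primeWeight_pos (hS p hp))]

lemma abs_prod_neg_primeWeight_le_one : |∏ p ∈ S, -primeWeight p| ≤ 1 := by
  rw [abs_prod_neg_primeWeight hS]
  exact Finset.prod_le_one (fun p hp => (primeWeight_pos (hS p hp)).le)
    fun p hp => primeWeight_le_one (hS p hp)

lemma ramanujanBounded_exactSieve :
    RamanujanBounded S (∏ p ∈ S, p) 1 (exactSieve S) := by
  have hsub : ∀ U ∈ S.powerset, ∀ p ∈ U, p.Prime := fun U hU p hp =>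
    hS p (Finset.mem_powerset.1 hU hp)
  exact ⟨fun U => ∏ p ∈ U, -primeWeight p,
    fun U hU => abs_prod_neg_primeWeight_le_one (hsub U hU),
    fun U hU _ => Finset.prod_le_prod_of_subset_of_one_le' (Finset.mem_powerset.1 hU)
      fun p hp _ => (hS p hp).one_lt.le,
    exactSieve_eq_sum S⟩

lemma abs_prod_neg_primeWeight_le {p : ℕ} (hp : p ∈ S) :
    |∏ q ∈ S, -primeWeight q| ≤ primeWeight p := by
  rw [← Finset.mul_prod_erase S _ hp, abs_mul, abs_neg, abs_of_pos (primeWeight_pos (hS p hp))]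
  exact mul_le_of_le_one_right (primeWeight_pos (hS p hp)).le
    (abs_prod_neg_primeWeight_le_one fun q hq => hS q (Finset.mem_of_mem_erase hq))

lemma ramanujanBounded_exactSieve_sub {S' : Finset ℕ} (hsub : S' ⊆ S) {K : ℝ} (hK0 : 0 ≤ K)
    (hK : ∀ p ∈ S \ S', primeWeight p ≤ K) :
    RamanujanBounded S (∏ p ∈ S, p) K fun n => exactSieve S n - exactSieve S' n := by
  refine ⟨fun U => if U ⊆ S' then 0 else ∏ p ∈ U, -primeWeight p, fun U hU => ?_,
    fun U hU _ => Finset.prod_le_prod_of_subset_of_one_le' (Finset.mem_powerset.1 hU)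
      fun p hp _ => (hS p hp).one_lt.le, fun n => ?_⟩
  · rw [Finset.mem_powerset] at hU
    beta_reduce
    split_ifs with h
    · simpa using hK0
    · obtain ⟨p, hpU, hpS'⟩ := Finset.not_subset.1 h
      exact (abs_prod_neg_primeWeight_le (fun q hq => hS q (hU hq)) hpU).trans
        (hK p (Finset.mem_sdiff.2 ⟨hU hpU, hpS'⟩))
  · have hfilter : S.powerset.filter (· ⊆ S') = S'.powerset := by
      ext U
      simp only [Finset.mem_filter, Finset.mem_powerset, and_iff_right_iff_imp]
      exact fun h => h.trans hsub
    beta_reduce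
    rw [exactSieve_eq_sum, exactSieve_eq_sum, ← hfilter, Finset.sum_filter,
      ← Finset.sum_sub_distrib]
    exact Finset.sum_congr rfl fun U _ => by split_ifs <;> ring

end SieveFactors

section SelbergSieve

lemma card_filter_sdiff_eq_le {ι : Type*} [DecidableEq ι] (𝒯 : Finset (Finset ι))
    (W M : Finset ι) : (𝒯.filter fun U => U \ W = M).card ≤ 2 ^ W.card := by
  rw [← Finset.card_powerset]
  refine Finset.card_le_card_of_injOn (· ∩ W)
    (fun U _ => Finset.mem_powerset.2 Finset.inter_subset_right) fun U hU V hV h => ?_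
  rw [Finset.mem_coe, Finset.mem_filter] at hU hV
  rw [← Finset.sdiff_union_inter U W, ← Finset.sdiff_union_inter V W, hU.2, hV.2]
  exact congrArg _ h

lemma sum_comp_sdiff_le {ι : Type*} [DecidableEq ι] {𝒯 : Finset (Finset ι)} {W : Finset ι}
    (h𝒯 : ∀ U ∈ 𝒯, U \ W ∈ 𝒯) {F : Finset ι → ℝ} (hF : ∀ U ∈ 𝒯, 0 ≤ F U) :
    ∑ U ∈ 𝒯, F (U \ W) ≤ 2 ^ W.card * ∑ U ∈ 𝒯, F U := by
  rw [← Finset.sum_fiberwise_of_maps_to h𝒯, Finset.mul_sum]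
  refine Finset.sum_le_sum fun M hM => ?_
  rw [Finset.sum_congr rfl fun U hU => congrArg F (Finset.mem_filter.1 hU).2, Finset.sum_const,
    nsmul_eq_mul]
  exact mul_le_mul_of_nonneg_right (by exact_mod_cast card_filter_sdiff_eq_le 𝒯 W M) (hF M hM)

/-- The index set of the Selberg sieve of level `R`: the divisors `d ≤ R` of `∏ p ∈ S, p`, given
by their sets of prime factors. -/
def sieveSupport (S : Finset ℕ) (R : ℕ) : Finset (Finset ℕ) :=
  S.powerset.filter fun W => ∏ p ∈ W, p ≤ R

/-- The sum `∑ μ²(d) / φ(d)` over `d ≤ R` composed of primes in `S`. -/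
noncomputable def selbergSum (S : Finset ℕ) (R : ℕ) : ℝ :=
  ∑ W ∈ sieveSupport S R, ∏ p ∈ W, primeWeight p

/-- The Selberg sieve weight `(∑_{d ∣ n} λ_d)²`, normalised to have mean one; it is expressed
through the orthogonal system of products of the factors `sieveFactor p`. -/
noncomputable def selbergWeight (S : Finset ℕ) (R n : ℕ) : ℝ :=
  (selbergSum S R)⁻¹ * (∑ W ∈ sieveSupport S R, ∏ p ∈ W, sieveFactor p n) ^ 2

lemma mem_sieveSupport {S : Finset ℕ} {R : ℕ} {W : Finset ℕ} :
    W ∈ sieveSupport S R ↔ W ⊆ S ∧ ∏ p ∈ W, p ≤ R := by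
  rw [sieveSupport, Finset.mem_filter, Finset.mem_powerset]

/-- The coefficient at frequency zero of the factor at `p` of `(∏_{T} χ) (∏_{T'} χ)`, where `χ`
stands for `sieveFactor`. -/
noncomputable def selbergZeroCoeff (T T' : Finset ℕ) (p : ℕ) : ℝ :=
  if p ∈ T ↔ p ∈ T' then (if p ∈ T then primeWeight p else 1) else 0

/-- The coefficient of `ramanujanFactor p` in the factor at `p` of `(∏_{T} χ) (∏_{T'} χ)`, where
`χ` stands for `sieveFactor`. -/
noncomputable def selbergCoeff (T T' : Finset ℕ) (p : ℕ) : ℝ :=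
  if p ∈ T ↔ p ∈ T' then (if p ∈ T then primeWeight p * (1 - primeWeight p) else 0)
  else -primeWeight p

lemma abs_selbergCoeff_le {p : ℕ} (hp : p.Prime) (T T' : Finset ℕ) :
    |selbergCoeff T T' p| ≤ primeWeight p := by
  have hpos := primeWeight_pos hp
  have hle := primeWeight_le_one hp
  unfold selbergCoeff
  split_ifs
  · rw [abs_of_nonneg (mul_nonneg hpos.le (sub_nonneg.2 hle))]
    nlinarith
  · simpa using hpos.le
  · rw [abs_neg, abs_of_pos hpos]

lemma selbergCoeff_mul_add_selbergZeroCoeff {p : ℕ} (hp : p.Prime) (T T' : Finset ℕ) (n : ℕ) :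
    selbergCoeff T T' p * ramanujanFactor p n + selbergZeroCoeff T T' p =
      (if p ∈ T then sieveFactor p n else 1) * if p ∈ T' then sieveFactor p n else 1 := by
  unfold selbergCoeff selbergZeroCoeff
  by_cases hT : p ∈ T <;> by_cases hT' : p ∈ T' <;>
    simp only [hT, hT', if_true, if_false, iff_true, iff_false, not_true]
  · rw [← sieveFactor_sq hp, sq]
  all_goals simp [sieveFactor]

/-- The coefficient of `∏ p ∈ W, ramanujanFactor p` in the product of `sieveFactor p` over `p ∈ T`
and over `p ∈ T'`. -/
noncomputable def selbergPairCoeff (S T T' W : Finset ℕ) : ℝ :=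
  (∏ p ∈ W, selbergCoeff T T' p) * ∏ p ∈ S \ W, selbergZeroCoeff T T' p

section PairCoeff

variable {S T T' : Finset ℕ} (hT : T ⊆ S) (hT' : T' ⊆ S)

include hT hT'

lemma prod_sieveFactor_mul_prod_sieveFactor (hS : ∀ p ∈ S, p.Prime) (n : ℕ) :
    (∏ p ∈ T, sieveFactor p n) * ∏ p ∈ T', sieveFactor p n =
      ∑ W ∈ S.powerset, selbergPairCoeff S T T' W * ∏ p ∈ W, ramanujanFactor p n := by
  have hextend : ∀ Q ⊆ S, ∏ p ∈ Q, sieveFactor p n =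
      ∏ p ∈ S, if p ∈ Q then sieveFactor p n else 1 := fun Q hQ => by
    rw [Finset.prod_ite_mem, Finset.inter_eq_right.2 hQ]
  rw [hextend T hT, hextend T' hT', ← Finset.prod_mul_distrib, ← Finset.prod_congr rfl fun p hp =>
    selbergCoeff_mul_add_selbergZeroCoeff (hS p hp) T T' n, Finset.prod_add]
  refine Finset.sum_congr rfl fun W _ => ?_
  rw [Finset.prod_mul_distrib, selbergPairCoeff]
  ring

lemma prod_selbergZeroCoeff (W : Finset ℕ) : ∏ p ∈ S \ W, selbergZeroCoeff T T' p =
    if T' \ W = T \ W then ∏ p ∈ T \ W, primeWeight p else 0 := by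
  have hiff : (∀ p ∈ S \ W, (p ∈ T ↔ p ∈ T')) ↔ T' \ W = T \ W := by
    simp only [Finset.ext_iff, Finset.mem_sdiff, and_congr_left_iff, and_imp]
    exact ⟨fun h p hpW => ⟨fun hp => (h p (hT' hp) hpW).2 hp, fun hp => (h p (hT hp) hpW).1 hp⟩,
      fun h p _ hpW => (h p hpW).symm⟩
  have hinter : (S \ W) ∩ T = T \ W := by
    ext p
    simp only [Finset.mem_inter, Finset.mem_sdiff]
    exact ⟨fun h => ⟨h.2, h.1.2⟩, fun h => ⟨⟨hT h.1, h.2⟩, h.1⟩⟩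
  simp only [selbergZeroCoeff]
  rw [Finset.prod_ite_zero, Finset.prod_ite_mem, hinter]
  simp only [hiff]

lemma abs_selbergPairCoeff_le (hS : ∀ p ∈ S, p.Prime) {W : Finset ℕ} (hW : W ⊆ S) :
    |selbergPairCoeff S T T' W| ≤ (∏ p ∈ W, primeWeight p) *
      if T' \ W = T \ W then ∏ p ∈ T \ W, primeWeight p else 0 := by
  have hnonneg : 0 ≤ if T' \ W = T \ W then ∏ p ∈ T \ W, primeWeight p else 0 := by
    split_ifs
    exacts [prod_primeWeight_nonneg fun p hp => hS p (hT (Finset.sdiff_subset hp)), le_rfl]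
  rw [selbergPairCoeff, prod_selbergZeroCoeff hT hT', abs_mul, abs_of_nonneg hnonneg,
    Finset.abs_prod]
  exact mul_le_mul_of_nonneg_right (Finset.prod_le_prod (fun _ _ => abs_nonneg _)
    fun p hp => abs_selbergCoeff_le (hS p (hW hp)) T T') hnonneg

omit hT hT' in
lemma selbergPairCoeff_eq_zero {W : Finset ℕ} (hW : ¬W ⊆ T ∪ T') :
    selbergPairCoeff S T T' W = 0 := by
  obtain ⟨p, hp, hpTT'⟩ := Finset.not_subset.1 hW
  rw [Finset.mem_union, not_or] at hpTT'
  rw [selbergPairCoeff, Finset.prod_eq_zero hp, zero_mul]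
  simp [selbergCoeff, hpTT'.1, hpTT'.2]

end PairCoeff

/-- The coefficient of `∏ p ∈ W, ramanujanFactor p` in the Selberg weight. -/
noncomputable def selbergWeightCoeff (S : Finset ℕ) (R : ℕ) (W : Finset ℕ) : ℝ :=
  (selbergSum S R)⁻¹ *
    ∑ T ∈ sieveSupport S R, ∑ T' ∈ sieveSupport S R, selbergPairCoeff S T T' W

variable {S : Finset ℕ} (hS : ∀ p ∈ S, p.Prime) {R : ℕ}

include hS

lemma mem_sieveSupport_of_subset {U W : Finset ℕ} (hW : W ∈ sieveSupport S R) (h : U ⊆ W) :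
    U ∈ sieveSupport S R := by
  rw [mem_sieveSupport] at *
  exact ⟨h.trans hW.1, (Finset.prod_le_prod_of_subset_of_one_le' h
    fun p hp _ => (hS p (hW.1 hp)).one_lt.le).trans hW.2⟩

lemma prod_primeWeight_nonneg_of_mem_sieveSupport {W : Finset ℕ} (hW : W ∈ sieveSupport S R) :
    0 ≤ ∏ p ∈ W, primeWeight p :=
  prod_primeWeight_nonneg fun p hp => hS p ((mem_sieveSupport.1 hW).1 hp)

lemma selbergWeight_eq_sum (R n : ℕ) : selbergWeight S R n =
    ∑ W ∈ S.powerset, selbergWeightCoeff S R W * ∏ p ∈ W, ramanujanFactor p n := by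
  have hpair : ∀ T ∈ sieveSupport S R, ∀ T' ∈ sieveSupport S R,
      (∏ p ∈ T, sieveFactor p n) * ∏ p ∈ T', sieveFactor p n =
      ∑ W ∈ S.powerset, selbergPairCoeff S T T' W * ∏ p ∈ W, ramanujanFactor p n :=
    fun T hT T' hT' => prod_sieveFactor_mul_prod_sieveFactor (mem_sieveSupport.1 hT).1
      (mem_sieveSupport.1 hT').1 hS n
  simp only [selbergWeight, selbergWeightCoeff, sq, Finset.sum_mul_sum]
  rw [Finset.sum_congr rfl fun T hT => Finset.sum_congr rfl fun T' hT' => hpair T hT T' hT']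
  simp only [mul_assoc, Finset.mul_sum, Finset.sum_mul]
  rw [Finset.sum_congr rfl fun T _ => Finset.sum_comm]
  exact Finset.sum_comm

lemma selbergWeightCoeff_eq_zero {W : Finset ℕ} (hW : R ^ 2 < ∏ p ∈ W, p) :
    selbergWeightCoeff S R W = 0 := by
  rw [selbergWeightCoeff, Finset.sum_eq_zero fun T hT => Finset.sum_eq_zero fun T' hT' =>
    selbergPairCoeff_eq_zero fun hWTT' => hW.not_ge ?_, mul_zero]
  rw [mem_sieveSupport] at hT hT'
  have hone : ∀ p ∈ T ∪ T', 1 ≤ p := fun p hp =>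
    (hS p (Finset.union_subset hT.1 hT'.1 hp)).one_lt.le
  calc ∏ p ∈ W, p ≤ ∏ p ∈ T ∪ T', p :=
        Finset.prod_le_prod_of_subset_of_one_le' hWTT' fun p hp _ => hone p hp
    _ ≤ (∏ p ∈ T ∪ T', p) * ∏ p ∈ T ∩ T', p := Nat.le_mul_of_pos_right _ <|
        Finset.prod_pos fun p hp => hone p (Finset.mem_union_left _ (Finset.mem_inter.1 hp).1)
    _ = (∏ p ∈ T, p) * ∏ p ∈ T', p := Finset.prod_union_inter
    _ ≤ R ^ 2 := sq R ▸ Nat.mul_le_mul hT.2 hT'.2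

lemma sum_sum_ite_sdiff_eq_le (W : Finset ℕ) :
    ∑ T ∈ sieveSupport S R, ∑ T' ∈ sieveSupport S R,
        (if T' \ W = T \ W then ∏ p ∈ T \ W, primeWeight p else 0) ≤
      4 ^ W.card * selbergSum S R := by
  have hmem : ∀ T ∈ sieveSupport S R, T \ W ∈ sieveSupport S R := fun T hT =>
    mem_sieveSupport_of_subset hS hT Finset.sdiff_subset
  calc _ ≤ ∑ T ∈ sieveSupport S R, 2 ^ W.card * ∏ p ∈ T \ W, primeWeight p := by
        refine Finset.sum_le_sum fun T hT => ?_
        rw [← Finset.sum_filter, Finset.sum_const, nsmul_eq_mul]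
        exact mul_le_mul_of_nonneg_right (by exact_mod_cast card_filter_sdiff_eq_le _ W (T \ W))
          (prod_primeWeight_nonneg_of_mem_sieveSupport hS (hmem T hT))
    _ ≤ 2 ^ W.card * (2 ^ W.card * selbergSum S R) := by
        rw [← Finset.mul_sum]
        exact mul_le_mul_of_nonneg_left (sum_comp_sdiff_le hmem fun T hT =>
          prod_primeWeight_nonneg_of_mem_sieveSupport hS hT) (by positivity)
    _ = 4 ^ W.card * selbergSum S R := by
        rw [← mul_assoc, ← mul_pow]
        norm_num

variable (hR : 1 ≤ R)

include hR

lemma one_le_selbergSum : 1 ≤ selbergSum S R := by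
  have hmem : ∅ ∈ sieveSupport S R := mem_sieveSupport.2 ⟨Finset.empty_subset S, by simpa using hR⟩
  simpa [selbergSum] using Finset.single_le_sum (f := fun W => ∏ p ∈ W, primeWeight p)
    (fun W hW => prod_primeWeight_nonneg_of_mem_sieveSupport hS hW) hmem

lemma selbergWeight_nonneg (n : ℕ) : 0 ≤ selbergWeight S R n :=
  mul_nonneg (inv_nonneg.2 (zero_le_one.trans (one_le_selbergSum hS hR))) (sq_nonneg _)

lemma selbergWeight_of_forall_not_dvd {n : ℕ} (hn : ∀ p ∈ S, ¬p ∣ n) :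
    selbergWeight S R n = selbergSum S R := by
  have hsum : ∑ W ∈ sieveSupport S R, ∏ p ∈ W, sieveFactor p n = selbergSum S R :=
    Finset.sum_congr rfl fun W hW => Finset.prod_congr rfl fun p hp =>
      sieveFactor_of_not_dvd (hn p ((mem_sieveSupport.1 hW).1 hp))
  have := one_le_selbergSum hS hR
  rw [selbergWeight, hsum]
  field_simp

lemma selbergWeightCoeff_empty : selbergWeightCoeff S R ∅ = 1 := by
  have hsum : ∑ T ∈ sieveSupport S R, ∑ T' ∈ sieveSupport S R, selbergPairCoeff S T T' ∅ =
      selbergSum S R := by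
    refine Finset.sum_congr rfl fun T hT => ?_
    have hpair : ∀ T' ∈ sieveSupport S R, selbergPairCoeff S T T' ∅ =
        if T' = T then ∏ p ∈ T, primeWeight p else 0 := fun T' hT' => by
      rw [selbergPairCoeff, prod_selbergZeroCoeff (mem_sieveSupport.1 hT).1
        (mem_sieveSupport.1 hT').1, Finset.prod_empty, one_mul, Finset.sdiff_empty,
        Finset.sdiff_empty]
    rw [Finset.sum_congr rfl hpair, Finset.sum_ite_eq', if_pos hT]
  have := one_le_selbergSum hS hR
  rw [selbergWeightCoeff, hsum]
  field_simp

lemma abs_selbergWeightCoeff_le {W : Finset ℕ} (hW : W ⊆ S) :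
    |selbergWeightCoeff S R W| ≤ ∏ p ∈ W, (4 * primeWeight p) := by
  have hG := one_le_selbergSum hS hR
  have hW0 : 0 ≤ ∏ p ∈ W, primeWeight p := prod_primeWeight_nonneg fun p hp => hS p (hW hp)
  rw [selbergWeightCoeff, abs_mul, abs_of_nonneg (by positivity), inv_mul_le_iff₀ (by positivity)]
  calc _ ≤ ∑ T ∈ sieveSupport S R, ∑ T' ∈ sieveSupport S R, |selbergPairCoeff S T T' W| :=
        (Finset.abs_sum_le_sum_abs _ _).trans
          (Finset.sum_le_sum fun T _ => Finset.abs_sum_le_sum_abs _ _)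
    _ ≤ ∑ T ∈ sieveSupport S R, ∑ T' ∈ sieveSupport S R, (∏ p ∈ W, primeWeight p) *
          if T' \ W = T \ W then ∏ p ∈ T \ W, primeWeight p else 0 :=
        Finset.sum_le_sum fun T hT => Finset.sum_le_sum fun T' hT' => abs_selbergPairCoeff_le
          (mem_sieveSupport.1 hT).1 (mem_sieveSupport.1 hT').1 hS hW
    _ ≤ (∏ p ∈ W, primeWeight p) * (4 ^ W.card * selbergSum S R) := by
        simp only [← Finset.mul_sum]
        exact mul_le_mul_of_nonneg_left (sum_sum_ite_sdiff_eq_le hS W) hW0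
    _ = selbergSum S R * ∏ p ∈ W, (4 * primeWeight p) := by
        rw [Finset.prod_mul_distrib, Finset.prod_const]
        ring

lemma ramanujanBounded_selbergWeight_sub_one {K : ℝ} (hK0 : 0 ≤ K) (hK1 : K ≤ 1)
    (hK : ∀ p ∈ S, 4 * primeWeight p ≤ K) :
    RamanujanBounded S (R ^ 2) K fun n => selbergWeight S R n - 1 := by
  refine ⟨fun W => if W = ∅ then 0 else selbergWeightCoeff S R W, fun W hW => ?_,
    fun W _ hW => ?_, fun n => ?_⟩
  · have hWS := Finset.mem_powerset.1 hW
    have hpos : ∀ p ∈ W, 0 ≤ 4 * primeWeight p := fun p hp =>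
      mul_nonneg zero_le_four (primeWeight_pos (hS p (hWS hp))).le
    beta_reduce
    split_ifs with h
    · simpa using hK0
    · obtain ⟨p, hp⟩ := Finset.nonempty_iff_ne_empty.2 h
      refine (abs_selbergWeightCoeff_le hS hR hWS).trans ?_
      rw [← Finset.mul_prod_erase W _ hp]
      refine (mul_le_of_le_one_right (hpos p hp) (Finset.prod_le_one
        (fun q hq => hpos q (Finset.mem_of_mem_erase hq)) fun q hq => ?_)).trans (hK p (hWS hp))
      exact (hK q (hWS (Finset.mem_of_mem_erase hq))).trans hK1
  · exact not_lt.1 fun h => hW (by simp [selbergWeightCoeff_eq_zero hS h])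
  · beta_reduce
    rw [selbergWeight_eq_sum hS, ← Finset.add_sum_erase _ _ (Finset.empty_mem_powerset S),
      ← Finset.add_sum_erase _ _ (Finset.empty_mem_powerset S), selbergWeightCoeff_empty hS hR]
    simp only [Finset.prod_empty, mul_one, add_sub_cancel_left, if_true, zero_add]
    exact Finset.sum_congr rfl fun W hW => by rw [if_neg (Finset.ne_of_mem_erase hW)]

end SelbergSieve

section BrunSieve

/-- The index set of Brun's sieve: the divisors of `∏ p ∈ S, p` with at most `2 * r` prime factors,
given by their sets of prime factors. -/
def brunSupport (S : Finset ℕ) (r : ℕ) : Finset (Finset ℕ) :=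
  S.powerset.filter fun T => T.card ≤ 2 * r

/-- Brun's upper bound sieve: the Möbius expansion of the indicator of the integers free of prime
factors in `S`, truncated to the divisors with at most `2 * r` prime factors. -/
noncomputable def brunSieve (S : Finset ℕ) (r n : ℕ) : ℝ :=
  ∑ T ∈ brunSupport S r, ∏ p ∈ T, if p ∣ n then (-1 : ℝ) else 0

/-- The number of divisors of `n` composed of `2 * r + 1` distinct primes of `S`, which bounds the
truncation error in Brun's sieve. -/
noncomputable def brunError (S : Finset ℕ) (r n : ℕ) : ℝ :=
  ∑ T ∈ S.powersetCard (2 * r + 1), if ∀ p ∈ T, p ∣ n then (1 : ℝ) else 0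

lemma mem_brunSupport {S : Finset ℕ} {r : ℕ} {T : Finset ℕ} :
    T ∈ brunSupport S r ↔ T ⊆ S ∧ T.card ≤ 2 * r := by
  rw [brunSupport, Finset.mem_filter, Finset.mem_powerset]

lemma subset_filter_dvd_iff {S T : Finset ℕ} (hT : T ⊆ S) (n : ℕ) :
    T ⊆ S.filter (· ∣ n) ↔ ∀ p ∈ T, p ∣ n := by
  simp only [Finset.subset_iff, Finset.mem_filter]
  exact ⟨fun h p hp => (h hp).2, fun h p hp => ⟨hT hp, h p hp⟩⟩

lemma filter_powersetCard_dvd (S : Finset ℕ) (n i : ℕ) :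
    (S.powersetCard i).filter (fun T => ∀ p ∈ T, p ∣ n) =
      (S.filter (· ∣ n)).powersetCard i := by
  ext T
  simp only [Finset.mem_filter, Finset.mem_powersetCard]
  constructor
  · exact fun h => ⟨(subset_filter_dvd_iff h.1.1 n).2 h.2, h.1.2⟩
  · intro h
    have hTS := h.1.trans (Finset.filter_subset _ S)
    exact ⟨⟨hTS, h.2⟩, (subset_filter_dvd_iff hTS n).1 h.1⟩

lemma brunError_eq_choose (S : Finset ℕ) (r n : ℕ) :
    brunError S r n = ((S.filter (· ∣ n)).card.choose (2 * r + 1) : ℝ) := by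
  rw [brunError, ← Finset.sum_filter, filter_powersetCard_dvd, Finset.sum_const,
    Finset.card_powersetCard, nsmul_eq_mul, mul_one]

lemma brunError_nonneg (S : Finset ℕ) (r n : ℕ) : 0 ≤ brunError S r n := by
  rw [brunError_eq_choose]
  positivity

lemma brunSieve_eq_sum_choose (S : Finset ℕ) (r n : ℕ) :
    brunSieve S r n = ∑ i ∈ Finset.range (2 * r + 1),
      (-1 : ℝ) ^ i * ((S.filter (· ∣ n)).card.choose i : ℝ) := by
  have hmaps : ∀ T ∈ brunSupport S r, T.card ∈ Finset.range (2 * r + 1) := fun T hT =>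
    Finset.mem_range_succ_iff.2 (mem_brunSupport.1 hT).2
  rw [brunSieve, ← Finset.sum_fiberwise_of_maps_to hmaps]
  refine Finset.sum_congr rfl fun i hi => ?_
  have hfiber : (brunSupport S r).filter (fun T => T.card = i) = S.powersetCard i := by
    ext T
    rw [Finset.mem_filter, mem_brunSupport, Finset.mem_powersetCard]
    have := Finset.mem_range_succ_iff.1 hi
    constructor
    · exact fun h => ⟨h.1.1, h.2⟩
    · exact fun h => ⟨⟨h.1, h.2.trans_le this⟩, h.2⟩
  rw [hfiber, Finset.sum_congr rfl fun T hT => by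
    rw [Finset.prod_ite_zero, Finset.prod_const, (Finset.mem_powersetCard.1 hT).2],
    ← Finset.sum_filter, filter_powersetCard_dvd, Finset.sum_const, Finset.card_powersetCard,
    nsmul_eq_mul, mul_comm]

lemma sum_range_neg_one_pow_mul_choose_succ (w m : ℕ) :
    ∑ i ∈ Finset.range (2 * m + 1), (-1 : ℝ) ^ i * ((w + 1).choose i : ℝ) =
      (w.choose (2 * m) : ℝ) := by
  have h := congrArg ((↑) : ℤ → ℝ)
    (Int.alternating_sum_range_choose_eq_choose (n := w) (m := 2 * m))
  push_cast at h
  rw [h, pow_mul, neg_one_sq, one_pow, one_mul]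

/-- The coefficient of `∏ p ∈ U, ramanujanFactor p` in Brun's sieve. -/
noncomputable def brunCoeff (S : Finset ℕ) (r : ℕ) (U : Finset ℕ) : ℝ :=
  ∑ T ∈ brunSupport S r, if U ⊆ T then ∏ p ∈ T, (-(p : ℝ)⁻¹) else 0

lemma brunCoeff_eq_zero {S U : Finset ℕ} {r : ℕ} (hU : U ∉ brunSupport S r) :
    brunCoeff S r U = 0 :=
  Finset.sum_eq_zero fun T hT => if_neg fun hUT => hU <| by
    rw [mem_brunSupport] at *
    exact ⟨hUT.trans hT.1, (Finset.card_le_card hUT).trans hT.2⟩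

lemma ite_dvd_eq_mul_one_add_ramanujanFactor {p : ℕ} (hp : p ≠ 0) (n : ℕ) :
    (if p ∣ n then (-1 : ℝ) else 0) = -(p : ℝ)⁻¹ * (1 + ramanujanFactor p n) := by
  unfold ramanujanFactor
  split_ifs <;> field_simp <;> ring

variable {S : Finset ℕ} (hS : ∀ p ∈ S, p.Prime)

include hS

/- Bonferroni's inequalities: a truncated alternating sum of the binomial coefficients of `w + 1` is
a binomial coefficient of `w`. -/
lemma exactSieve_le_mul_brunSieve_and_le (r n : ℕ) :
    exactSieve S n ≤ invDensity S * brunSieve S r n ∧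
      invDensity S * brunSieve S r n ≤ exactSieve S n + invDensity S * brunError S r n := by
  have hV : 0 ≤ invDensity S := zero_le_one.trans (one_le_invDensity hS)
  rw [exactSieve_eq_ite hS, brunSieve_eq_sum_choose, brunError_eq_choose]
  rcases Nat.eq_zero_or_eq_succ_pred (S.filter (· ∣ n)).card with hcard | hcard
  · have hcoprime : ∀ p ∈ S, ¬p ∣ n := Finset.filter_eq_empty_iff.1 (Finset.card_eq_zero.1 hcard)
    rw [if_pos hcoprime, hcard, Finset.sum_range_succ']
    simp
  · have hdvd : ¬∀ p ∈ S, ¬p ∣ n := by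
      rw [← Finset.filter_eq_empty_iff, ← Finset.card_eq_zero, hcard]
      exact Nat.succ_ne_zero _
    rw [if_neg hdvd, hcard, Nat.succ_eq_add_one, sum_range_neg_one_pow_mul_choose_succ, zero_add]
    exact ⟨by positivity, mul_le_mul_of_nonneg_left
      (by exact_mod_cast Nat.choose_succ_succ _ _ ▸ Nat.le_add_right _ _) hV⟩

lemma brunSieve_eq_sum (r n : ℕ) : brunSieve S r n =
    ∑ U ∈ S.powerset, brunCoeff S r U * ∏ p ∈ U, ramanujanFactor p n := by
  simp only [brunSieve, brunCoeff, Finset.sum_mul]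
  rw [Finset.sum_comm]
  refine Finset.sum_congr rfl fun T hT => ?_
  have hTS := (mem_brunSupport.1 hT).1
  have hpowerset : S.powerset.filter (· ⊆ T) = T.powerset := by
    ext U
    simp only [Finset.mem_filter, Finset.mem_powerset, and_iff_right_iff_imp]
    exact fun h => h.trans hTS
  rw [Finset.prod_congr rfl fun p hp =>
    ite_dvd_eq_mul_one_add_ramanujanFactor (hS p (hTS hp)).ne_zero n,
    Finset.prod_mul_distrib, Finset.prod_one_add, Finset.mul_sum]
  simp only [ite_mul, zero_mul]
  rw [← Finset.sum_filter, hpowerset]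

lemma abs_brunCoeff_le (r : ℕ) (U : Finset ℕ) : |brunCoeff S r U| ≤ invDensity S := by
  calc |brunCoeff S r U|
      ≤ ∑ T ∈ brunSupport S r, |if U ⊆ T then ∏ p ∈ T, (-(p : ℝ)⁻¹) else 0| :=
        Finset.abs_sum_le_sum_abs _ _
    _ ≤ ∑ T ∈ brunSupport S r, ∏ p ∈ T, (p : ℝ)⁻¹ := by
        refine Finset.sum_le_sum fun T _ => ?_
        split_ifs
        · simp only [Finset.abs_prod, abs_neg, abs_inv, Nat.abs_cast, le_refl]
        · rw [abs_zero]
          positivity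
    _ ≤ ∑ T ∈ S.powerset, ∏ p ∈ T, (p : ℝ)⁻¹ :=
        Finset.sum_le_sum_of_subset_of_nonneg (Finset.filter_subset _ _) fun T _ _ => by positivity
    _ = ∏ p ∈ S, (1 + (p : ℝ)⁻¹) := (Finset.prod_one_add _).symm
    _ ≤ invDensity S := Finset.prod_le_prod (fun p _ => by positivity) fun p hp =>
        (add_le_add_iff_left 1).2 (inv_le_primeWeight (hS p hp))

lemma ramanujanBounded_brunSieve {z : ℕ} (hz : 1 ≤ z) (hSz : ∀ p ∈ S, p ≤ z) (r : ℕ) :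
    RamanujanBounded S (z ^ (2 * r)) (invDensity S) (brunSieve S r) := by
  refine ⟨brunCoeff S r, fun U _ => abs_brunCoeff_le hS r U, fun U _ hU => ?_,
    brunSieve_eq_sum hS r⟩
  obtain ⟨hUS, hcard⟩ := mem_brunSupport.1 (not_imp_comm.1 brunCoeff_eq_zero hU)
  exact (Finset.prod_le_pow_card U _ z fun p hp => hSz p (hUS hp)).trans
    (Nat.pow_le_pow_right hz hcard)

/- Rankin's trick: each prime factor is given the weight `8`. -/
lemma sum_powersetCard_prod_inv_le (m : ℕ) :
    ∑ T ∈ S.powersetCard m, ∏ p ∈ T, (p : ℝ)⁻¹ ≤ ((8 : ℝ) ^ m)⁻¹ * invDensity S ^ 8 := by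
  rw [inv_mul_eq_div, le_div_iff₀ (by positivity)]
  calc (∑ T ∈ S.powersetCard m, ∏ p ∈ T, (p : ℝ)⁻¹) * 8 ^ m
      = ∑ T ∈ S.powersetCard m, ∏ p ∈ T, (8 * (p : ℝ)⁻¹) := by
        rw [Finset.sum_mul]
        refine Finset.sum_congr rfl fun T hT => ?_
        rw [Finset.prod_mul_distrib, Finset.prod_const, (Finset.mem_powersetCard.1 hT).2, mul_comm]
    _ ≤ ∑ T ∈ S.powerset, ∏ p ∈ T, (8 * (p : ℝ)⁻¹) :=
        Finset.sum_le_sum_of_subset_of_nonneg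
          (fun T hT => Finset.mem_powerset.2 (Finset.mem_powersetCard.1 hT).1)
          fun T _ _ => by positivity
    _ = ∏ p ∈ S, (1 + 8 * (p : ℝ)⁻¹) := (Finset.prod_one_add _).symm
    _ ≤ ∏ p ∈ S, (1 + primeWeight p) ^ 8 := by
        refine Finset.prod_le_prod (fun p _ => by positivity) fun p hp => ?_
        have hbernoulli := one_add_mul_le_pow (a := primeWeight p)
          (by linarith [primeWeight_pos (hS p hp)]) 8
        push_cast at hbernoulli
        linarith [inv_le_primeWeight (hS p hp)]
    _ = invDensity S ^ 8 := Finset.prod_pow _ _ _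

lemma sum_brunError_le (r M : ℕ) : ∑ n ∈ Finset.Ioc 0 M, brunError S r n ≤
    M * (((8 : ℝ) ^ (2 * r + 1))⁻¹ * invDensity S ^ 8) := by
  refine le_trans ?_ (mul_le_mul_of_nonneg_left (sum_powersetCard_prod_inv_le hS _) M.cast_nonneg)
  simp only [brunError]
  rw [Finset.sum_comm, Finset.mul_sum]
  refine Finset.sum_le_sum fun T hT => ?_
  have hTS := (Finset.mem_powersetCard.1 hT).1
  have hdvd : ∀ n, (∀ p ∈ T, p ∣ n) ↔ (∏ p ∈ T, p) ∣ n := fun n =>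
    ⟨Finset.prod_primes_dvd n fun p hp => (hS p (hTS hp)).prime,
      fun h p hp => (Finset.dvd_prod_of_mem _ hp).trans h⟩
  simp only [hdvd]
  rw [← Finset.sum_filter, Finset.sum_const, nsmul_eq_mul, mul_one,
    Nat.Ioc_filter_dvd_card_eq_div]
  refine Nat.cast_div_le.trans_eq ?_
  push_cast
  rw [Finset.prod_inv_distrib, div_eq_mul_inv]

end BrunSieve

section PrimeEstimates

/-- The set of primes in `(M, N]`. -/
def primesIoc (M N : ℕ) : Finset ℕ := primesUpTo N \ primesUpTo M

lemma mem_primesUpTo {N p : ℕ} : p ∈ primesUpTo N ↔ p ≤ N ∧ p.Prime := by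
  rw [primesUpTo, Finset.mem_filter, Finset.mem_range_succ_iff]

lemma mem_primesIoc {M N p : ℕ} : p ∈ primesIoc M N ↔ (M < p ∧ p ≤ N) ∧ p.Prime := by
  rw [primesIoc, Finset.mem_sdiff, mem_primesUpTo, mem_primesUpTo]
  grind

lemma prime_of_mem_primesUpTo {N : ℕ} : ∀ p ∈ primesUpTo N, p.Prime := fun _ h =>
  (mem_primesUpTo.1 h).2

lemma prime_of_mem_primesIoc {M N : ℕ} : ∀ p ∈ primesIoc M N, p.Prime := fun _ h =>
  (mem_primesIoc.1 h).2

lemma primesUpTo_mono {M N : ℕ} (h : M ≤ N) : primesUpTo M ⊆ primesUpTo N := fun p hp => by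
  rw [mem_primesUpTo] at *
  exact ⟨hp.1.trans h, hp.2⟩

lemma primeWeight_le_of_lt {M p : ℕ} (hM : 0 < M) (h : M < p) : primeWeight p ≤ (M : ℝ)⁻¹ := by
  have : (M : ℝ) + 1 ≤ p := by exact_mod_cast h
  exact inv_anti₀ (by exact_mod_cast hM) (by linarith)

lemma mul_card_primesIoc_two_pow_le (a : ℕ) :
    a * (primesIoc (2 ^ a) (2 ^ (a + 1))).card ≤ 2 ^ (a + 1) := by
  have hdouble : 2 ^ (a + 1) = 2 ^ a + 2 ^ a := by ring
  have hprod : ∏ p ∈ primesIoc (2 ^ a) (2 ^ (a + 1)), p ≤ 2 ^ 2 ^ (a + 1) := by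
    refine Nat.le_of_mul_le_mul_right ?_ (primorial_pos (2 ^ a))
    calc (∏ p ∈ primesIoc (2 ^ a) (2 ^ (a + 1)), p) * primorial (2 ^ a)
        = primorial (2 ^ (a + 1)) :=
          Finset.prod_sdiff (primesUpTo_mono (Nat.pow_le_pow_right two_pos a.le_succ))
      _ ≤ primorial (2 ^ a) * (2 ^ (a + 1)).choose (2 ^ a) := hdouble ▸ primorial_add_le le_rfl
      _ ≤ 2 ^ 2 ^ (a + 1) * primorial (2 ^ a) := by
          rw [mul_comm]
          exact Nat.mul_le_mul_right _ (Nat.choose_le_two_pow _ _)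
  have hpow := (Finset.pow_card_le_prod _ _ _ fun p hp => (mem_primesIoc.1 hp).1.1.le).trans hprod
  rw [← pow_mul] at hpow
  exact (Nat.pow_le_pow_iff_right one_lt_two).1 hpow

lemma invDensity_primesUpTo_two_pow_succ_le {a : ℕ} (ha : 0 < a) :
    invDensity (primesUpTo (2 ^ (a + 1))) ≤
      invDensity (primesUpTo (2 ^ a)) * Real.exp (2 * (a : ℝ)⁻¹) := by
  have hcard : ((primesIoc (2 ^ a) (2 ^ (a + 1))).card : ℝ) * ((2 : ℝ) ^ a)⁻¹ ≤
      2 * (a : ℝ)⁻¹ := by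
    have h : (a : ℝ) * (primesIoc (2 ^ a) (2 ^ (a + 1))).card ≤ 2 ^ a * 2 := by
      exact_mod_cast mul_card_primesIoc_two_pow_le a
    have ha' : (0 : ℝ) < a := by exact_mod_cast ha
    rw [mul_inv_le_iff₀ (by positivity), ← div_eq_mul_inv, div_mul_eq_mul_div, le_div_iff₀ ha']
    linarith
  rw [invDensity, ← Finset.prod_sdiff (primesUpTo_mono (Nat.pow_le_pow_right two_pos a.le_succ)),
    mul_comm]
  refine mul_le_mul_of_nonneg_left ?_
    (zero_le_one.trans (one_le_invDensity prime_of_mem_primesUpTo))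
  calc ∏ p ∈ primesIoc (2 ^ a) (2 ^ (a + 1)), (1 + primeWeight p)
      ≤ ∏ _ ∈ primesIoc (2 ^ a) (2 ^ (a + 1)), Real.exp (((2 : ℝ) ^ a)⁻¹) := by
        refine Finset.prod_le_prod (fun p hp => ?_) fun p hp => ?_
        · linarith [primeWeight_pos (prime_of_mem_primesIoc p hp)]
        · have hle := primeWeight_le_of_lt (by positivity) (mem_primesIoc.1 hp).1.1
          push_cast at hle
          linarith [Real.add_one_le_exp (((2 : ℝ) ^ a)⁻¹)]
    _ = Real.exp ((primesIoc (2 ^ a) (2 ^ (a + 1))).card * ((2 : ℝ) ^ a)⁻¹) := by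
        rw [Finset.prod_const, ← Real.exp_nat_mul]
    _ ≤ Real.exp (2 * (a : ℝ)⁻¹) := Real.exp_le_exp.2 hcard

lemma invDensity_primesUpTo_le_exp_harmonic (a : ℕ) :
    invDensity (primesUpTo (2 ^ (a + 1))) ≤ 2 * Real.exp (2 * (harmonic a : ℝ)) := by
  induction a with
  | zero =>
    have hprimes : primesUpTo (2 ^ (0 + 1)) = {2} := by decide
    rw [hprimes, invDensity, Finset.prod_singleton, primeWeight]
    norm_num
  | succ a ih =>
    refine (invDensity_primesUpTo_two_pow_succ_le a.succ_pos).trans ?_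
    rw [harmonic_succ, Rat.cast_add, mul_add, Real.exp_add, ← mul_assoc]
    push_cast
    exact mul_le_mul_of_nonneg_right ih (Real.exp_pos _).le

lemma invDensity_primesUpTo_two_pow_le {a : ℕ} (ha : 1 ≤ a) :
    invDensity (primesUpTo (2 ^ a)) ≤ 16 * (a : ℝ) ^ 2 := by
  obtain ⟨b, rfl⟩ := Nat.exists_eq_add_of_le' ha
  have hharmonic : (harmonic b : ℝ) ≤ 1 + Real.log (b + 1 : ℕ) := by
    refine le_trans ?_ (harmonic_le_one_add_log (b + 1))
    rw [harmonic_succ]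
    push_cast
    exact le_add_of_nonneg_right (by positivity)
  calc _ ≤ 2 * Real.exp (2 * (harmonic b : ℝ)) := invDensity_primesUpTo_le_exp_harmonic b
    _ ≤ 2 * Real.exp ((2 : ℕ) * (1 + Real.log (b + 1 : ℕ))) := by
        push_cast at hharmonic ⊢
        gcongr
    _ = 2 * (Real.exp 1 ^ 2 * ((b + 1 : ℕ) : ℝ) ^ 2) := by
        rw [Real.exp_nat_mul, Real.exp_add, Real.exp_log (by positivity), mul_pow]
    _ ≤ 2 * (8 * ((b + 1 : ℕ) : ℝ) ^ 2) := by
        gcongr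
        nlinarith [Real.exp_one_lt_d9, Real.exp_pos 1]
    _ = 16 * ((b + 1 : ℕ) : ℝ) ^ 2 := by ring

lemma sum_comp_le_sum_of_injOn {ι κ : Type*} {s : Finset ι} {t : Finset κ}
    {e : ι → κ} (hmaps : ∀ i ∈ s, e i ∈ t) (hinj : Set.InjOn e s) {f : κ → ℝ}
    (hf : ∀ k ∈ t, 0 ≤ f k) : ∑ i ∈ s, f (e i) ≤ ∑ k ∈ t, f k := by
  classical
  rw [← Finset.sum_image hinj]
  exact Finset.sum_le_sum_of_subset_of_nonneg (Finset.image_subset_iff.2 hmaps)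
    fun k hk _ => hf k hk

lemma div_two_le_harmonic_two_pow (b : ℕ) : (b : ℝ) / 2 ≤ (harmonic (2 ^ b) : ℝ) := by
  have hlog : Real.log ((2 : ℝ) ^ b) ≤ Real.log ((2 ^ b + 1 : ℕ) : ℝ) :=
    Real.log_le_log (by positivity) (by push_cast; linarith)
  rw [Real.log_pow] at hlog
  have : (b : ℝ) * (1 / 2) ≤ b * Real.log 2 :=
    mul_le_mul_of_nonneg_left (by linarith [Real.log_two_gt_d9]) b.cast_nonneg
  linarith [log_add_one_le_harmonic (2 ^ b)]

lemma sum_Icc_inv_sq_le_two (R : ℕ) : ∑ m ∈ Finset.Icc 1 R, ((m : ℝ) ^ 2)⁻¹ ≤ 2 := by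
  have h := sum_Ioo_inv_sq_le (α := ℝ) 0 (R + 1)
  rw [Nat.cast_zero, zero_add, div_one] at h
  exact h

lemma exists_mem_sieveSupport_sq_mul_prod {n R : ℕ} (hn : n ∈ Finset.Icc 1 R) :
    ∃ z ∈ sieveSupport (primesUpTo R) R ×ˢ Finset.Icc 1 R, z.2 ^ 2 * ∏ p ∈ z.1, p = n := by
  obtain ⟨q, m, rfl, hq⟩ := Nat.sq_mul_squarefree n
  rw [Finset.mem_Icc, Nat.one_le_iff_ne_zero, mul_ne_zero_iff, pow_ne_zero_iff two_ne_zero] at hn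
  obtain ⟨⟨hm, hq0⟩, hR⟩ := hn
  have hqR : q ≤ R := (Nat.le_mul_of_pos_left q (by positivity)).trans hR
  have hmR : m ≤ R := (Nat.le_self_pow two_ne_zero m).trans
    ((Nat.le_mul_of_pos_right _ (Nat.pos_of_ne_zero hq0)).trans hR)
  refine ⟨(q.primeFactors, m), ?_, by rw [Nat.prod_primeFactors_of_squarefree hq]⟩
  rw [Finset.mem_product, Finset.mem_Icc, mem_sieveSupport,
    Nat.prod_primeFactors_of_squarefree hq]
  exact ⟨⟨fun p hp => mem_primesUpTo.2 ⟨(Nat.le_of_mem_primeFactors hp).trans hqR,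
    Nat.prime_of_mem_primeFactors hp⟩, hqR⟩, Nat.pos_of_ne_zero hm, hmR⟩

lemma harmonic_le_two_mul_selbergSum (R : ℕ) :
    (harmonic R : ℝ) ≤ 2 * selbergSum (primesUpTo R) R := by
  choose! φ hmem hφ using fun n (hn : n ∈ Finset.Icc 1 R) =>
    exists_mem_sieveSupport_sq_mul_prod hn
  have hinj : Set.InjOn φ (Finset.Icc 1 R : Finset ℕ) := fun n hn n' hn' h => by
    rw [← hφ n hn, ← hφ n' hn', h]
  have hnonneg : ∀ W ∈ sieveSupport (primesUpTo R) R, 0 ≤ ∏ p ∈ W, primeWeight p := fun W hW =>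
    prod_primeWeight_nonneg_of_mem_sieveSupport prime_of_mem_primesUpTo hW
  calc (harmonic R : ℝ) = ∑ n ∈ Finset.Icc 1 R, (n : ℝ)⁻¹ := by
        rw [harmonic_eq_sum_Icc]
        push_cast
        rfl
    _ ≤ ∑ n ∈ Finset.Icc 1 R, (∏ p ∈ (φ n).1, primeWeight p) * (((φ n).2 : ℝ) ^ 2)⁻¹ := by
        refine Finset.sum_le_sum fun n hn => ?_
        have hsupp := (mem_sieveSupport.1 (Finset.mem_product.1 (hmem n hn)).1).1
        conv_lhs => rw [← hφ n hn]
        push_cast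
        rw [mul_inv_rev, ← Finset.prod_inv_distrib]
        gcongr with p hp
        exact inv_le_primeWeight (prime_of_mem_primesUpTo p (hsupp hp))
    _ ≤ ∑ z ∈ sieveSupport (primesUpTo R) R ×ˢ Finset.Icc 1 R,
          (∏ p ∈ z.1, primeWeight p) * ((z.2 : ℝ) ^ 2)⁻¹ :=
        sum_comp_le_sum_of_injOn
          (f := fun z => (∏ p ∈ z.1, primeWeight p) * ((z.2 : ℝ) ^ 2)⁻¹) hmem hinj fun z hz =>
          mul_nonneg (hnonneg z.1 (Finset.mem_product.1 hz).1) (by positivity)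
    _ = selbergSum (primesUpTo R) R * ∑ m ∈ Finset.Icc 1 R, ((m : ℝ) ^ 2)⁻¹ := by
        rw [Finset.sum_product, selbergSum, Finset.sum_mul_sum]
    _ ≤ 2 * selbergSum (primesUpTo R) R := by
        rw [mul_comm]
        exact mul_le_mul_of_nonneg_right (sum_Icc_inv_sq_le_two R) (Finset.sum_nonneg hnonneg)

lemma selbergSum_le_invDensity_mul_selbergSum {P S : Finset ℕ} (hP : ∀ p ∈ P, p.Prime)
    (hS : ∀ p ∈ S, p.Prime) (R : ℕ) :
    selbergSum S R ≤ invDensity P * selbergSum (S \ P) R := by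
  have hinj : Set.InjOn (fun T => (T ∩ P, T \ P)) (sieveSupport S R : Set (Finset ℕ)) :=
    fun T _ T' _ h => by
      rw [Prod.mk.injEq] at h
      rw [← Finset.sdiff_union_inter T P, ← Finset.sdiff_union_inter T' P, h.1, h.2]
  calc selbergSum S R
      = ∑ T ∈ sieveSupport S R,
          (∏ p ∈ T ∩ P, primeWeight p) * ∏ p ∈ T \ P, primeWeight p :=
        Finset.sum_congr rfl fun T _ => (Finset.prod_inter_mul_prod_sdiff T P _).symm
    _ ≤ ∑ z ∈ P.powerset ×ˢ sieveSupport (S \ P) R,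
          (∏ p ∈ z.1, primeWeight p) * ∏ p ∈ z.2, primeWeight p := by
        refine sum_comp_le_sum_of_injOn (e := fun T => (T ∩ P, T \ P))
          (f := fun z => (∏ p ∈ z.1, primeWeight p) * ∏ p ∈ z.2, primeWeight p)
          (fun T hT => ?_) hinj fun z hz => ?_
        · have hsdiff := mem_sieveSupport_of_subset hS hT (Finset.sdiff_subset (t := P))
          rw [Finset.mem_product, Finset.mem_powerset, mem_sieveSupport]
          exact ⟨Finset.inter_subset_right, Finset.sdiff_subset_sdiff (mem_sieveSupport.1 hT).1
            le_rfl, (mem_sieveSupport.1 hsdiff).2⟩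
        · obtain ⟨hz1, hz2⟩ := Finset.mem_product.1 hz
          exact mul_nonneg
            (prod_primeWeight_nonneg fun p hp => hP p (Finset.mem_powerset.1 hz1 hp))
            (prod_primeWeight_nonneg_of_mem_sieveSupport
              (fun p hp => hS p (Finset.sdiff_subset hp)) hz2)
    _ = invDensity P * selbergSum (S \ P) R := by
        rw [Finset.sum_product, invDensity, Finset.prod_one_add, selbergSum, Finset.sum_mul_sum]

lemma div_four_le_invDensity_mul_selbergSum (M b : ℕ) :
    (b : ℝ) / 4 ≤
      invDensity (primesUpTo M) * selbergSum (primesIoc M (2 ^ b)) (2 ^ b) := by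
  calc (b : ℝ) / 4 ≤ selbergSum (primesUpTo (2 ^ b)) (2 ^ b) := by
        linarith [div_two_le_harmonic_two_pow b, harmonic_le_two_mul_selbergSum (2 ^ b)]
    _ ≤ invDensity (primesUpTo M) * selbergSum (primesIoc M (2 ^ b)) (2 ^ b) :=
        selbergSum_le_invDensity_mul_selbergSum prime_of_mem_primesUpTo prime_of_mem_primesUpTo _

end PrimeEstimates

section FejerComparison

variable {X : Type u}

/-- The number of representations of `n` as `L + t - s` with `0 ≤ s, t < L`: the Fejér kernel
`max (L - |L - n|) 0`. -/
def fejerMultiplicity (L n : ℕ) : ℕ :=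
  ((Finset.range L ×ˢ Finset.range L).filter fun z => z.2 + L - z.1 = n).card

lemma fejerMultiplicity_le (L n : ℕ) : fejerMultiplicity L n ≤ L := by
  conv_rhs => rw [← Finset.card_range L]
  refine Finset.card_le_card_of_injOn Prod.fst (fun z hz => ?_) fun z hz z' hz' h => ?_
  · rw [Finset.mem_coe, Finset.mem_filter, Finset.mem_product] at hz
    exact hz.1.1
  · simp only [Finset.mem_coe, Finset.mem_filter, Finset.mem_product, Finset.mem_range] at hz hz'
    exact Prod.ext h (by omega)

lemma le_fejerMultiplicity {L n : ℕ} (h : n ≤ L) : n ≤ fejerMultiplicity L n := by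
  conv_lhs => rw [← Finset.card_range n]
  refine Finset.card_le_card_of_injOn (fun t => (L - n + t, t)) (fun t ht => ?_)
    fun t _ t' _ htt' => (Prod.mk.inj htt').2
  simp only [Finset.mem_coe, Finset.mem_filter, Finset.mem_product, Finset.mem_range] at ht ⊢
  omega

variable (T : X → X) (L : ℕ) (f : X → ℝ) (x : X)

lemma fejerAvg_eq_sum_Ioc (k : ℕ → ℝ) : fejerAvg T k L f x =
    ((L : ℝ) ^ 2)⁻¹ * ∑ n ∈ Finset.Ioc 0 (2 * L),
      (fejerMultiplicity L n : ℝ) * (k n * f (T^[n] x)) := by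
  have hmaps : ∀ z ∈ Finset.range L ×ˢ Finset.range L,
      z.2 + L - z.1 ∈ Finset.Ioc 0 (2 * L) := fun z hz => by
    rw [Finset.mem_product, Finset.mem_range, Finset.mem_range] at hz
    rw [Finset.mem_Ioc]
    omega
  rw [fejerAvg, ← Finset.sum_product' (f := fun s t => k (t + L - s) * f (T^[t + L - s] x)),
    ← Finset.sum_fiberwise_of_maps_to hmaps]
  refine congrArg _ (Finset.sum_congr rfl fun n _ => ?_)
  rw [Finset.sum_congr rfl fun z hz => by rw [(Finset.mem_filter.1 hz).2], Finset.sum_const,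
    nsmul_eq_mul, fejerMultiplicity]

lemma fejerAvg_add (k k' : ℕ → ℝ) :
    fejerAvg T (fun n => k n + k' n) L f x = fejerAvg T k L f x + fejerAvg T k' L f x := by
  simp only [fejerAvg, add_mul, Finset.sum_add_distrib, mul_add]

lemma fejerAvg_sum {ι : Type*} (I : Finset ι) (k : ι → ℕ → ℝ) :
    fejerAvg T (fun n => ∑ i ∈ I, k i n) L f x = ∑ i ∈ I, fejerAvg T (k i) L f x := by
  classical
  induction I using Finset.induction_on with
  | empty => simp [fejerAvg]
  | insert i I hi ih =>
    simp only [Finset.sum_insert hi]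
    rw [fejerAvg_add, ih]

variable {T L f x} (hf : ∀ x, 0 ≤ f x) {k : ℕ → ℝ}

include hf

lemma fejerAvg_mono {k' : ℕ → ℝ} (h : ∀ n, k n ≤ k' n) :
    fejerAvg T k L f x ≤ fejerAvg T k' L f x := by
  rw [fejerAvg, fejerAvg]
  gcongr
  · exact hf _
  · exact h _

lemma fejerAvg_le_inv_mul_sum (hk : ∀ n, 0 ≤ k n) :
    fejerAvg T k L f x ≤ (L : ℝ)⁻¹ * ∑ n ∈ Finset.Ioc 0 (2 * L), k n * f (T^[n] x) := by
  have hinv : (L : ℝ)⁻¹ = ((L : ℝ) ^ 2)⁻¹ * L := by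
    rcases eq_or_ne (L : ℝ) 0 with hL | hL
    · simp [hL]
    · field_simp
  rw [fejerAvg_eq_sum_Ioc, hinv, mul_assoc]
  refine mul_le_mul_of_nonneg_left ?_ (by positivity)
  rw [Finset.mul_sum]
  gcongr with n
  · exact mul_nonneg (hk n) (hf _)
  · exact fejerMultiplicity_le L n

variable {t : ℝ} (ht : 0 ≤ t) (hx : x ∉ maximalSet T f t)

include ht hx

lemma fejerAvg_le_of_notMem_maximalSet {V : ℝ} (hV : 0 ≤ V) (hk0 : ∀ n, 0 ≤ k n)
    (hkV : ∀ n, k n ≤ V) (hL : 0 < L) : fejerAvg T k L f x ≤ V * (3 * t) := by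
  have hL' : (1 : ℝ) ≤ L := by exact_mod_cast hL
  have hsub : Finset.Ioc 0 (2 * L) ⊆ Finset.range (2 * L + 1) := fun n hn =>
    Finset.mem_range_succ_iff.2 (Finset.mem_Ioc.1 hn).2
  refine (fejerAvg_le_inv_mul_sum hf hk0).trans ((inv_mul_le_iff₀ (by linarith)).2 ?_)
  calc ∑ n ∈ Finset.Ioc 0 (2 * L), k n * f (T^[n] x)
      ≤ ∑ n ∈ Finset.Ioc 0 (2 * L), V * f (T^[n] x) :=
        Finset.sum_le_sum fun n _ => mul_le_mul_of_nonneg_right (hkV n) (hf _)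
    _ ≤ ∑ n ∈ Finset.range (2 * L + 1), V * f (T^[n] x) :=
        Finset.sum_le_sum_of_subset_of_nonneg hsub fun n _ _ => mul_nonneg hV (hf _)
    _ = V * ∑ n ∈ Finset.range (2 * L + 1), f (T^[n] x) := by rw [Finset.mul_sum]
    _ ≤ V * (t * (2 * L + 1 : ℕ)) :=
        mul_le_mul_of_nonneg_left (sum_iterate_le_of_notMem_maximalSet hx _) hV
    _ ≤ L * (V * (3 * t)) := by
        push_cast
        nlinarith [mul_nonneg hV ht]

end FejerComparison

section DyadicReduction

variable {X : Type u}

/-- The average of `f` along the primes in `(2 ^ (j - 1), 2 ^ j]`, normalised by `j / 2 ^ j` instead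
of the number of these primes. For `j = 0` it vanishes. -/
noncomputable def dyadicPrimeAvg (T : X → X) (f : X → ℝ) (j : ℕ) (x : X) : ℝ :=
  ((j : ℝ) / 2 ^ j) * ∑ p ∈ primesIoc (2 ^ (j - 1)) (2 ^ j), f (T^[p] x)

lemma sum_Icc_two_pow_div_le {k : ℕ} (hk : 1 ≤ k) :
    ∑ j ∈ Finset.Icc 1 k, (2 : ℝ) ^ j / j ≤ 4 * (2 ^ k / k) := by
  induction k, hk using Nat.le_induction with
  | base => norm_num
  | succ k hk ih =>
    rw [Finset.sum_Icc_succ_top (by omega)]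
    rcases Nat.lt_or_ge k 2 with h | h
    · interval_cases k
      norm_num [Finset.sum_Icc_succ_top]
    · have hk2 : (2 : ℝ) ≤ k := by exact_mod_cast h
      have hstep : 4 * ((2 : ℝ) ^ k / k) ≤ 3 * (2 ^ (k + 1) / ((k + 1 : ℕ) : ℝ)) := by
        push_cast
        rw [← mul_div_assoc, ← mul_div_assoc, div_le_div_iff₀ (by linarith) (by linarith), pow_succ]
        nlinarith [pow_pos (two_pos (α := ℝ)) k]
      linarith

lemma two_mul_succ_le_two_pow {m : ℕ} (hm : 3 ≤ m) : 2 * (m + 1) ≤ 2 ^ m := by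
  induction m, hm using Nat.le_induction with
  | base => norm_num
  | succ n hn ih =>
    rw [pow_succ]
    omega

lemma two_pow_div_le_card_primesUpTo {m : ℕ} (hm : 1 ≤ m) :
    (2 : ℝ) ^ m / (2 * m) ≤ (primesUpTo (2 ^ m)).card := by
  rcases Nat.lt_or_ge m 3 with h | h
  · interval_cases m
    · rw [show (primesUpTo (2 ^ 1)).card = 1 by decide]
      norm_num
    · rw [show (primesUpTo (2 ^ 2)).card = 2 by decide]
      norm_num
  · have hlog2 : 0 < Real.log 2 := Real.log_pos one_lt_two
    have hm0 : (0 : ℝ) < m := by exact_mod_cast hm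
    have hlog : Real.log ((2 : ℝ) ^ m + 1) ≤ (m + 1) * Real.log 2 := by
      have hle : (2 : ℝ) ^ m + 1 ≤ 2 ^ (m + 1) := by
        rw [pow_succ]
        linarith [one_le_pow₀ (one_le_two (α := ℝ)) (n := m)]
      calc Real.log ((2 : ℝ) ^ m + 1) ≤ Real.log (2 ^ (m + 1)) :=
            Real.log_le_log (by positivity) hle
        _ = (m + 1) * Real.log 2 := by
            rw [Real.log_pow]
            push_cast
            rfl
    have hpow : 2 * ((m : ℝ) + 1) ≤ 2 ^ m := by exact_mod_cast two_mul_succ_le_two_pow h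
    have hpi := Chebyshev.pi_ge (2 ^ m)
    rw [Nat.primeCounting, ← Nat.primesBelow_card_eq_primeCounting'] at hpi
    refine le_trans ?_ hpi
    push_cast
    rw [Real.log_pow, div_le_div_iff₀ (by positivity) (by positivity)]
    have hmain : (2 : ℝ) ^ m * Real.log 2 ≤ 2 * (2 ^ m * Real.log 2 - Real.log (2 ^ m + 1)) := by
      nlinarith
    linarith [mul_le_mul_of_nonneg_right hmain hm0.le]

lemma clog_mem_Icc {m p : ℕ} (hp : 1 < p) (hpm : p ≤ 2 ^ m) :
    Nat.clog 2 p ∈ Finset.Icc 1 m :=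
  Finset.mem_Icc.2 ⟨Nat.clog_pos one_lt_two hp, Nat.clog_le_of_le_pow hpm⟩

lemma mem_primesIoc_clog {p : ℕ} (hp : p.Prime) :
    p ∈ primesIoc (2 ^ (Nat.clog 2 p - 1)) (2 ^ Nat.clog 2 p) :=
  mem_primesIoc.2 ⟨⟨Nat.pow_pred_clog_lt_self one_lt_two hp.one_lt, Nat.le_pow_clog one_lt_two p⟩,
    hp⟩

variable {T : X → X} {f : X → ℝ} (hf : ∀ x, 0 ≤ f x) {x : X}

include hf

lemma dyadicPrimeAvg_le_fejerAvg {k : ℕ → ℝ} {L j : ℕ} (hj : 1 ≤ j) (hL : 2 ^ j ≤ L)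
    (hL' : L ≤ 2 ^ (j + 1)) (hk : ∀ n, 0 ≤ k n)
    (hp : ∀ p ∈ primesIoc (2 ^ (j - 1)) (2 ^ j), (j : ℝ) / 128 ≤ k p) :
    dyadicPrimeAvg T f j x ≤ 1024 * fejerAvg T k L f x := by
  have hL0 : (0 : ℝ) < L := by exact_mod_cast (Nat.two_pow_pos j).trans_le hL
  have hLpow : (L : ℝ) ≤ 2 ^ (j + 1) := by exact_mod_cast hL'
  have hscale : (j : ℝ) / 2 ^ j ≤ 1024 * ((L : ℝ) ^ 2)⁻¹ * (2 ^ (j - 1) * ((j : ℝ) / 128)) := by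
    obtain ⟨i, rfl⟩ := Nat.exists_eq_add_of_le' hj
    calc ((i + 1 : ℕ) : ℝ) / 2 ^ (i + 1)
        = 1024 * (((2 : ℝ) ^ (i + 1 + 1)) ^ 2)⁻¹ * (2 ^ i * (((i + 1 : ℕ) : ℝ) / 128)) := by
          rw [pow_succ, pow_succ]
          field_simp
          ring
      _ ≤ _ := by
          rw [Nat.add_sub_cancel]
          gcongr
  have hsub : primesIoc (2 ^ (j - 1)) (2 ^ j) ⊆ Finset.Ioc 0 (2 * L) := fun p hp => by
    have := mem_primesIoc.1 hp
    exact Finset.mem_Ioc.2 ⟨this.2.pos, by omega⟩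
  have hsum : ∑ p ∈ primesIoc (2 ^ (j - 1)) (2 ^ j), 2 ^ (j - 1) * ((j : ℝ) / 128 * f (T^[p] x)) ≤
      ∑ n ∈ Finset.Ioc 0 (2 * L), (fejerMultiplicity L n : ℝ) * (k n * f (T^[n] x)) := by
    refine (Finset.sum_le_sum fun p hpI => ?_).trans (Finset.sum_le_sum_of_subset_of_nonneg hsub
      fun n _ _ => mul_nonneg (Nat.cast_nonneg _) (mul_nonneg (hk n) (hf _)))
    have hpj := (mem_primesIoc.1 hpI).1
    have hmult : 2 ^ (j - 1) ≤ fejerMultiplicity L p :=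
      hpj.1.le.trans (le_fejerMultiplicity (hpj.2.trans hL))
    have hfp := hf (T^[p] x)
    gcongr
    · exact_mod_cast hmult
    · exact hp p hpI
  calc dyadicPrimeAvg T f j x
      ≤ 1024 * ((L : ℝ) ^ 2)⁻¹ * (2 ^ (j - 1) * ((j : ℝ) / 128)) *
          ∑ p ∈ primesIoc (2 ^ (j - 1)) (2 ^ j), f (T^[p] x) :=
        mul_le_mul_of_nonneg_right hscale (Finset.sum_nonneg fun _ _ => hf _)
    _ = 1024 * ((L : ℝ) ^ 2)⁻¹ * ∑ p ∈ primesIoc (2 ^ (j - 1)) (2 ^ j),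
          2 ^ (j - 1) * ((j : ℝ) / 128 * f (T^[p] x)) := by
        rw [← Finset.mul_sum, ← Finset.mul_sum]
        ring
    _ ≤ 1024 * fejerAvg T k L f x := by
        rw [fejerAvg_eq_sum_Ioc, mul_assoc]
        gcongr

lemma dyadicPrimeAvg_le_of_notMem_maximalSet {t : ℝ} (ht : 0 ≤ t) (hx : x ∉ maximalSet T f t)
    (j : ℕ) : dyadicPrimeAvg T f j x ≤ 2 * j * t := by
  have hsub : primesIoc (2 ^ (j - 1)) (2 ^ j) ⊆ Finset.range (2 ^ j + 1) := fun p hp =>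
    Finset.mem_range_succ_iff.2 (mem_primesIoc.1 hp).1.2
  have hsum : ∑ p ∈ primesIoc (2 ^ (j - 1)) (2 ^ j), f (T^[p] x) ≤ t * (2 ^ j + 1 : ℕ) :=
    (Finset.sum_le_sum_of_subset_of_nonneg hsub fun n _ _ => hf _).trans
      (sum_iterate_le_of_notMem_maximalSet hx _)
  refine (mul_le_mul_of_nonneg_left hsum (by positivity)).trans ?_
  have hpow : (1 : ℝ) ≤ 2 ^ j := one_le_pow₀ one_le_two
  push_cast
  rw [div_mul_eq_mul_div, div_le_iff₀ (by positivity)]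
  nlinarith [mul_nonneg (Nat.cast_nonneg (α := ℝ) j) ht]

omit hf in
lemma sum_primesIoc_le_of_dyadicPrimeAvg_le {t : ℝ} {j : ℕ} (hj : 1 ≤ j)
    (h : dyadicPrimeAvg T f j x ≤ t) :
    ∑ p ∈ primesIoc (2 ^ (j - 1)) (2 ^ j), f (T^[p] x) ≤ t * (2 ^ j / j) := by
  have hj0 : (0 : ℝ) < j := by exact_mod_cast hj
  rw [dyadicPrimeAvg, div_mul_eq_mul_div, div_le_iff₀ (by positivity)] at h
  rw [← mul_div_assoc, le_div_iff₀ hj0]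
  linarith

lemma sum_primesUpTo_le_of_dyadicPrimeAvg_le {t : ℝ} {N m : ℕ} (hN : N ≤ 2 ^ m)
    (h : ∀ j, 1 ≤ j → dyadicPrimeAvg T f j x ≤ t) :
    ∑ p ∈ primesUpTo N, f (T^[p] x) ≤ t * ∑ j ∈ Finset.Icc 1 m, (2 : ℝ) ^ j / j := by
  have hmaps : ∀ p ∈ primesUpTo N, Nat.clog 2 p ∈ Finset.Icc 1 m := fun p hp =>
    clog_mem_Icc (mem_primesUpTo.1 hp).2.one_lt ((mem_primesUpTo.1 hp).1.trans hN)
  rw [← Finset.sum_fiberwise_of_maps_to hmaps, Finset.mul_sum]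
  refine Finset.sum_le_sum fun j hj => le_trans ?_
    (sum_primesIoc_le_of_dyadicPrimeAvg_le (Finset.mem_Icc.1 hj).1 (h j (Finset.mem_Icc.1 hj).1))
  refine Finset.sum_le_sum_of_subset_of_nonneg (fun p hp => ?_) fun _ _ _ => hf _
  obtain ⟨hpN, hclog⟩ := Finset.mem_filter.1 hp
  exact hclog ▸ mem_primesIoc_clog (mem_primesUpTo.1 hpN).2

lemma ergAvg_le_of_dyadicPrimeAvg_le {t : ℝ} (ht : 0 ≤ t)
    (h : ∀ j, 1 ≤ j → dyadicPrimeAvg T f j x ≤ t) {N : ℕ} (hN : 2 ≤ N) :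
    ergAvg T f N x ≤ 16 * t := by
  set m := Nat.log 2 N
  have hm : 1 ≤ m := Nat.log_pos one_lt_two hN
  have : (1 : ℝ) ≤ m := by exact_mod_cast hm
  have hcard : (2 : ℝ) ^ m / (2 * m) ≤ (primesUpTo N).card :=
    (two_pow_div_le_card_primesUpTo hm).trans (by
      exact_mod_cast Finset.card_le_card (primesUpTo_mono (Nat.pow_log_le_self 2 (by omega))))
  have hscale : 4 * ((2 : ℝ) ^ (m + 1) / ((m + 1 : ℕ) : ℝ)) ≤ 16 * (2 ^ m / (2 * m)) := by
    push_cast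
    rw [← mul_div_assoc, ← mul_div_assoc, div_le_div_iff₀ (by positivity) (by positivity), pow_succ]
    nlinarith [pow_pos (two_pos (α := ℝ)) m]
  rw [ergAvg, inv_mul_le_iff₀ (lt_of_lt_of_le (by positivity) hcard)]
  calc ∑ p ∈ primesUpTo N, f (T^[p] x)
      ≤ t * ∑ j ∈ Finset.Icc 1 (m + 1), (2 : ℝ) ^ j / j :=
        sum_primesUpTo_le_of_dyadicPrimeAvg_le hf (Nat.lt_pow_succ_log_self one_lt_two N).le h
    _ ≤ t * (4 * (2 ^ (m + 1) / ((m + 1 : ℕ) : ℝ))) :=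
        mul_le_mul_of_nonneg_left (sum_Icc_two_pow_div_le m.succ_pos) ht
    _ ≤ t * (16 * (2 ^ m / (2 * m))) := mul_le_mul_of_nonneg_left hscale ht
    _ ≤ t * (16 * (primesUpTo N).card) := by gcongr
    _ = (primesUpTo N).card * (16 * t) := by ring

end DyadicReduction

section PeriodicKernels

lemma sum_range_mul (F : ℕ → ℝ) (L J : ℕ) :
    ∑ s ∈ Finset.range (L * J), F s =
      ∑ i ∈ Finset.range J, ∑ s ∈ Finset.range L, F (L * i + s) := by
  induction J with
  | zero => simp
  | succ J ih => rw [Nat.mul_succ, Finset.sum_range_add, ih, Finset.sum_range_succ]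

variable {X : Type*} (T : X → X) {k : ℕ → ℝ} {L : ℕ}

lemma sum_sum_block_eq (hk : Function.Periodic k L) {J i i' : ℕ} (hi : i < J) (f : X → ℝ) (x : X) :
    ∑ s ∈ Finset.range L, ∑ t ∈ Finset.range L,
        k (L * i' + t + L * J - (L * i + s)) *
          f (T^[L * i' + t + L * J - (L * i + s)] (T^[L] x)) =
      ∑ s ∈ Finset.range L, ∑ t ∈ Finset.range L,
        k (t + L - s) * f (T^[t + L - s] ((T^[L])^[i' + J - i] x)) := by
  refine Finset.sum_congr rfl fun s hs => Finset.sum_congr rfl fun t _ => ?_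
  have hsL := Finset.mem_range.1 hs
  obtain ⟨d, rfl⟩ : ∃ d, J = i + 1 + d := Nat.exists_eq_add_of_le hi
  have hexp : L * i' + t + L * (i + 1 + d) - (L * i + s) = t + L - s + (i' + d) * L := by
    have : L * i' + t + L * (i + 1 + d) = t + L + (i' + d) * L + L * i := by ring
    omega
  have hiter : t + L - s + (i' + d) * L + L = t + L - s + L * (i' + (i + 1 + d) - i) := by
    have : L * (i' + (i + 1 + d) - i) = (i' + d) * L + L := by
      rw [show i' + (i + 1 + d) - i = i' + d + 1 by omega]
      ring
    omega
  have hper : k (t + L - s + (i' + d) * L) = k (t + L - s) := hk.nat_mul (i' + d) (t + L - s)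
  rw [hexp, hper, ← Function.iterate_add_apply, hiter, ← Function.iterate_mul,
    ← Function.iterate_add_apply]

lemma fejerAvg_mul_iterate_of_periodic (hk : Function.Periodic k L) (J : ℕ) (f : X → ℝ) (x : X) :
    fejerAvg T k (L * J) f (T^[L] x) = fejerAvg T^[L] 1 J (fejerAvg T k L f) x := by
  have hblocks : ∀ i ∈ Finset.range J, ∀ i' ∈ Finset.range J,
      ∑ s ∈ Finset.range L, ∑ t ∈ Finset.range L,
        k (L * i' + t + L * J - (L * i + s)) *
          f (T^[L * i' + t + L * J - (L * i + s)] (T^[L] x)) =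
      (L : ℝ) ^ 2 * fejerAvg T k L f ((T^[L])^[i' + J - i] x) := fun i hi i' _ => by
    rw [sum_sum_block_eq T hk (Finset.mem_range.1 hi), fejerAvg, ← mul_assoc]
    rcases eq_or_ne L 0 with rfl | hL
    · simp
    · rw [mul_inv_cancel₀ (by positivity), one_mul]
  have hsum : ∑ s ∈ Finset.range (L * J), ∑ t ∈ Finset.range (L * J),
        k (t + L * J - s) * f (T^[t + L * J - s] (T^[L] x)) =
      ∑ i ∈ Finset.range J, ∑ i' ∈ Finset.range J,
        (L : ℝ) ^ 2 * fejerAvg T k L f ((T^[L])^[i' + J - i] x) := by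
    simp only [sum_range_mul]
    refine Finset.sum_congr rfl fun i hi => ?_
    rw [Finset.sum_comm]
    exact Finset.sum_congr rfl fun i' hi' => hblocks i hi i' hi'
  rw [fejerAvg, hsum]
  conv_rhs => rw [fejerAvg]
  simp only [← Finset.mul_sum, Pi.one_apply, one_mul]
  rw [← mul_assoc]
  rcases eq_or_ne L 0 with rfl | hL
  · simp [fejerAvg]
  · push_cast
    field_simp

lemma abs_fejerAvg_one_le_of_notMem_maximalSet {g : X → ℝ} {t : ℝ} (ht : 0 ≤ t) {x : X}
    (hx : x ∉ maximalSet T (fun y => g y ^ 2) (t ^ 2 / 6)) (J : ℕ) :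
    |fejerAvg T 1 J g x| ≤ t := by
  rcases Nat.eq_zero_or_pos J with rfl | hJ
  · simpa [fejerAvg] using ht
  have hJ1 : (1 : ℝ) ≤ J := by exact_mod_cast hJ
  have habs : |fejerAvg T 1 J g x| ≤ fejerAvg T 1 J (fun y => |g y|) x := by
    rw [fejerAvg, fejerAvg, abs_mul, abs_of_nonneg (by positivity : (0 : ℝ) ≤ ((J : ℝ) ^ 2)⁻¹)]
    gcongr
    simp only [Pi.one_apply, one_mul]
    exact (Finset.abs_sum_le_sum_abs _ _).trans
      (Finset.sum_le_sum fun _ _ => Finset.abs_sum_le_sum_abs _ _)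
  have hsq : ∑ n ∈ Finset.Ioc 0 (2 * J), |g (T^[n] x)| ^ 2 ≤ t ^ 2 / 6 * (2 * J + 1) := by
    simp only [sq_abs]
    refine (Finset.sum_le_sum_of_subset_of_nonneg (fun n hn => ?_) fun _ _ _ => sq_nonneg _).trans
      ((sum_iterate_le_of_notMem_maximalSet hx (2 * J + 1)).trans (by push_cast; rfl))
    exact Finset.mem_range_succ_iff.2 (Finset.mem_Ioc.1 hn).2
  have hcs := sq_sum_le_card_mul_sum_sq (s := Finset.Ioc 0 (2 * J)) (f := fun n => |g (T^[n] x)|)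
  rw [Nat.card_Ioc, Nat.sub_zero, Nat.cast_mul, Nat.cast_ofNat] at hcs
  have hsum : ∑ n ∈ Finset.Ioc 0 (2 * J), |g (T^[n] x)| ≤ J * t := by
    refine (abs_le_of_sq_le_sq' (hcs.trans ?_) (by positivity)).2
    refine (mul_le_mul_of_nonneg_left hsq (by positivity)).trans ?_
    nlinarith [mul_nonneg (mul_nonneg (zero_le_one.trans hJ1) (sub_nonneg.2 hJ1)) (sq_nonneg t)]
  refine habs.trans ((fejerAvg_le_inv_mul_sum (fun _ => abs_nonneg _)
    fun _ => zero_le_one).trans ((inv_mul_le_iff₀ (by linarith)).2 ?_))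
  simpa only [Pi.one_apply, one_mul] using hsum

variable {T} [MeasurableSpace X] {μ : Measure X}

/-- By periodicity all averages over multiples of the period are averages of a single function
along `T^[L]`, so that the maximal ergodic theorem controls all of them at once. -/
theorem measure_exists_lt_abs_fejerAvg_mul_le (hT : MeasurePreserving T μ μ)
    (hk : Function.Periodic k L) {f : X → ℝ} (hf : Measurable f) {t : ℝ} (ht : 0 < t) :
    μ {x | ∃ J, t < |fejerAvg T k (L * J) f x|} ≤
      ENNReal.ofReal (6 * (t ^ 2)⁻¹) * ∫⁻ x, ENNReal.ofReal (fejerAvg T k L f x ^ 2) ∂μ := by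
  have hg := measurable_fejerAvg hT.measurable k L hf
  have hmeas : MeasurableSet {x | ∃ J, t < |fejerAvg T k (L * J) f x|} := by
    simp only [Set.ofPred_exists]
    exact MeasurableSet.iUnion fun J =>
      measurableSet_lt measurable_const (measurable_fejerAvg hT.measurable k _ hf).abs
  rw [← (hT.iterate L).measure_preimage hmeas.nullMeasurableSet]
  calc μ (T^[L] ⁻¹' {x | ∃ J, t < |fejerAvg T k (L * J) f x|})
      ≤ μ (maximalSet T^[L] (fun x => fejerAvg T k L f x ^ 2) (t ^ 2 / 6)) := by
        refine measure_mono fun x ⟨J, hJ⟩ => ?_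
        by_contra hx
        rw [fejerAvg_mul_iterate_of_periodic T hk] at hJ
        exact hJ.not_ge (abs_fejerAvg_one_le_of_notMem_maximalSet _ ht.le hx J)
    _ ≤ _ := by
        refine (measure_maximalSet_le (hT.iterate L) (hg.pow_const 2) (fun _ => sq_nonneg _)
          (by positivity)).trans (le_of_eq ?_)
        rw [inv_div, div_eq_mul_inv]

end PeriodicKernels

section WeakTypeBounds

variable {X : Type*} [MeasurableSpace X] {μ : Measure X} {T : X → X} {f : X → ℝ}

lemma eLpNorm_two_sq_eq_lintegral (f : X → ℝ) :
    eLpNorm f 2 μ ^ 2 = ∫⁻ x, ENNReal.ofReal (f x ^ 2) ∂μ := by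
  have h := eLpNorm_nnreal_pow_eq_lintegral (f := f) (μ := μ) (p := 2) two_ne_zero
  simp only [NNReal.coe_ofNat, ENNReal.coe_ofNat, ENNReal.rpow_ofNat] at h
  rw [h]
  refine lintegral_congr fun x => ?_
  rw [← ofReal_norm, ← ENNReal.ofReal_pow (norm_nonneg _), Real.norm_eq_abs, sq_abs]

lemma eLpNorm_two_sq_le (hf0 : ∀ x, 0 ≤ f x) (hf1 : ∀ x, f x ≤ 1) :
    eLpNorm f 2 μ ^ 2 ≤ ∫⁻ x, ENNReal.ofReal (f x) ∂μ := by
  rw [eLpNorm_two_sq_eq_lintegral]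
  refine lintegral_mono fun x => ENNReal.ofReal_le_ofReal ?_
  nlinarith [hf0 x, hf1 x]

lemma measure_lt_le {g : X → ℝ} (hg : Measurable g) {t : ℝ} (ht : 0 < t) :
    μ {x | t < g x} ≤ ENNReal.ofReal t⁻¹ * ∫⁻ x, ENNReal.ofReal (g x) ∂μ := by
  have hsub : {x | t < g x} ⊆ {x | ENNReal.ofReal t ≤ ENNReal.ofReal (g x)} :=
    fun x (hx : t < g x) => ENNReal.ofReal_le_ofReal hx.le
  rw [ENNReal.ofReal_inv_of_pos ht, mul_comm, ← div_eq_mul_inv]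
  exact (measure_mono hsub).trans (meas_ge_le_lintegral_div hg.ennreal_ofReal.aemeasurable
    (ENNReal.ofReal_pos.2 ht).ne' ENNReal.ofReal_ne_top)

lemma measure_lt_abs_le {g : X → ℝ} (hg : Measurable g) {t : ℝ} (ht : 0 < t) :
    μ {x | t < |g x|} ≤
      ENNReal.ofReal (t ^ 2)⁻¹ * ∫⁻ x, ENNReal.ofReal (g x ^ 2) ∂μ := by
  refine (measure_mono fun x (hx : t < |g x|) => ?_).trans
    (measure_lt_le (hg.pow_const 2) (pow_pos ht 2))
  rw [Set.mem_ofPred_eq, ← sq_abs (g x)]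
  exact pow_lt_pow_left₀ hx ht.le two_ne_zero

variable (hT : MeasurePreserving T μ μ)

include hT

lemma lintegral_fejerAvg_le (hf : Measurable f) (hf0 : ∀ x, 0 ≤ f x) {k : ℕ → ℝ}
    (hk : ∀ n, 0 ≤ k n) (L : ℕ) :
    ∫⁻ x, ENNReal.ofReal (fejerAvg T k L f x) ∂μ ≤
      ENNReal.ofReal ((L : ℝ)⁻¹ * ∑ n ∈ Finset.Ioc 0 (2 * L), k n) *
        ∫⁻ x, ENNReal.ofReal (f x) ∂μ := by
  have hmeas : ∀ n, Measurable fun x => ENNReal.ofReal (f (T^[n] x)) := fun n =>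
    (hf.comp (hT.measurable.iterate n)).ennreal_ofReal
  calc ∫⁻ x, ENNReal.ofReal (fejerAvg T k L f x) ∂μ
      ≤ ∫⁻ x, ENNReal.ofReal (L : ℝ)⁻¹ * ∑ n ∈ Finset.Ioc 0 (2 * L),
          ENNReal.ofReal (k n) * ENNReal.ofReal (f (T^[n] x)) ∂μ := by
        refine lintegral_mono fun x => (ENNReal.ofReal_le_ofReal
          (fejerAvg_le_inv_mul_sum hf0 hk)).trans (le_of_eq ?_)
        rw [ENNReal.ofReal_mul (by positivity),
          ENNReal.ofReal_sum_of_nonneg fun n _ => mul_nonneg (hk n) (hf0 _)]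
        simp only [ENNReal.ofReal_mul (hk _)]
    _ = ENNReal.ofReal (L : ℝ)⁻¹ * ∑ n ∈ Finset.Ioc 0 (2 * L),
          ENNReal.ofReal (k n) * ∫⁻ x, ENNReal.ofReal (f x) ∂μ := by
        rw [lintegral_const_mul _ (Finset.measurable_fun_sum _ fun n _ => (hmeas n).const_mul _),
          lintegral_finsetSum _ fun n _ => (hmeas n).const_mul _]
        refine congrArg _ (Finset.sum_congr rfl fun n _ => ?_)
        rw [lintegral_const_mul _ (hmeas n), (hT.iterate n).lintegral_comp hf.ennreal_ofReal]
    _ = _ := by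
        rw [← Finset.sum_mul, ← mul_assoc, ENNReal.ofReal_mul (by positivity),
          ENNReal.ofReal_sum_of_nonneg fun n _ => hk n]

lemma measure_lt_fejerAvg_le (hf : Measurable f) (hf0 : ∀ x, 0 ≤ f x) {k : ℕ → ℝ}
    (hk : ∀ n, 0 ≤ k n) (L : ℕ) {t : ℝ} (ht : 0 < t) :
    μ {x | t < fejerAvg T k L f x} ≤
      ENNReal.ofReal (t⁻¹ * ((L : ℝ)⁻¹ * ∑ n ∈ Finset.Ioc 0 (2 * L), k n)) *
        ∫⁻ x, ENNReal.ofReal (f x) ∂μ := by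
  refine (measure_lt_le (measurable_fejerAvg hT.measurable k L hf) ht).trans ?_
  rw [ENNReal.ofReal_mul (by positivity), mul_assoc]
  gcongr
  exact lintegral_fejerAvg_le hT hf hf0 hk L

variable (hf : Measurable f) (hf0 : ∀ x, 0 ≤ f x) (hf1 : ∀ x, f x ≤ 1)
  (hfin : ∫⁻ x, ENNReal.ofReal (f x) ∂μ ≠ ⊤)

include hf hf0 hf1 hfin

lemma lintegral_sq_fejerAvg_le {P : Finset ℕ} (hP : ∀ p ∈ P, p.Prime) {Y : ℕ} {K : ℝ} {k : ℕ → ℝ}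
    (hk : RamanujanBounded P Y K k) {L : ℕ} (hYL : Y ^ 4 ≤ L) :
    ∫⁻ x, ENNReal.ofReal (fejerAvg T k L f x ^ 2) ∂μ ≤
      ENNReal.ofReal (4 * K ^ 2) * ∫⁻ x, ENNReal.ofReal (f x) ∂μ := by
  have hle := eLpNorm_two_sq_le (μ := μ) hf0 hf1
  have hmem : MemLp f 2 μ := ⟨hf.aestronglyMeasurable, lt_of_not_ge fun h => by
    rw [top_le_iff.1 h] at hle
    exact hfin (top_le_iff.1 (by simpa using hle))⟩
  calc ∫⁻ x, ENNReal.ofReal (fejerAvg T k L f x ^ 2) ∂μ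
      = eLpNorm (fejerAvg T k L f) 2 μ ^ 2 := (eLpNorm_two_sq_eq_lintegral _).symm
    _ ≤ (ENNReal.ofReal (2 * K) * eLpNorm f 2 μ) ^ 2 :=
        pow_le_pow_left' (hk.eLpNorm_fejerAvg_le hP hYL hT hmem) 2
    _ = ENNReal.ofReal (4 * K ^ 2) * eLpNorm f 2 μ ^ 2 := by
        rw [mul_pow, ← ENNReal.ofReal_pow (mul_nonneg zero_le_two hk.nonneg), mul_pow]
        norm_num
    _ ≤ _ := by gcongr

lemma measure_lt_abs_fejerAvg_le {P : Finset ℕ} (hP : ∀ p ∈ P, p.Prime) {Y : ℕ} {K : ℝ}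
    {k : ℕ → ℝ} (hk : RamanujanBounded P Y K k) {L : ℕ} (hYL : Y ^ 4 ≤ L) {t : ℝ} (ht : 0 < t) :
    μ {x | t < |fejerAvg T k L f x|} ≤
      ENNReal.ofReal ((t ^ 2)⁻¹ * (4 * K ^ 2)) * ∫⁻ x, ENNReal.ofReal (f x) ∂μ := by
  refine (measure_lt_abs_le (measurable_fejerAvg hT.measurable k L hf) ht).trans ?_
  rw [ENNReal.ofReal_mul (by positivity), mul_assoc]
  gcongr
  exact lintegral_sq_fejerAvg_le hT hf hf0 hf1 hfin hP hk hYL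

end WeakTypeBounds

section Kernels

/-- The deviation from its mean of the Selberg weight that sieves by the primes in
`(2 ^ a, 2 ^ b]`. -/
noncomputable def selbergOscillation (a b n : ℕ) : ℝ :=
  selbergWeight (primesIoc (2 ^ a) (2 ^ b)) (2 ^ b) n - 1

/-- The upper bound sieve by the primes up to `2 ^ (8 * v)` used at the medium scales, where the
period of the exact sieve is too long. -/
noncomputable def brunMajorant (v n : ℕ) : ℝ :=
  invDensity (primesUpTo (2 ^ (8 * v))) * brunSieve (primesUpTo (2 ^ (8 * v))) (8 * v) n

/-- An upper bound for the difference between `brunMajorant v` and the exact sieve. -/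
noncomputable def brunExcess (v n : ℕ) : ℝ :=
  invDensity (primesUpTo (2 ^ (8 * v))) * brunError (primesUpTo (2 ^ (8 * v))) (8 * v) n

/-- The change of the exact sieve when the primes in `(2 ^ a, 2 ^ (a + 1)]` are added to it. -/
noncomputable def sieveIncrement (a n : ℕ) : ℝ :=
  exactSieve (primesUpTo (2 ^ (a + 1))) n - exactSieve (primesUpTo (2 ^ a)) n

/-- A period of the exact sieve by the primes up to `2 ^ a`. The exponent `4` makes it a length to
which the large sieve estimate for this kernel applies. -/
def sievePeriod (a : ℕ) : ℕ := (∏ p ∈ primesUpTo (2 ^ a), p) ^ 4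

/-- The level `a` for which the exact sieve by the primes up to `2 ^ a` is used at the large
scale `2 ^ j`; it satisfies `2 ^ (a + 4) ≤ j < 2 ^ (a + 5)`. -/
def sieveLevel (j : ℕ) : ℕ := Nat.log 2 j - 4

/-- A multiple of the period of the sieve of level `sieveLevel j` between `2 ^ j` and
`2 ^ (j + 1)`. -/
def periodicLength (j : ℕ) : ℕ :=
  sievePeriod (sieveLevel j) * (2 ^ j / sievePeriod (sieveLevel j) + 1)

lemma ramanujanBounded_selbergOscillation {a : ℕ} (ha : 2 ≤ a) (b : ℕ) :
    RamanujanBounded (primesIoc (2 ^ a) (2 ^ b)) ((2 ^ b) ^ 2) (4 / 2 ^ a)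
      (selbergOscillation a b) := by
  refine ramanujanBounded_selbergWeight_sub_one prime_of_mem_primesIoc
    Nat.one_le_two_pow (by positivity) ?_ fun p hp => ?_
  · rw [div_le_one (by positivity)]
    calc (4 : ℝ) = 2 ^ 2 := by norm_num
      _ ≤ 2 ^ a := pow_le_pow_right₀ one_le_two ha
  · have := primeWeight_le_of_lt (Nat.two_pow_pos a) (mem_primesIoc.1 hp).1.1
    push_cast at this
    rw [div_eq_mul_inv]
    gcongr

lemma RamanujanBounded.mul_selbergOscillation {a Y : ℕ} {K : ℝ} {B : ℕ → ℝ}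
    (hB : RamanujanBounded (primesUpTo (2 ^ a)) Y K B) (ha : 2 ≤ a) (b : ℕ) :
    RamanujanBounded (primesUpTo (2 ^ a) ∪ primesIoc (2 ^ a) (2 ^ b)) (Y * (2 ^ b) ^ 2)
      (K * (4 / 2 ^ a)) fun n => B n * selbergOscillation a b n :=
  hB.mul (ramanujanBounded_selbergOscillation ha b) Finset.disjoint_sdiff

lemma invDensity_le_mul_sq {a v : ℕ} (ha : 1 ≤ a) (hav : a ≤ 8 * v) :
    invDensity (primesUpTo (2 ^ a)) ≤ 1024 * (v : ℝ) ^ 2 := by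
  have hav' : (a : ℝ) ≤ 8 * v := by exact_mod_cast hav
  calc invDensity (primesUpTo (2 ^ a)) ≤ 16 * (a : ℝ) ^ 2 := invDensity_primesUpTo_two_pow_le ha
    _ ≤ 16 * (8 * v) ^ 2 := by gcongr
    _ = 1024 * (v : ℝ) ^ 2 := by ring

lemma ramanujanBounded_brunMajorant (v : ℕ) :
    RamanujanBounded (primesUpTo (2 ^ (8 * v))) ((2 ^ (8 * v)) ^ (2 * (8 * v)))
      (invDensity (primesUpTo (2 ^ (8 * v))) ^ 2) (brunMajorant v) := by
  have hV := one_le_invDensity (S := primesUpTo (2 ^ (8 * v))) prime_of_mem_primesUpTo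
  rw [sq]
  nth_rw 1 [← abs_of_nonneg (zero_le_one.trans hV)]
  exact (ramanujanBounded_brunSieve prime_of_mem_primesUpTo Nat.one_le_two_pow
    (fun _ hp => (mem_primesUpTo.1 hp).1) _).const_mul _

lemma ramanujanBounded_sieveIncrement (a : ℕ) :
    RamanujanBounded (primesUpTo (2 ^ (a + 1))) (∏ p ∈ primesUpTo (2 ^ (a + 1)), p)
      ((2 : ℝ) ^ a)⁻¹ (sieveIncrement a) := by
  refine ramanujanBounded_exactSieve_sub prime_of_mem_primesUpTo
    (primesUpTo_mono (Nat.pow_le_pow_right two_pos a.le_succ)) (by positivity) fun p hp => ?_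
  have := primeWeight_le_of_lt (Nat.two_pow_pos a) (mem_primesIoc.1 hp).1.1
  exact_mod_cast this

lemma sievePeriod_pos (a : ℕ) : 0 < sievePeriod a :=
  pow_pos (Finset.prod_pos fun p hp => (prime_of_mem_primesUpTo p hp).pos) 4

lemma sievePeriod_dvd {a b : ℕ} (h : a ≤ b) : sievePeriod a ∣ sievePeriod b :=
  pow_dvd_pow_of_dvd (Finset.prod_dvd_prod_of_subset _ _ _
    (primesUpTo_mono (Nat.pow_le_pow_right two_pos h))) 4

lemma sievePeriod_le (a : ℕ) : sievePeriod a ≤ 2 ^ 2 ^ (a + 3) := by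
  have h : ∏ p ∈ primesUpTo (2 ^ a), p ≤ 4 ^ 2 ^ a := primorial_le_four_pow (2 ^ a)
  calc sievePeriod a ≤ (4 ^ 2 ^ a) ^ 4 := Nat.pow_le_pow_left h 4
    _ = 2 ^ 2 ^ (a + 3) := by
      rw [show (4 : ℕ) = 2 ^ 2 from rfl, ← pow_mul, ← pow_mul]
      congr 1
      ring

lemma periodic_exactSieve {a b : ℕ} (h : a ≤ b) :
    Function.Periodic (exactSieve (primesUpTo (2 ^ a))) (sievePeriod b) := fun n => by
  have hdvd : ∀ p ∈ primesUpTo (2 ^ a), (p ∣ n + sievePeriod b ↔ p ∣ n) := fun p hp =>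
    (Nat.dvd_add_iff_left ((dvd_pow (Finset.dvd_prod_of_mem _ hp) four_ne_zero).trans
      (sievePeriod_dvd h))).symm
  have hprime : ∀ p ∈ primesUpTo (2 ^ a), p.Prime := prime_of_mem_primesUpTo
  rw [exactSieve_eq_ite hprime, exactSieve_eq_ite hprime]
  exact if_congr (forall₂_congr fun p hp => not_congr (hdvd p hp)) rfl rfl

lemma periodic_sieveIncrement (a : ℕ) :
    Function.Periodic (sieveIncrement a) (sievePeriod (a + 1)) :=
  (periodic_exactSieve le_rfl).sub (periodic_exactSieve a.le_succ)

section LargeScale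

variable {v j : ℕ} (hj : 2 ^ (4 * v + 8) < j)

include hj

lemma sieveLevel_bounds :
    4 * v + 4 ≤ sieveLevel j ∧ 2 ^ (sieveLevel j + 4) ≤ j ∧ j < 2 ^ (sieveLevel j + 5) := by
  have hlog : 4 * v + 8 ≤ Nat.log 2 j := Nat.le_log_of_pow_le one_lt_two hj.le
  have hlevel : sieveLevel j + 4 = Nat.log 2 j := by
    rw [sieveLevel]
    omega
  refine ⟨by omega, ?_, ?_⟩
  · rw [hlevel]
    exact Nat.pow_log_le_self 2 (Nat.ne_zero_of_lt hj)
  · rw [show sieveLevel j + 5 = Nat.log 2 j + 1 by omega]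
    exact Nat.lt_pow_succ_log_self one_lt_two j

lemma sievePeriod_sieveLevel_le : sievePeriod (sieveLevel j) ≤ 2 ^ (j / 2) := by
  refine (sievePeriod_le _).trans (Nat.pow_le_pow_right two_pos ?_)
  have := (sieveLevel_bounds hj).2.1
  rw [pow_succ] at this
  omega

lemma periodicLength_mem_Icc : periodicLength j ∈ Finset.Icc (2 ^ j) (2 ^ (j + 1)) := by
  have hperiod : sievePeriod (sieveLevel j) ≤ 2 ^ j :=
    (sievePeriod_sieveLevel_le hj).trans (Nat.pow_le_pow_right two_pos (by omega))
  refine Finset.mem_Icc.2 ⟨(Nat.lt_mul_div_succ _ (sievePeriod_pos _)).le, ?_⟩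
  rw [periodicLength, Nat.mul_succ, pow_succ]
  have := Nat.mul_div_le (2 ^ j) (sievePeriod (sieveLevel j))
  omega

end LargeScale

end Kernels

section Pointwise

variable {X : Type*} {T : X → X} {f : X → ℝ} {x : X} {v j : ℕ} {t : ℝ}

lemma not_dvd_of_mem_primesUpTo {a p q : ℕ} (ha : a < j) (hq : q ∈ primesUpTo (2 ^ a))
    (hp : p ∈ primesIoc (2 ^ (j - 1)) (2 ^ j)) : ¬q ∣ p := fun hdvd => by
  obtain ⟨hqle, hqprime⟩ := mem_primesUpTo.1 hq
  obtain ⟨⟨hlt, -⟩, hpprime⟩ := mem_primesIoc.1 hp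
  have heq := (Nat.prime_dvd_prime_iff_eq hqprime hpprime).1 hdvd
  have := Nat.pow_le_pow_right two_pos (Nat.le_sub_one_of_lt ha)
  omega

/-- The primes of the block are coprime to all sieving primes, so that the product of the two
sieves exceeds a multiple of `j` on the block. -/
lemma dyadicPrimeAvg_le_fejerAvg_add (hf : ∀ x, 0 ≤ f x) {a L : ℕ} {B : ℕ → ℝ}
    (hB : ∀ n, exactSieve (primesUpTo (2 ^ a)) n ≤ B n) (ha : a < j) (hj : 16 ≤ j)
    (hL : L ∈ Finset.Icc (2 ^ j) (2 ^ (j + 1))) :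
    dyadicPrimeAvg T f j x ≤
      1024 * (fejerAvg T (fun n => B n * selbergOscillation a (j / 16) n) L f x +
        fejerAvg T B L f x) := by
  set S := primesIoc (2 ^ a) (2 ^ (j / 16))
  have hS0 : ∀ p ∈ primesUpTo (2 ^ a), p.Prime := prime_of_mem_primesUpTo
  have hS : ∀ p ∈ S, p.Prime := prime_of_mem_primesIoc
  have hB0 : ∀ n, 0 ≤ B n := fun n => (exactSieve_nonneg hS0 n).trans (hB n)
  have hsplit : (fun n => B n * selbergWeight S (2 ^ (j / 16)) n) =
      fun n => B n * selbergOscillation a (j / 16) n + B n :=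
    funext fun n => by rw [selbergOscillation]; ring
  rw [← fejerAvg_add, ← hsplit]
  obtain ⟨hL1, hL2⟩ := Finset.mem_Icc.1 hL
  refine dyadicPrimeAvg_le_fejerAvg hf (by omega) hL1 hL2
    (fun n => mul_nonneg (hB0 n) (selbergWeight_nonneg hS Nat.one_le_two_pow n)) fun p hp => ?_
  have hexact : exactSieve (primesUpTo (2 ^ a)) p = invDensity (primesUpTo (2 ^ a)) := by
    rw [exactSieve_eq_ite hS0, if_pos fun q hq => not_dvd_of_mem_primesUpTo ha hq hp]
  rw [selbergWeight_of_forall_not_dvd hS Nat.one_le_two_pow fun q hq =>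
    not_dvd_of_mem_primesUpTo (by omega) (Finset.mem_sdiff.1 hq).1 hp]
  have hj32 : (j : ℝ) ≤ 32 * (j / 16 : ℕ) := by exact_mod_cast (by omega : j ≤ 32 * (j / 16))
  calc (j : ℝ) / 128 ≤ (j / 16 : ℕ) / 4 := by linarith
    _ ≤ invDensity (primesUpTo (2 ^ a)) * selbergSum S (2 ^ (j / 16)) :=
      div_four_le_invDensity_mul_selbergSum _ _
    _ ≤ B p * selbergSum S (2 ^ (j / 16)) :=
      mul_le_mul_of_nonneg_right (hexact.symm.le.trans (hB p))
        (zero_le_one.trans (one_le_selbergSum hS Nat.one_le_two_pow))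

lemma fejerAvg_exactSieve_le (hf : ∀ x, 0 ≤ f x) (ht : 0 ≤ t)
    (hx : x ∉ maximalSet T f (t / v ^ 2)) {a L : ℕ} (ha : 1 ≤ a) (hav : a ≤ 8 * v) (hL : 0 < L) :
    fejerAvg T (exactSieve (primesUpTo (2 ^ a))) L f x ≤ 3072 * t := by
  have hS : ∀ p ∈ primesUpTo (2 ^ a), p.Prime := prime_of_mem_primesUpTo
  have : (v : ℝ) ≠ 0 := by
    norm_cast
    omega
  have hV := invDensity_le_mul_sq ha hav
  calc fejerAvg T (exactSieve (primesUpTo (2 ^ a))) L f x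
      ≤ invDensity (primesUpTo (2 ^ a)) * (3 * (t / v ^ 2)) :=
        fejerAvg_le_of_notMem_maximalSet hf (by positivity) hx
          (zero_le_one.trans (one_le_invDensity hS)) (exactSieve_nonneg hS) (exactSieve_le hS) hL
    _ ≤ 1024 * (v : ℝ) ^ 2 * (3 * (t / v ^ 2)) := by gcongr
    _ = 3072 * t := by
        field_simp
        ring

/-- The set on which the averages over the medium scale `2 ^ j` are not controlled: either the
error of Brun's sieve or the fluctuation of Selberg's sieve is large. -/
def mediumExceptionalSet (T : X → X) (f : X → ℝ) (v : ℕ) (t : ℝ) (j : ℕ) : Set X :=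
  {x | t < fejerAvg T (brunExcess v) (2 ^ j) f x} ∪
    {x | t < |fejerAvg T (fun n => brunMajorant v n * selbergOscillation (8 * v) (j / 16) n)
      (2 ^ j) f x|}

/-- The set on which passing from level `a` to level `a + 1` changes some average of the exact
sieve over a multiple of its period by more than `t`. -/
def incrementExceptionalSet (T : X → X) (f : X → ℝ) (a : ℕ) (t : ℝ) : Set X :=
  {x | ∃ J, t < |fejerAvg T (sieveIncrement a) (sievePeriod (a + 1) * J) f x|}

/-- The set on which the fluctuation of Selberg's sieve is large at the large scale `2 ^ j`. -/
def largeExceptionalSet (T : X → X) (f : X → ℝ) (t : ℝ) (j : ℕ) : Set X :=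
  {x | t < |fejerAvg T (fun n => exactSieve (primesUpTo (2 ^ sieveLevel j)) n *
    selbergOscillation (sieveLevel j) (j / 16) n) (periodicLength j) f x|}

/-- The union of the bad events at all scales `2 ^ j`, outside of which `dyadicPrimeAvg T f j` is
`O(t)` for all `j`. Scales are small up to `j = 1024 * v ^ 2`, medium up to `j = 2 ^ (4 * v + 8)`
and large beyond. -/
def exceptionalSet (T : X → X) (f : X → ℝ) (v : ℕ) (t : ℝ) : Set X :=
  maximalSet T f (t / v ^ 2) ∪
    ((⋃ j ∈ Finset.Ioc (1024 * v ^ 2) (2 ^ (4 * v + 8)), mediumExceptionalSet T f v t j) ∪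
    ((⋃ i, incrementExceptionalSet T f (4 * v + 4 + i) (t * ((3 / 4) ^ i / 4))) ∪
      ⋃ i, largeExceptionalSet T f t (2 ^ (4 * v + 8) + 1 + i)))

section

variable (hf : ∀ x, 0 ≤ f x) (ht : 0 ≤ t)

include hf ht

lemma dyadicPrimeAvg_le_of_small (hx : x ∉ maximalSet T f (t / v ^ 2)) (hv : 1 ≤ v)
    (hj : j ≤ 1024 * v ^ 2) : dyadicPrimeAvg T f j x ≤ 2 ^ 22 * t := by
  have hj' : (j : ℝ) ≤ 1024 * (v : ℝ) ^ 2 := by exact_mod_cast hj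
  have : (0 : ℝ) < v := by exact_mod_cast hv
  calc dyadicPrimeAvg T f j x ≤ 2 * j * (t / v ^ 2) :=
        dyadicPrimeAvg_le_of_notMem_maximalSet hf (by positivity) hx j
    _ ≤ 2 * (1024 * (v : ℝ) ^ 2) * (t / v ^ 2) := by gcongr
    _ = 2048 * t := by
        field_simp
        ring
    _ ≤ 2 ^ 22 * t := by linarith

lemma dyadicPrimeAvg_le_of_medium (hx : x ∉ maximalSet T f (t / v ^ 2)) (hv : 1 ≤ v)
    (hj : 1024 * v ^ 2 < j) (hxj : x ∉ mediumExceptionalSet T f v t j) :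
    dyadicPrimeAvg T f j x ≤ 2 ^ 22 * t := by
  simp only [mediumExceptionalSet, Set.mem_union, Set.mem_ofPred_eq, not_or, not_lt] at hxj
  obtain ⟨hexcess, hosc⟩ := hxj
  have hv2 : v ≤ v ^ 2 := Nat.le_self_pow two_ne_zero v
  have hbrun := exactSieve_le_mul_brunSieve_and_le (S := primesUpTo (2 ^ (8 * v)))
    prime_of_mem_primesUpTo (8 * v)
  have hmain : fejerAvg T (brunMajorant v) (2 ^ j) f x ≤ 3072 * t + t :=
    (fejerAvg_mono hf fun n => (hbrun n).2).trans <| by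
      rw [fejerAvg_add]
      exact add_le_add (fejerAvg_exactSieve_le hf ht hx (by omega) le_rfl (by positivity)) hexcess
  have := dyadicPrimeAvg_le_fejerAvg_add (T := T) (x := x) hf (B := brunMajorant v)
    (fun n => (hbrun n).1) (by omega : 8 * v < j) (by omega)
    (Finset.mem_Icc.2 ⟨le_rfl, Nat.pow_le_pow_right two_pos j.le_succ⟩)
  linarith [(le_abs_self _).trans hosc]

omit hf in
lemma sum_fejerAvg_sieveIncrement_le {a d L : ℕ} (hL : sievePeriod (a + d) ∣ L)
    (hx : ∀ i, x ∉ incrementExceptionalSet T f (a + i) (t * ((3 / 4) ^ i / 4))) :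
    ∑ i ∈ Finset.range d, fejerAvg T (sieveIncrement (a + i)) L f x ≤ t := by
  have hgeom : ∑ i ∈ Finset.range d, ((3 : ℝ) / 4) ^ i / 4 ≤ 1 := by
    have : (0 : ℝ) ≤ (3 / 4) ^ d := by positivity
    rw [← Finset.sum_div, geom_sum_eq (by norm_num), div_div,
      div_le_iff_of_neg (by norm_num)]
    linarith
  calc ∑ i ∈ Finset.range d, fejerAvg T (sieveIncrement (a + i)) L f x
      ≤ ∑ i ∈ Finset.range d, t * ((3 / 4) ^ i / 4) := by
        refine Finset.sum_le_sum fun i hi => ?_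
        have hi' : a + i + 1 ≤ a + d := by
          rw [Finset.mem_range] at hi
          omega
        obtain ⟨J, rfl⟩ := (sievePeriod_dvd hi').trans hL
        exact (le_abs_self _).trans (not_lt.1 fun h => hx i ⟨J, h⟩)
    _ ≤ t := by
        rw [← Finset.mul_sum]
        exact mul_le_of_le_one_right ht hgeom

lemma dyadicPrimeAvg_le_of_large (hx : x ∉ maximalSet T f (t / v ^ 2)) (hv : 1 ≤ v)
    (hj : 2 ^ (4 * v + 8) < j) (hxj : x ∉ largeExceptionalSet T f t j)
    (hxi : ∀ i, x ∉ incrementExceptionalSet T f (4 * v + 4 + i) (t * ((3 / 4) ^ i / 4))) :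
    dyadicPrimeAvg T f j x ≤ 2 ^ 22 * t := by
  obtain ⟨hlevel, hlevel_le, -⟩ := sieveLevel_bounds hj
  have hlevel_lt : sieveLevel j + 4 < j := Nat.lt_two_pow_self.trans_le hlevel_le
  have hj16 : 16 ≤ j :=
    (Nat.pow_le_pow_right two_pos (by omega : 4 ≤ 4 * v + 8)).trans hj.le
  have hlen := periodicLength_mem_Icc hj
  have hlen0 := (Nat.two_pow_pos j).trans_le (Finset.mem_Icc.1 hlen).1
  have hdvd : sievePeriod (sieveLevel j) ∣ periodicLength j := dvd_mul_right _ _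
  simp only [largeExceptionalSet, Set.mem_ofPred_eq, not_lt] at hxj
  have hosc := (le_abs_self _).trans hxj
  have hbound := dyadicPrimeAvg_le_fejerAvg_add (T := T) (x := x) hf (fun _ => le_rfl)
    (by omega : sieveLevel j < j) hj16 hlen
  obtain ⟨d, hd⟩ := Nat.exists_eq_add_of_le hlevel
  have htelescope : exactSieve (primesUpTo (2 ^ sieveLevel j)) = fun n =>
      exactSieve (primesUpTo (2 ^ (4 * v + 4))) n +
        ∑ i ∈ Finset.range d, sieveIncrement (4 * v + 4 + i) n := funext fun n => by
    have := Finset.sum_range_sub (fun i => exactSieve (primesUpTo (2 ^ (4 * v + 4 + i))) n) d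
    simp only [sieveIncrement, hd, add_assoc, add_zero] at this ⊢
    rw [this]
    ring
  have hmain : fejerAvg T (exactSieve (primesUpTo (2 ^ sieveLevel j))) (periodicLength j) f x ≤
      3072 * t + t := by
    rw [htelescope, fejerAvg_add, fejerAvg_sum]
    exact add_le_add (fejerAvg_exactSieve_le hf ht hx (by omega) (by omega) hlen0)
      (sum_fejerAvg_sieveIncrement_le ht (hd ▸ hdvd) hxi)
  linarith

theorem dyadicPrimeAvg_le_of_notMem_exceptionalSet (hv : 1 ≤ v) (hx : x ∉ exceptionalSet T f v t)
    (j : ℕ) : dyadicPrimeAvg T f j x ≤ 2 ^ 22 * t := by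
  simp only [exceptionalSet, Set.mem_union, Set.mem_iUnion, not_or, not_exists] at hx
  obtain ⟨hmax, hmedium, hincrement, hlarge⟩ := hx
  rcases Nat.lt_or_ge (1024 * v ^ 2) j with hsmall | hsmall
  · rcases Nat.lt_or_ge (2 ^ (4 * v + 8)) j with hj | hj
    · obtain ⟨i, rfl⟩ := Nat.exists_eq_add_of_le (Nat.succ_le_of_lt hj)
      exact dyadicPrimeAvg_le_of_large hf ht hmax hv hj (hlarge i) hincrement
    · exact dyadicPrimeAvg_le_of_medium hf ht hmax hv hsmall
        (hmedium j (Finset.mem_Ioc.2 ⟨hsmall, hj⟩))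
  · exact dyadicPrimeAvg_le_of_small hf ht hmax hv hsmall

end

end Pointwise

section UnionBounds

variable {X : Type*} [MeasurableSpace X] {μ : Measure X} {m : ℝ≥0∞}

lemma measure_iUnion_le_ofReal_mul {E : ℕ → Set X} {c : ℕ → ℝ} {C : ℝ} (hc : ∀ n, 0 ≤ c n)
    (hE : ∀ n, μ (E n) ≤ ENNReal.ofReal (c n) * m) (hC : ∀ N, ∑ n ∈ Finset.range N, c n ≤ C) :
    μ (⋃ n, E n) ≤ ENNReal.ofReal C * m := by
  refine (measure_iUnion_le E).trans (ENNReal.tsum_le_of_sum_range_le fun N => ?_)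
  calc ∑ n ∈ Finset.range N, μ (E n)
      ≤ ∑ n ∈ Finset.range N, ENNReal.ofReal (c n) * m := Finset.sum_le_sum fun n _ => hE n
    _ = ENNReal.ofReal (∑ n ∈ Finset.range N, c n) * m := by
        rw [← Finset.sum_mul, ENNReal.ofReal_sum_of_nonneg fun n _ => hc n]
    _ ≤ ENNReal.ofReal C * m := by
        gcongr
        exact hC N

lemma measure_union_le_ofReal_mul {E E' : Set X} {c c' : ℝ} (hc : 0 ≤ c) (hc' : 0 ≤ c')
    (hE : μ E ≤ ENNReal.ofReal c * m) (hE' : μ E' ≤ ENNReal.ofReal c' * m) :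
    μ (E ∪ E') ≤ ENNReal.ofReal (c + c') * m := by
  rw [ENNReal.ofReal_add hc hc', add_mul]
  exact (measure_union_le E E').trans (add_le_add hE hE')

lemma measure_biUnion_Ioc_le_ofReal_mul {E : ℕ → Set X} {c : ℝ} {M N : ℕ} (hc : 0 ≤ c)
    (hE : ∀ n ∈ Finset.Ioc M N, μ (E n) ≤ ENNReal.ofReal c * m) :
    μ (⋃ n ∈ Finset.Ioc M N, E n) ≤ ENNReal.ofReal (N * c) * m := by
  calc μ (⋃ n ∈ Finset.Ioc M N, E n)
      ≤ ∑ n ∈ Finset.Ioc M N, μ (E n) := measure_biUnion_finset_le _ _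
    _ ≤ ∑ _n ∈ Finset.Ioc M N, ENNReal.ofReal c * m := Finset.sum_le_sum hE
    _ = ENNReal.ofReal ((N - M : ℕ) * c) * m := by
        rw [Finset.sum_const, Nat.card_Ioc, nsmul_eq_mul, ENNReal.ofReal_mul (by positivity),
          ENNReal.ofReal_natCast, mul_assoc]
    _ ≤ ENNReal.ofReal (N * c) * m := by
        gcongr
        exact Nat.sub_le N M

lemma sum_range_inv_sq_le {J : ℕ} (hJ : 0 < J) (N : ℕ) :
    ∑ i ∈ Finset.range N, (((J + 1 + i : ℕ) : ℝ) ^ 2)⁻¹ ≤ (J : ℝ)⁻¹ := by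
  have hIoc : Finset.Ioc J (J + N) = Finset.Ico (J + 1) (J + 1 + N) := by
    ext n
    simp only [Finset.mem_Ioc, Finset.mem_Ico]
    omega
  have h := sum_Ioc_inv_sq_le_sub (α := ℝ) hJ.ne' (Nat.le_add_right J N)
  rw [hIoc, Finset.sum_Ico_eq_sum_range, Nat.add_sub_cancel_left] at h
  exact h.trans (sub_le_self _ (by positivity))

end UnionBounds

section ExceptionalSets

lemma invDensity_le_mul_two_pow_sq {v : ℕ} (hv : 1 ≤ v) :
    invDensity (primesUpTo (2 ^ (8 * v))) ≤ 1024 * ((2 : ℝ) ^ v) ^ 2 := by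
  refine (invDensity_le_mul_sq (by omega) le_rfl).trans ?_
  gcongr
  exact_mod_cast Nat.lt_two_pow_self.le

lemma brunExcess_nonneg (v n : ℕ) : 0 ≤ brunExcess v n :=
  mul_nonneg (zero_le_one.trans (one_le_invDensity prime_of_mem_primesUpTo))
    (brunError_nonneg _ _ n)

lemma inv_mul_sum_brunExcess_le {v L : ℕ} (hv : 1 ≤ v) (hL : 0 < L) :
    (L : ℝ)⁻¹ * ∑ n ∈ Finset.Ioc 0 (2 * L), brunExcess v n ≤ 2 ^ 91 * (((2 : ℝ) ^ v)⁻¹) ^ 5 := by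
  set V := invDensity (primesUpTo (2 ^ (8 * v)))
  have hV0 : 0 ≤ V := zero_le_one.trans (one_le_invDensity prime_of_mem_primesUpTo)
  have hV : V ≤ 1024 * ((2 : ℝ) ^ v) ^ 2 := invDensity_le_mul_two_pow_sq hv
  have hpow : (((8 : ℝ) ^ (2 * (8 * v) + 1))⁻¹) ≤ (((2 : ℝ) ^ v) ^ 48)⁻¹ := by
    refine inv_anti₀ (by positivity) ?_
    rw [show (8 : ℝ) = 2 ^ 3 by norm_num, ← pow_mul, ← pow_mul]
    exact pow_le_pow_right₀ one_le_two (by omega)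
  have hE : (1 : ℝ) ≤ 2 ^ v := one_le_pow₀ one_le_two
  calc (L : ℝ)⁻¹ * ∑ n ∈ Finset.Ioc 0 (2 * L), brunExcess v n
      ≤ (L : ℝ)⁻¹ * (V * ((2 * L : ℕ) * (((8 : ℝ) ^ (2 * (8 * v) + 1))⁻¹ * V ^ 8))) := by
        simp only [brunExcess, ← Finset.mul_sum]
        gcongr
        exact sum_brunError_le prime_of_mem_primesUpTo _ _
    _ = 2 * (((8 : ℝ) ^ (2 * (8 * v) + 1))⁻¹ * V ^ 9) := by
        push_cast
        field_simp
    _ ≤ 2 * ((((2 : ℝ) ^ v) ^ 48)⁻¹ * (1024 * ((2 : ℝ) ^ v) ^ 2) ^ 9) := by gcongr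
    _ = 2 ^ 91 * (((2 : ℝ) ^ v) ^ 30)⁻¹ := by
        field_simp
        norm_num
    _ ≤ 2 ^ 91 * (((2 : ℝ) ^ v)⁻¹) ^ 5 := by
        rw [inv_pow]
        gcongr
        norm_num

lemma invDensity_sq_mul_inv_le {v : ℕ} (hv : 1 ≤ v) :
    invDensity (primesUpTo (2 ^ (8 * v))) ^ 2 * (4 / 2 ^ (8 * v)) ≤
      2 ^ 22 * (((2 : ℝ) ^ v)⁻¹) ^ 4 := by
  have hV0 : 0 ≤ invDensity (primesUpTo (2 ^ (8 * v))) :=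
    zero_le_one.trans (one_le_invDensity prime_of_mem_primesUpTo)
  calc invDensity (primesUpTo (2 ^ (8 * v))) ^ 2 * (4 / 2 ^ (8 * v))
      ≤ (1024 * ((2 : ℝ) ^ v) ^ 2) ^ 2 * (4 / ((2 : ℝ) ^ v) ^ 8) := by
        rw [mul_comm 8 v, pow_mul (2 : ℝ) v 8, mul_comm v 8]
        gcongr
        exact invDensity_le_mul_two_pow_sq hv
    _ = 2 ^ 22 * (((2 : ℝ) ^ v)⁻¹) ^ 4 := by
        field_simp
        norm_num

lemma inv_sq_mul_inv_sq_le (v i : ℕ) :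
    6 * ((((2 : ℝ) ^ v)⁻¹ * ((3 / 4) ^ i / 4)) ^ 2)⁻¹ * (4 * (((2 : ℝ) ^ (4 * v + 4 + i))⁻¹) ^ 2) ≤
      2 * (1 / 2) ^ i := by
  have hv : (((2 : ℝ) ^ v) ^ 6)⁻¹ ≤ 1 :=
    inv_le_one_of_one_le₀ (one_le_pow₀ (one_le_pow₀ one_le_two))
  have hratio : (((3 / 4 : ℝ) ^ i) ^ 2)⁻¹ * (((2 : ℝ) ^ i) ^ 2)⁻¹ = (4 / 9) ^ i := by
    rw [← mul_inv, ← mul_pow, ← mul_pow, ← pow_mul, mul_comm i, pow_mul, ← inv_pow]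
    norm_num
  calc 6 * ((((2 : ℝ) ^ v)⁻¹ * ((3 / 4) ^ i / 4)) ^ 2)⁻¹ *
        (4 * (((2 : ℝ) ^ (4 * v + 4 + i))⁻¹) ^ 2)
      = 3 / 2 * (((2 : ℝ) ^ v) ^ 6)⁻¹ *
          ((((3 / 4 : ℝ) ^ i) ^ 2)⁻¹ * (((2 : ℝ) ^ i) ^ 2)⁻¹) := by
        rw [pow_add, pow_add, mul_comm 4 v, pow_mul]
        field_simp
        norm_num
    _ ≤ 3 / 2 * 1 * (1 / 2) ^ i := by
        rw [hratio]
        gcongr ?_ * ?_ * ?_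
        exact pow_le_pow_left₀ (by norm_num) (by norm_num) i
    _ ≤ 2 * (1 / 2) ^ i := by
        gcongr
        norm_num

variable {X : Type*} [MeasurableSpace X] {μ : Measure X} {T : X → X} {f : X → ℝ}
  (hT : MeasurePreserving T μ μ) (hf : Measurable f) (hf0 : ∀ x, 0 ≤ f x) (hf1 : ∀ x, f x ≤ 1)
  (hfin : ∫⁻ x, ENNReal.ofReal (f x) ∂μ ≠ ⊤)

include hT hf hf0 hf1 hfin

lemma measure_lt_abs_fejerAvg_mul_selbergOscillation_le {a b Y L : ℕ} {K : ℝ} {B : ℕ → ℝ}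
    (hB : RamanujanBounded (primesUpTo (2 ^ a)) Y K B) (ha : 2 ≤ a) (hL : Y ^ 4 * 2 ^ (8 * b) ≤ L)
    {t : ℝ} (ht : 0 < t) :
    μ {x | t < |fejerAvg T (fun n => B n * selbergOscillation a b n) L f x|} ≤
      ENNReal.ofReal ((t ^ 2)⁻¹ * (4 * (K * (4 / 2 ^ a)) ^ 2)) *
        ∫⁻ x, ENNReal.ofReal (f x) ∂μ := by
  refine measure_lt_abs_fejerAvg_le hT hf hf0 hf1 hfin (fun p hp => ?_)
    (hB.mul_selbergOscillation ha b) ?_ ht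
  · exact (Finset.mem_union.1 hp).elim (prime_of_mem_primesUpTo p) (prime_of_mem_primesIoc p)
  · rwa [mul_pow, ← pow_mul, ← pow_mul, show b * (2 * 4) = 8 * b by ring]

lemma measure_mediumExceptionalSet_le {v j : ℕ} (hv : 1 ≤ v) (hj : 1024 * v ^ 2 < j) :
    μ (mediumExceptionalSet T f v ((2 : ℝ) ^ v)⁻¹ j) ≤
      ENNReal.ofReal (2 ^ 92 * (((2 : ℝ) ^ v)⁻¹) ^ 4) * ∫⁻ x, ENNReal.ofReal (f x) ∂μ := by
  set V := invDensity (primesUpTo (2 ^ (8 * v)))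
  have hexcess := measure_lt_fejerAvg_le hT hf hf0 (brunExcess_nonneg v) (2 ^ j)
    (t := ((2 : ℝ) ^ v)⁻¹) (by positivity)
  have hlen : ((2 ^ (8 * v)) ^ (2 * (8 * v))) ^ 4 * 2 ^ (8 * (j / 16)) ≤ 2 ^ j := by
    rw [← pow_mul, ← pow_mul, ← pow_add]
    refine Nat.pow_le_pow_right two_pos ?_
    have : 8 * v * (2 * (8 * v) * 4) = 512 * v ^ 2 := by ring
    omega
  have hosc := measure_lt_abs_fejerAvg_mul_selbergOscillation_le hT hf hf0 hf1 hfin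
    (ramanujanBounded_brunMajorant v) (by omega) hlen (t := ((2 : ℝ) ^ v)⁻¹) (by positivity)
  have hsum := inv_mul_sum_brunExcess_le hv (Nat.two_pow_pos j)
  refine (measure_union_le_ofReal_mul ?_ (by positivity) hexcess hosc).trans ?_
  · have := Finset.sum_nonneg fun n (_ : n ∈ Finset.Ioc 0 (2 * 2 ^ j)) => brunExcess_nonneg v n
    positivity
  refine mul_le_mul_left (ENNReal.ofReal_le_ofReal ?_) _
  set e := ((2 : ℝ) ^ v)⁻¹
  have he0 : 0 < e := by positivity
  have he1 : e ≤ 1 := inv_le_one_of_one_le₀ (one_le_pow₀ one_le_two)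
  have hV := invDensity_sq_mul_inv_le hv
  calc e⁻¹ * (((2 ^ j : ℕ) : ℝ)⁻¹ * ∑ n ∈ Finset.Ioc 0 (2 * 2 ^ j), brunExcess v n) +
        (e ^ 2)⁻¹ * (4 * (V ^ 2 * (4 / 2 ^ (8 * v))) ^ 2)
      ≤ e⁻¹ * (2 ^ 91 * e ^ 5) + (e ^ 2)⁻¹ * (4 * (2 ^ 22 * e ^ 4) ^ 2) := by gcongr
    _ = 2 ^ 91 * e ^ 4 + 2 ^ 46 * e ^ 4 * e ^ 2 := by
        field_simp
        ring
    _ ≤ 2 ^ 91 * e ^ 4 + 2 ^ 46 * e ^ 4 * 1 := by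
        gcongr
        exact pow_le_one₀ he0.le he1
    _ ≤ 2 ^ 92 * e ^ 4 := by linarith [pow_pos he0 4]

lemma measure_incrementExceptionalSet_le (v i : ℕ) :
    μ (incrementExceptionalSet T f (4 * v + 4 + i) (((2 : ℝ) ^ v)⁻¹ * ((3 / 4) ^ i / 4))) ≤
      ENNReal.ofReal (2 * (1 / 2) ^ i) * ∫⁻ x, ENNReal.ofReal (f x) ∂μ := by
  refine (measure_exists_lt_abs_fejerAvg_mul_le hT (periodic_sieveIncrement _) hf
    (by positivity)).trans ?_
  have hsq := lintegral_sq_fejerAvg_le hT hf hf0 hf1 hfin prime_of_mem_primesUpTo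
    (ramanujanBounded_sieveIncrement (4 * v + 4 + i)) (L := sievePeriod (4 * v + 4 + i + 1)) le_rfl
  refine (mul_le_mul_right hsq _).trans ?_
  rw [← mul_assoc, ← ENNReal.ofReal_mul (by positivity)]
  exact mul_le_mul_left (ENNReal.ofReal_le_ofReal (inv_sq_mul_inv_sq_le v i)) _

lemma measure_largeExceptionalSet_le {v j : ℕ} (hj : 2 ^ (4 * v + 8) < j) {t : ℝ} (ht : 0 < t) :
    μ (largeExceptionalSet T f t j) ≤
      ENNReal.ofReal (2 ^ 16 * (t ^ 2)⁻¹ * ((j : ℝ) ^ 2)⁻¹) * ∫⁻ x, ENNReal.ofReal (f x) ∂μ := by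
  obtain ⟨hlevel, -, hlt⟩ := sieveLevel_bounds hj
  have hlen : (∏ p ∈ primesUpTo (2 ^ sieveLevel j), p) ^ 4 * 2 ^ (8 * (j / 16)) ≤
      periodicLength j := by
    refine (Nat.mul_le_mul_right _ (sievePeriod_sieveLevel_le hj)).trans ?_
    rw [← pow_add]
    exact (Nat.pow_le_pow_right two_pos (by omega)).trans
      (Finset.mem_Icc.1 (periodicLength_mem_Icc hj)).1
  have hj0 : (0 : ℝ) < j := by exact_mod_cast Nat.zero_lt_of_lt hj
  have hK : 1 * ((4 : ℝ) / 2 ^ sieveLevel j) ≤ 128 / j := by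
    have : (j : ℝ) ≤ 2 ^ (sieveLevel j + 5) := by exact_mod_cast hlt.le
    rw [pow_add] at this
    rw [one_mul, div_le_div_iff₀ (by positivity) hj0]
    linarith
  refine (measure_lt_abs_fejerAvg_mul_selbergOscillation_le hT hf hf0 hf1 hfin
    (ramanujanBounded_exactSieve prime_of_mem_primesUpTo) (by omega) hlen ht).trans ?_
  refine mul_le_mul_left (ENNReal.ofReal_le_ofReal ?_) _
  calc (t ^ 2)⁻¹ * (4 * (1 * (4 / 2 ^ sieveLevel j)) ^ 2)
      ≤ (t ^ 2)⁻¹ * (4 * (128 / (j : ℝ)) ^ 2) := by gcongr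
    _ = 2 ^ 16 * (t ^ 2)⁻¹ * ((j : ℝ) ^ 2)⁻¹ := by
        rw [div_pow]
        ring

end ExceptionalSets

section Maximal

variable {X : Type*} [MeasurableSpace X] {μ : Measure X} {T : X → X} {f : X → ℝ}
  (hT : MeasurePreserving T μ μ) (hf : Measurable f) (hf0 : ∀ x, 0 ≤ f x) (hf1 : ∀ x, f x ≤ 1)
  (hfin : ∫⁻ x, ENNReal.ofReal (f x) ∂μ ≠ ⊤)

include hT hf hf0 hf1 hfin

lemma measure_biUnion_mediumExceptionalSet_le {v : ℕ} (hv : 1 ≤ v) :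
    μ (⋃ j ∈ Finset.Ioc (1024 * v ^ 2) (2 ^ (4 * v + 8)),
        mediumExceptionalSet T f v ((2 : ℝ) ^ v)⁻¹ j) ≤
      ENNReal.ofReal (2 ^ 100) * ∫⁻ x, ENNReal.ofReal (f x) ∂μ := by
  have htotal : ((2 ^ (4 * v + 8) : ℕ) : ℝ) * (2 ^ 92 * (((2 : ℝ) ^ v)⁻¹) ^ 4) = 2 ^ 100 := by
    push_cast
    rw [pow_add, mul_comm 4 v, pow_mul]
    field_simp
  rw [← htotal]
  exact measure_biUnion_Ioc_le_ofReal_mul (by positivity) fun j hj =>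
    measure_mediumExceptionalSet_le hT hf hf0 hf1 hfin hv (Finset.mem_Ioc.1 hj).1

lemma measure_iUnion_incrementExceptionalSet_le (v : ℕ) :
    μ (⋃ i, incrementExceptionalSet T f (4 * v + 4 + i)
        (((2 : ℝ) ^ v)⁻¹ * ((3 / 4) ^ i / 4))) ≤
      ENNReal.ofReal 4 * ∫⁻ x, ENNReal.ofReal (f x) ∂μ := by
  refine measure_iUnion_le_ofReal_mul (fun i => by positivity)
    (measure_incrementExceptionalSet_le hT hf hf0 hf1 hfin v) fun N => ?_
  rw [← Finset.mul_sum]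
  linarith [sum_geometric_two_le N]

lemma measure_iUnion_largeExceptionalSet_le (v : ℕ) :
    μ (⋃ i, largeExceptionalSet T f ((2 : ℝ) ^ v)⁻¹ (2 ^ (4 * v + 8) + 1 + i)) ≤
      ENNReal.ofReal (2 ^ 8) * ∫⁻ x, ENNReal.ofReal (f x) ∂μ := by
  refine measure_iUnion_le_ofReal_mul (fun i => by positivity)
    (fun i => measure_largeExceptionalSet_le (v := v) hT hf hf0 hf1 hfin (by omega)
      (by positivity))
    fun N => ?_
  rw [← Finset.mul_sum]
  calc 2 ^ 16 * ((((2 : ℝ) ^ v)⁻¹) ^ 2)⁻¹ *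
        ∑ i ∈ Finset.range N, (((2 ^ (4 * v + 8) + 1 + i : ℕ) : ℝ) ^ 2)⁻¹
      ≤ 2 ^ 16 * ((((2 : ℝ) ^ v)⁻¹) ^ 2)⁻¹ * ((2 ^ (4 * v + 8) : ℕ) : ℝ)⁻¹ := by
        gcongr
        exact sum_range_inv_sq_le (Nat.two_pow_pos _) N
    _ = 2 ^ 8 * (((2 : ℝ) ^ v) ^ 2)⁻¹ := by
        push_cast
        rw [pow_add, mul_comm 4 v, pow_mul]
        field_simp
    _ ≤ 2 ^ 8 := mul_le_of_le_one_right (by positivity)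
        (inv_le_one_of_one_le₀ (one_le_pow₀ (one_le_pow₀ one_le_two)))

lemma measure_exceptionalSet_le {v : ℕ} (hv : 1 ≤ v) :
    μ (exceptionalSet T f v ((2 : ℝ) ^ v)⁻¹) ≤
      ENNReal.ofReal (2 ^ 101 * (2 ^ v * v ^ 2)) * ∫⁻ x, ENNReal.ofReal (f x) ∂μ := by
  have : (0 : ℝ) < v := by exact_mod_cast hv
  have hsmall := measure_maximalSet_le hT hf hf0 (t := ((2 : ℝ) ^ v)⁻¹ / v ^ 2) (by positivity)
  have hbad := measure_union_le_ofReal_mul (by positivity) (by positivity) hsmall <|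
    measure_union_le_ofReal_mul (by positivity) (by positivity)
      (measure_biUnion_mediumExceptionalSet_le hT hf hf0 hf1 hfin hv) <|
    measure_union_le_ofReal_mul (by positivity) (by positivity)
      (measure_iUnion_incrementExceptionalSet_le hT hf hf0 hf1 hfin v)
      (measure_iUnion_largeExceptionalSet_le hT hf hf0 hf1 hfin v)
  refine hbad.trans (mul_le_mul_left (ENNReal.ofReal_le_ofReal ?_) _)
  have hone : (1 : ℝ) ≤ 2 ^ v * v ^ 2 :=
    one_le_mul_of_one_le_of_one_le (one_le_pow₀ one_le_two)
      (one_le_pow₀ (by exact_mod_cast hv))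
  rw [inv_div, div_inv_eq_mul]
  linarith

theorem measure_exists_lt_ergAvg_le_of_one_le {v : ℕ} (hv : 1 ≤ v) :
    μ {x | ∃ N, 2 ≤ N ∧ 2 ^ 26 * ((2 : ℝ) ^ v)⁻¹ < ergAvg T f N x} ≤
      ENNReal.ofReal (2 ^ 101 * (2 ^ v * v ^ 2)) * ∫⁻ x, ENNReal.ofReal (f x) ∂μ := by
  refine (measure_mono ?_).trans (measure_exceptionalSet_le hT hf hf0 hf1 hfin hv)
  rintro x ⟨N, hN, hlt⟩
  by_contra hx
  have hle := ergAvg_le_of_dyadicPrimeAvg_le hf0 (by positivity)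
    (fun j _ => dyadicPrimeAvg_le_of_notMem_exceptionalSet hf0 (by positivity) hv hx j) hN
  linarith

end Maximal

lemma exists_nat_two_pow_mul_sq_le {l : ℝ} (hl0 : 0 < l) (hl1 : l < 1) :
    ∃ v : ℕ, 1 ≤ v ∧ 2 ^ 26 * ((2 : ℝ) ^ v)⁻¹ ≤ l ∧
      (2 : ℝ) ^ v * v ^ 2 ≤ 2 ^ 27 * 54 ^ 2 * (l⁻¹ * Real.log (Real.exp 1 / l) ^ 2) := by
  obtain ⟨n, hn, hn'⟩ := exists_nat_pow_near ((one_le_inv₀ hl0).2 hl1.le) (one_lt_two (α := ℝ))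
  have hlog : Real.log (Real.exp 1 / l) = 1 + Real.log l⁻¹ := by
    rw [div_eq_mul_inv, Real.log_mul (Real.exp_ne_zero 1) (by positivity), Real.log_exp]
  have hnlog : (n : ℝ) * Real.log 2 ≤ Real.log l⁻¹ := by
    rw [← Real.log_pow]
    exact Real.log_le_log (by positivity) hn
  have hv : ((n + 27 : ℕ) : ℝ) ≤ 54 * Real.log (Real.exp 1 / l) := by
    have := mul_le_mul_of_nonneg_left Real.log_two_gt_d9.le n.cast_nonneg
    push_cast
    linarith
  refine ⟨n + 27, by omega, ?_, ?_⟩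
  · calc 2 ^ 26 * ((2 : ℝ) ^ (n + 27))⁻¹ = ((2 : ℝ) ^ (n + 1))⁻¹ := by
          rw [pow_add, pow_add]
          field_simp
      _ ≤ l := inv_le_of_inv_le₀ hl0 hn'.le
  · calc (2 : ℝ) ^ (n + 27) * ((n + 27 : ℕ) : ℝ) ^ 2
        ≤ 2 ^ 27 * l⁻¹ * (54 * Real.log (Real.exp 1 / l)) ^ 2 := by
          rw [pow_add, mul_comm (2 ^ n : ℝ)]
          gcongr
      _ = 2 ^ 27 * 54 ^ 2 * (l⁻¹ * Real.log (Real.exp 1 / l) ^ 2) := by ring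

lemma lintegral_ofReal_indicator_one {X : Type*} [MeasurableSpace X] {μ : Measure X} {A : Set X}
    (hA : MeasurableSet A) : ∫⁻ x, ENNReal.ofReal (A.indicator 1 x) ∂μ = μ A := by
  rw [← lintegral_indicator_one hA]
  congr 1 with x
  by_cases hx : x ∈ A <;> simp [hx]

end PrimeErgodic

open PrimeErgodic in
theorem stmt_2_general :
    ∃ C : ℝ, 0 < C ∧
      ∀ (X : Type u) [MeasurableSpace X] (μ : Measure X) (T : X → X), MeasurePreserving T μ μ →
        ∀ f : X → ℝ, Measurable f → (∀ x, 0 ≤ f x) → (∀ x, f x ≤ 1) →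
          ∀ l : ℝ, 0 < l → l < 1 →
            μ {x | ∃ N : ℕ, 2 ≤ N ∧ l < ergAvg T f N x} ≤
              ENNReal.ofReal (C * l⁻¹ * (Real.log (Real.exp 1 / l)) ^ 2) *
                ∫⁻ x, ENNReal.ofReal (f x) ∂μ := by
  refine ⟨2 ^ 101 * (2 ^ 27 * 54 ^ 2), by positivity, ?_⟩
  intro X _ μ T hT f hf hf0 hf1 l hl0 hl1
  obtain ⟨v, hv, hvl, hcost⟩ := exists_nat_two_pow_mul_sq_le hl0 hl1
  by_cases hfin : ∫⁻ x, ENNReal.ofReal (f x) ∂μ = ⊤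
  · have hlog : 0 < Real.log (Real.exp 1 / l) :=
      Real.log_pos ((one_lt_div hl0).2 (hl1.trans (Real.one_lt_exp_iff.2 one_pos)))
    rw [hfin, ENNReal.mul_top (ENNReal.ofReal_pos.2 (by positivity)).ne']
    exact le_top
  · calc μ {x | ∃ N : ℕ, 2 ≤ N ∧ l < ergAvg T f N x}
        ≤ μ {x | ∃ N, 2 ≤ N ∧ 2 ^ 26 * ((2 : ℝ) ^ v)⁻¹ < ergAvg T f N x} :=
          measure_mono fun x ⟨N, hN, hx⟩ => ⟨N, hN, hvl.trans_lt hx⟩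
      _ ≤ ENNReal.ofReal (2 ^ 101 * (2 ^ v * v ^ 2)) * ∫⁻ x, ENNReal.ofReal (f x) ∂μ :=
          measure_exists_lt_ergAvg_le_of_one_le hT hf hf0 hf1 hfin hv
      _ ≤ _ := by
          refine mul_le_mul_left (ENNReal.ofReal_le_ofReal ?_) _
          linarith [mul_le_mul_of_nonneg_left hcost (by positivity : (0 : ℝ) ≤ 2 ^ 101)]

/-- Restricted weak type inequality: for every probability space, measure-preserving `T`,
measurable set `A` and `0 < λ < 1`,
`μ{x : sup_{N ≥ 2} 𝒜_N(𝟙_A)(x) > λ} ≤ C λ⁻¹ log²(e/λ) μ(A)`. -/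
theorem stmt_2 :
    ∃ C : ℝ, 0 < C ∧
      ∀ (X : Type u) [MeasurableSpace X] (μ : Measure X), IsProbabilityMeasure μ →
        ∀ (T : X → X), Measurable T → MeasurePreserving T μ μ →
          ∀ (A : Set X), MeasurableSet A →
            ∀ l : ℝ, 0 < l → l < 1 →
              μ {x | ∃ N : ℕ, 2 ≤ N ∧ l < ergAvg T (A.indicator 1) N x} ≤
                ENNReal.ofReal (C * l⁻¹ * (Real.log (Real.exp 1 / l)) ^ 2) * μ A := by
  obtain ⟨C, hC, hmaximal⟩ := stmt_2_general
  exact ⟨C, hC, fun X _ μ _ T _ hT A hA l hl0 hl1 =>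
    PrimeErgodic.lintegral_ofReal_indicator_one (μ := μ) hA ▸ hmaximal X μ T hT (A.indicator 1)
      (measurable_one.indicator hA) (Set.indicator_nonneg fun _ _ => zero_le_one)
      (Set.indicator_le_self' fun _ _ => zero_le_one) l hl0 hl1⟩
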